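/- Let p > N and let a satisfy (H∞). Then there exist constants r'_p > 0 and C > 0 such that for every λ ∈ ℂ with Re λ ≥ 0 and |λ| > r'_p, and every function u : ℝ^N → ℂ of class C⁴ such that a^{h/2}|D^h u| is bounded on ℝ^N for h = 0,1,2,3 and a²Δ²u is bounded on ℝ^N, it holds that Σ_{h=0}^{3} |λ|^{1−h/4} ‖a^{h/2} D^h u‖_∞ + sup_{x ∈ ℝ^N} ( |λ|^{N/(4p)} / a(x)^{N/(2p)} ) ‖a² D⁴u‖_{L^p(B_{R(x)}(x))} ≤ C ‖λu + a²Δ²u‖_∞, where R(x) = a(x)^{1/2} / |λ|^{1/4}. -/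

import Mathlib

open MeasureTheory Real ENNReal Metric

/-- The Laplacian of a function on `EuclideanSpace ℝ (Fin N)`, as the sum of the pure second
derivatives along the standard basis directions. -/
noncomputable def laplacianE {N : ℕ} (u : EuclideanSpace ℝ (Fin N) → ℂ)
    (x : EuclideanSpace ℝ (Fin N)) : ℂ :=
  ∑ i : Fin N, iteratedFDeriv ℝ 2 u x ![EuclideanSpace.single i 1, EuclideanSpace.single i 1]

/-!
Put `R x = a x ^ (1/2) / |λ| ^ (1/4)`. Divided by `|λ|` and rescaled around `x₀` to the length scale
`R x₀`, the operator `λ + a² Δ²` becomes `μ + (R x / R x₀) ^ 4 Δ²` with `μ = λ / |λ|`. The gradient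
condition makes `√a`, hence `R`, Lipschitz with a constant that tends to zero as `|λ| → ∞`, so on
balls of a fixed large radius the coefficient is as close to `1` as one likes. Cutting off there and
applying the estimate for `μ + Δ²` leaves an error of at most half the weighted norms of `u`; these
are finite by assumption, so the error can be absorbed.

For `μ + Δ²` with `|μ| = 1`, the factors of `μ + Δ² = (κ - Δ)(-κ - Δ)` are inverted by integrating
along the heat flow in complex time. The `L^p` bound on the fourth derivatives replaces the
Calderón–Zygmund theory: the error of a second-order heat smoothing, cut off near a ball, is bounded
in `L²` by Plancherel, while the smoothing itself varies little. Thus `Δ² w ∈ L^∞` bounds the mean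
oscillation of `D⁴ w` on all balls, and the John–Nirenberg inequality (by a Bellman function) turns
this into an `L^p` bound for every finite `p`.
-/

open scoped SchwartzMap LineDeriv Laplacian Topology NNReal

section Gaussian

variable {V : Type*} [NormedAddCommGroup V] [InnerProductSpace ℝ V]

lemma one_add_pow_mul_exp_neg_mul_sq_le {c : ℝ} (hc : 0 < c) (q : ℕ) {t : ℝ} (ht : 0 ≤ t) :
    (1 + t) ^ q * exp (-c * t ^ 2) ≤ q.factorial * exp (1 + 1 / (4 * c)) := by
  have hpow : (1 + t) ^ q ≤ q.factorial * exp (1 + t) := by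
    have := Real.pow_div_factorial_le_exp (1 + t) (by linarith) q
    rwa [div_le_iff₀' (by positivity)] at this
  have hsq : c * (t - 1 / (2 * c)) ^ 2 = c * t ^ 2 - t + 1 / (4 * c) := by field_simp; ring
  calc (1 + t) ^ q * exp (-c * t ^ 2)
      ≤ q.factorial * exp (1 + t) * exp (-c * t ^ 2) := by gcongr
    _ = q.factorial * exp (1 + t + -c * t ^ 2) := by rw [mul_assoc, ← Real.exp_add]
    _ ≤ q.factorial * exp (1 + 1 / (4 * c)) := by
      refine mul_le_mul_of_nonneg_left (exp_le_exp.2 ?_) (by positivity)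
      linarith [show 0 ≤ c * (t - 1 / (2 * c)) ^ 2 by positivity]

lemma iteratedDeriv_cexp_ofReal_mul (b : ℂ) (n : ℕ) :
    iteratedDeriv n (fun s : ℝ => Complex.exp (b * s)) =
      fun s : ℝ => b ^ n * Complex.exp (b * s) := by
  induction n with
  | zero => simp
  | succ n ih =>
    rw [iteratedDeriv_succ, ih]
    funext s
    have hlin : HasDerivAt (fun s : ℝ => b * (s : ℂ)) (b * 1) s :=
      (Complex.ofRealCLM.hasDerivAt (x := s)).const_mul b
    rw [(hlin.cexp.const_mul (b ^ n)).deriv]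
    ring

lemma exists_norm_iteratedFDeriv_cexp_neg_mul_norm_sq_le (b : ℂ) (n : ℕ) :
    ∃ C, 0 ≤ C ∧ ∃ q : ℕ, ∀ x : V,
      ‖iteratedFDeriv ℝ n (fun x : V => Complex.exp (-b * ((‖x‖ ^ 2 : ℝ) : ℂ))) x‖ ≤
        C * ((1 + ‖x‖) ^ q * exp (-b.re * ‖x‖ ^ 2)) := by
  obtain ⟨q, C, hC, hq⟩ :=
    (Function.hasTemperateGrowth_norm_sq (H := V)).norm_iteratedFDeriv_le_uniform n
  refine ⟨n.factorial * (1 + ‖b‖) ^ n * (1 + C) ^ n, by positivity, q * n, fun x => ?_⟩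
  have hexp : ContDiff ℝ ⊤ (fun s : ℝ => Complex.exp (-b * s)) :=
    (contDiff_const.mul Complex.ofRealCLM.contDiff).cexp
  have houter : ∀ i ≤ n, ‖iteratedFDeriv ℝ i (fun s : ℝ => Complex.exp (-b * s)) (‖x‖ ^ 2)‖ ≤
      (1 + ‖b‖) ^ n * exp (-b.re * ‖x‖ ^ 2) := by
    intro i hi
    rw [norm_iteratedFDeriv_eq_norm_iteratedDeriv, iteratedDeriv_cexp_ofReal_mul, norm_mul,
      norm_pow, norm_neg, Complex.ofReal_pow, norm_cexp_neg_mul_sq]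
    gcongr
    calc ‖b‖ ^ i ≤ (1 + ‖b‖) ^ i := by gcongr; linarith
      _ ≤ (1 + ‖b‖) ^ n := pow_le_pow_right₀ (by linarith [norm_nonneg b]) hi
  have hinner : ∀ i, 1 ≤ i → i ≤ n →
      ‖iteratedFDeriv ℝ i (fun x : V => ‖x‖ ^ 2) x‖ ≤ ((1 + C) * (1 + ‖x‖) ^ q) ^ i := by
    intro i hi hin
    have hone : (1 : ℝ) ≤ (1 + ‖x‖) ^ q := one_le_pow₀ (by linarith [norm_nonneg x])
    calc _ ≤ C * (1 + ‖x‖) ^ q := hq i hin x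
      _ ≤ (1 + C) * (1 + ‖x‖) ^ q := by gcongr; linarith
      _ ≤ _ := le_self_pow₀ (by nlinarith) (by lia)
  refine (norm_iteratedFDeriv_comp_le hexp (contDiff_norm_sq ℝ) le_top x houter hinner).trans_eq ?_
  rw [pow_mul, mul_pow]
  ring

lemma exists_norm_pow_mul_norm_iteratedFDeriv_cexp_le {b : ℂ} (hb : 0 < b.re) (k n : ℕ) :
    ∃ C, ∀ x : V, ‖x‖ ^ k *
      ‖iteratedFDeriv ℝ n (fun x : V => Complex.exp (-b * ((‖x‖ ^ 2 : ℝ) : ℂ))) x‖ ≤ C := by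
  obtain ⟨C, hC, q, h⟩ := exists_norm_iteratedFDeriv_cexp_neg_mul_norm_sq_le (V := V) b n
  refine ⟨C * ((k + q).factorial * exp (1 + 1 / (4 * b.re))), fun x => ?_⟩
  calc _ ≤ (1 + ‖x‖) ^ k * (C * ((1 + ‖x‖) ^ q * exp (-b.re * ‖x‖ ^ 2))) := by
        gcongr
        · linarith
        · exact h x
    _ = C * ((1 + ‖x‖) ^ (k + q) * exp (-b.re * ‖x‖ ^ 2)) := by rw [pow_add]; ring
    _ ≤ _ := mul_le_mul_of_nonneg_left
        (one_add_pow_mul_exp_neg_mul_sq_le hb _ (norm_nonneg x)) hC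

/-- The Gaussian `x ↦ exp (-b ‖x‖²)` with complex parameter `b`, as a Schwartz function. -/
noncomputable def gaussianSchwartz (V : Type*) [NormedAddCommGroup V] [InnerProductSpace ℝ V]
    (b : ℂ) (hb : 0 < b.re) : 𝓢(V, ℂ) where
  toFun x := Complex.exp (-b * ((‖x‖ ^ 2 : ℝ) : ℂ))
  smooth' := (contDiff_const.mul (Complex.ofRealCLM.contDiff.comp (contDiff_norm_sq ℝ))).cexp
  decay' := exists_norm_pow_mul_norm_iteratedFDeriv_cexp_le hb

lemma gaussianSchwartz_apply {b : ℂ} (hb : 0 < b.re) (x : V) :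
    gaussianSchwartz V b hb x = Complex.exp (-b * ((‖x‖ ^ 2 : ℝ) : ℂ)) := rfl

lemma lineDerivOp_gaussianSchwartz_apply {b : ℂ} (hb : 0 < b.re) (m x : V) :
    (∂_{m} (gaussianSchwartz V b hb)) x =
      -2 * b * (inner ℝ x m : ℝ) * gaussianSchwartz V b hb x := by
  have hexponent : HasFDerivAt (fun x : V => -b * ((‖x‖ ^ 2 : ℝ) : ℂ))
      (-b • (Complex.ofRealCLM.comp (2 • (innerSL ℝ x)))) x :=
    (Complex.ofRealCLM.hasFDerivAt.comp x (hasStrictFDerivAt_norm_sq x).hasFDerivAt).const_mul (-b)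
  have hderiv : fderiv ℝ (gaussianSchwartz V b hb) x = _ := hexponent.cexp.fderiv
  rw [SchwartzMap.lineDerivOp_apply_eq_fderiv, hderiv]
  simp [gaussianSchwartz_apply]
  ring

lemma integral_gaussianSchwartz_ne_zero [FiniteDimensional ℝ V] [MeasurableSpace V] [BorelSpace V]
    {b : ℂ} (hb : 0 < b.re) : ∫ x, gaussianSchwartz V b hb x ≠ 0 := by
  have hb0 : b ≠ 0 := by rintro rfl; simp at hb
  have hint : ∫ x, gaussianSchwartz V b hb x = (π / b) ^ (Module.finrank ℝ V / 2 : ℂ) := by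
    rw [← GaussianFourier.integral_cexp_neg_mul_sq_norm hb]
    simp only [gaussianSchwartz_apply, Complex.ofReal_pow]
  rw [hint, Ne, Complex.cpow_eq_zero_iff]
  exact fun h => div_ne_zero (by exact_mod_cast Real.pi_ne_zero) hb0 h.1

end Gaussian

section Kernel

variable {V : Type*} [NormedAddCommGroup V] [InnerProductSpace ℝ V] [FiniteDimensional ℝ V]
  [MeasurableSpace V] [BorelSpace V]

/-- `k` is a heat kernel of parameter `b`: a Schwartz function of integral one with the logarithmic
gradient of `exp (-b ‖x‖²)`. -/
structure IsHeatKernel (b : ℂ) (k : 𝓢(V, ℂ)) : Prop where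
  integral_eq_one : ∫ y, k y = 1
  lineDerivOp_apply : ∀ m x, (∂_{m} k) x = -2 * b * (inner ℝ x m : ℝ) * k x

variable (V) in
lemma exists_isHeatKernel {b : ℂ} (hb : 0 < b.re) : ∃ k : 𝓢(V, ℂ), IsHeatKernel b k := by
  refine ⟨(∫ x, gaussianSchwartz V b hb x)⁻¹ • gaussianSchwartz V b hb, ?_, fun m x => ?_⟩
  · simp only [smul_apply, smul_eq_mul]
    rw [integral_const_mul, inv_mul_cancel₀ (integral_gaussianSchwartz_ne_zero hb)]
  · rw [LineDeriv.lineDerivOp_smul]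
    simp only [smul_apply, smul_eq_mul, lineDerivOp_gaussianSchwartz_apply]
    ring

end Kernel

section ScaledAverage

variable {V E F 𝕜 : Type*} [NormedAddCommGroup V] [NormedSpace ℝ V] [MeasurableSpace V]
  [RCLike 𝕜] [NormedAddCommGroup E] [NormedSpace 𝕜 E]
  {μ : Measure V} {ψ : V → 𝕜} {g : V → E} {M : ℝ}

lemma integrable_smul_comp_affine [BorelSpace V] [SecondCountableTopology V]
    (hψ : Integrable ψ μ) (hg : Continuous g) (hM : ∀ x, ‖g x‖ ≤ M) (r : ℝ) (x : V) :
    Integrable (fun y => ψ y • g (x + r • y)) μ := by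
  have hmeas : AEStronglyMeasurable (fun y => g (x + r • y)) μ :=
    (hg.comp (by fun_prop)).aestronglyMeasurable
  exact hψ.smul_bdd M hmeas (.of_forall fun y => hM _)

variable [NormedSpace ℝ E] [NormedAddCommGroup F] [NormedSpace ℝ F] [NormedSpace 𝕜 F]

/-- The average of `g` around `x` at scale `r` with weight `ψ`. The scale is allowed to vanish,
where `g` is evaluated at `x` only, and to be negative: `r = -1` gives the convolution `ψ ⋆ g`. -/
noncomputable def scaledAverage (μ : Measure V) (ψ : V → 𝕜) (g : V → E) (r : ℝ) (x : V) : E :=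
  ∫ y, ψ y • g (x + r • y) ∂μ

lemma scaledAverage_zero_scale [CompleteSpace E] (hψ : ∫ y, ψ y ∂μ = 1) (g : V → E) (x : V) :
    scaledAverage μ ψ g 0 x = g x := by
  simp only [scaledAverage, zero_smul, add_zero, integral_smul_const, hψ, one_smul]

lemma norm_scaledAverage_le (hψ : Integrable ψ μ) (hM : ∀ x, ‖g x‖ ≤ M) (r : ℝ) (x : V) :
    ‖scaledAverage μ ψ g r x‖ ≤ (∫ y, ‖ψ y‖ ∂μ) * M := by
  rw [scaledAverage, ← integral_mul_const]
  refine norm_integral_le_of_norm_le (hψ.norm.mul_const M) (.of_forall fun y => ?_)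
  rw [norm_smul]
  exact mul_le_mul_of_nonneg_left (hM _) (norm_nonneg _)

variable [BorelSpace V] [SecondCountableTopology V]

lemma scaledAverage_clm_comp [CompleteSpace E] [CompleteSpace F] (T : E →L[ℝ] F)
    (hT : ∀ (c : 𝕜) (z : E), T (c • z) = c • T z) (hψ : Integrable ψ μ) (hg : Continuous g)
    (hM : ∀ x, ‖g x‖ ≤ M) (r : ℝ) (x : V) :
    scaledAverage μ ψ (fun y => T (g y)) r x = T (scaledAverage μ ψ g r x) := by
  simp only [scaledAverage, ← T.integral_comp_comm (integrable_smul_comp_affine hψ hg hM r x), hT]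

lemma hasFDerivAt_scaledAverage [SMulCommClass ℝ 𝕜 E] {M' : ℝ} (hψ : Integrable ψ μ)
    (hg : ContDiff ℝ 1 g) (hM : ∀ x, ‖g x‖ ≤ M) (hM' : ∀ x, ‖fderiv ℝ g x‖ ≤ M') (r : ℝ) (x : V) :
    HasFDerivAt (scaledAverage μ ψ g r) (scaledAverage μ ψ (fderiv ℝ g) r x) x := by
  refine hasFDerivAt_integral_of_dominated_of_fderiv_le (𝕜 := ℝ)
    (F := fun x y => ψ y • g (x + r • y))
    (F' := fun x y => ψ y • fderiv ℝ g (x + r • y)) (bound := fun y => ‖ψ y‖ * M')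
    Filter.univ_mem (.of_forall fun x => ?_)
    (integrable_smul_comp_affine hψ hg.continuous hM r x) ?_
    (.of_forall fun y x _ => ?_) (hψ.norm.mul_const M') (.of_forall fun y x _ => ?_)
  · exact (integrable_smul_comp_affine hψ hg.continuous hM r x).aestronglyMeasurable
  · exact (integrable_smul_comp_affine hψ (hg.continuous_fderiv one_ne_zero) hM' r x)
      |>.aestronglyMeasurable
  · rw [norm_smul]
    exact mul_le_mul_of_nonneg_left (hM' _) (norm_nonneg _)
  · exact ((hasFDerivAt_comp_add_right (r • y)).2
      (hg.differentiable one_ne_zero _).hasFDerivAt).const_smul (ψ y)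

lemma iteratedFDeriv_scaledAverage [SMulCommClass ℝ 𝕜 E] [CompleteSpace E]
    (hψ : Integrable ψ μ) {n : ℕ} (hg : ContDiff ℝ n g)
    (hM : ∀ j ≤ n, ∃ M, ∀ x, ‖iteratedFDeriv ℝ j g x‖ ≤ M) (r : ℝ) :
    iteratedFDeriv ℝ n (scaledAverage μ ψ g r) = scaledAverage μ ψ (iteratedFDeriv ℝ n g) r := by
  induction n with
  | zero =>
    obtain ⟨M, hM⟩ := hM 0 le_rfl
    funext x
    simp only [iteratedFDeriv_zero_eq_comp]
    exact (scaledAverage_clm_comp (μ := μ)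
      (continuousMultilinearCurryFin0 ℝ V E).symm.toContinuousLinearEquiv.toContinuousLinearMap
      (fun c z => rfl) hψ hg.continuous (fun x => by simpa using hM x) r x).symm
  | succ n ih =>
    obtain ⟨M, hMn⟩ := hM n (by lia)
    obtain ⟨M', hM'⟩ := hM (n + 1) le_rfl
    have hDg : ContDiff ℝ 1 (iteratedFDeriv ℝ n g) :=
      hg.iteratedFDeriv_right (by rw [add_comm]; norm_cast)
    have hM'' : ∀ x, ‖fderiv ℝ (iteratedFDeriv ℝ n g) x‖ ≤ M' := fun x => by
      rw [norm_fderiv_iteratedFDeriv]; exact hM' x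
    funext x
    rw [iteratedFDeriv_succ_eq_comp_left, iteratedFDeriv_succ_eq_comp_left,
      ih (hg.of_le (by norm_cast; lia)) (fun j hj => hM j (by lia)), Function.comp_apply,
      (hasFDerivAt_scaledAverage hψ hDg hMn hM'' r x).fderiv]
    exact (scaledAverage_clm_comp (μ := μ)
      (continuousMultilinearCurryLeftEquiv ℝ
        (fun _ : Fin (n + 1) => V) E).symm.toContinuousLinearEquiv.toContinuousLinearMap
      (fun c z => rfl) hψ (hDg.continuous_fderiv one_ne_zero) hM'' r x).symm

end ScaledAverage

section SchwartzDerivatives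

variable {V E : Type*} [NormedAddCommGroup V] [NormedAddCommGroup E] [NormedSpace ℝ E]

lemma lineDerivOp_comm_schwartz [NormedSpace ℝ V] (v w : V) (f : 𝓢(V, E)) :
    ∂_{v} (∂_{w} f) = ∂_{w} (∂_{v} f) := by
  ext x
  have hsymm : IsSymmSndFDerivAt ℝ f x := (f.smooth 2).contDiffAt.isSymmSndFDerivAt (by simp)
  have hiter : ∀ v w : V, (∂_{v} (∂_{w} f)) x = fderiv ℝ (fderiv ℝ f) x v w := fun v w =>
    (SchwartzMap.iteratedLineDerivOp_eq_iteratedFDeriv (m := ![v, w])).trans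
      (iteratedFDeriv_two_apply f x _)
  rw [hiter, hiter, hsymm.eq]

lemma lineDerivOp_iteratedLineDerivOp_comm [NormedSpace ℝ V] {n : ℕ} (m : Fin n → V) (v : V)
    (f : 𝓢(V, E)) : ∂_{v} (∂^{m} f) = ∂^{m} (∂_{v} f) := by
  induction n with
  | zero => rfl
  | succ n ih =>
    rw [LineDeriv.iteratedLineDerivOp_succ_left, LineDeriv.iteratedLineDerivOp_succ_left,
      lineDerivOp_comm_schwartz, ih]

lemma norm_iteratedLineDerivOp_apply_le [NormedSpace ℝ V] {n : ℕ} {m : Fin n → V}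
    (hm : ∀ i, ‖m i‖ ≤ 1) (f : 𝓢(V, E)) (x : V) : ‖(∂^{m} f) x‖ ≤ ‖iteratedFDeriv ℝ n f x‖ := by
  rw [SchwartzMap.iteratedLineDerivOp_eq_iteratedFDeriv]
  exact (ContinuousMultilinearMap.le_opNorm _ _).trans
    (mul_le_of_le_one_right (norm_nonneg _)
      (Finset.prod_le_one (fun i _ => norm_nonneg _) fun i _ => hm i))

lemma hasFDerivAt_schwartz_comp_affine [NormedSpace ℝ V] (g : 𝓢(V, E)) (r : ℝ) (x y : V) :
    HasFDerivAt (fun y => g (x + r • y)) (r • fderiv ℝ g (x + r • y)) y := by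
  have haffine : HasFDerivAt (fun y : V => x + r • y) (r • ContinuousLinearMap.id ℝ V) y :=
    ((hasFDerivAt_id y).const_smul r).const_add x
  convert! (g.differentiableAt (x := x + r • y)).hasFDerivAt.comp y haffine using 1
  ext v
  simp

variable [InnerProductSpace ℝ V] [FiniteDimensional ℝ V]

lemma laplacian_iteratedLineDerivOp_comm {n : ℕ} (m : Fin n → V) (f : 𝓢(V, E)) :
    Δ (∂^{m} f) = ∂^{m} (Δ f) := by
  induction n with
  | zero => rfl
  | succ n ih =>
    have hline : ∀ (v : V) (f : 𝓢(V, E)), Δ (∂_{v} f) = ∂_{v} (Δ f) := fun v f => by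
      have hsum := map_sum (LineDeriv.lineDerivOpCLM ℝ 𝓢(V, E) v)
        (fun i => ∂_{stdOrthonormalBasis ℝ V i} (∂_{stdOrthonormalBasis ℝ V i} f)) Finset.univ
      simp only [LineDeriv.lineDerivOpCLM_apply] at hsum
      rw [SchwartzMap.laplacian_eq_sum (stdOrthonormalBasis ℝ V),
        SchwartzMap.laplacian_eq_sum (stdOrthonormalBasis ℝ V), hsum]
      exact Finset.sum_congr rfl fun i _ => by
        rw [lineDerivOp_comm_schwartz _ v, lineDerivOp_comm_schwartz _ v]
    rw [LineDeriv.iteratedLineDerivOp_succ_left, LineDeriv.iteratedLineDerivOp_succ_left, hline, ih]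

end SchwartzDerivatives

section SchwartzAverage

variable {V E : Type*} [NormedAddCommGroup V] [InnerProductSpace ℝ V] [FiniteDimensional ℝ V]
  [MeasurableSpace V] [BorelSpace V] [NormedAddCommGroup E] [NormedSpace ℂ E]

/-- The scaled average of a Schwartz function against a Schwartz weight, for Lebesgue measure. -/
noncomputable abbrev schwartzAverage (ψ : 𝓢(V, ℂ)) (g : 𝓢(V, E)) (r : ℝ) (x : V) : E :=
  scaledAverage volume ψ g r x

variable (ψ : 𝓢(V, ℂ)) (g : 𝓢(V, E)) (r : ℝ) (x : V)

lemma integrable_schwartz_smul_comp_affine : Integrable (fun y => ψ y • g (x + r • y)) :=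
  integrable_smul_comp_affine ψ.integrable g.continuous (SchwartzMap.norm_le_seminorm ℝ g) r x

lemma smul_schwartzAverage_lineDerivOp (m : V) :
    r • schwartzAverage ψ (∂_{m} g) r x = -schwartzAverage (∂_{m} ψ) g r x := by
  have hderiv : ∀ y, fderiv ℝ (fun y => g (x + r • y)) y m = r • (∂_{m} g) (x + r • y) := by
    intro y
    rw [(hasFDerivAt_schwartz_comp_affine g r x y).fderiv, SchwartzMap.lineDerivOp_apply_eq_fderiv]
    rfl
  have hparts := integral_bilinear_fderiv_right_eq_neg_left_of_integrable
    (μ := (volume : Measure V)) (B := ContinuousLinearMap.lsmul ℝ ℂ)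
    (f := ψ) (g := fun y => g (x + r • y)) (v := m) ?_ ?_
    (integrable_schwartz_smul_comp_affine ψ g r x) (fun y _ => ψ.differentiableAt)
    (fun y _ => (hasFDerivAt_schwartz_comp_affine g r x y).differentiableAt)
  · simp only [ContinuousLinearMap.lsmul_apply, hderiv,
      ← SchwartzMap.lineDerivOp_apply_eq_fderiv] at hparts
    rw [schwartzAverage, schwartzAverage, scaledAverage, scaledAverage, ← hparts, ← integral_smul]
    exact integral_congr_ae (.of_forall fun y => smul_comm _ _ _)
  · simpa only [SchwartzMap.lineDerivOp_apply_eq_fderiv, ContinuousLinearMap.lsmul_apply] using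
      integrable_schwartz_smul_comp_affine (∂_{m} ψ) g r x
  · simp only [hderiv, ContinuousLinearMap.lsmul_apply]
    exact ((integrable_schwartz_smul_comp_affine ψ (∂_{m} g) r x).smul r).congr
      (.of_forall fun y => smul_comm _ _ _)

lemma pow_smul_schwartzAverage_iteratedLineDerivOp {n : ℕ} (m : Fin n → V) :
    r ^ n • schwartzAverage ψ (∂^{m} g) r x =
      (-1 : ℝ) ^ n • schwartzAverage (∂^{m} ψ) g r x := by
  induction n generalizing ψ with
  | zero => simp only [pow_zero, one_smul, LineDeriv.iteratedLineDerivOp_fin_zero]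
  | succ n ih =>
    rw [LineDeriv.iteratedLineDerivOp_succ_left, LineDeriv.iteratedLineDerivOp_succ_left,
      pow_succ, mul_smul, smul_schwartzAverage_lineDerivOp, smul_neg, ih,
      lineDerivOp_iteratedLineDerivOp_comm, pow_succ, mul_neg_one, neg_smul]

lemma pow_mul_norm_schwartzAverage_iteratedLineDerivOp_le {n : ℕ} {m : Fin n → V}
    (hm : ∀ i, ‖m i‖ ≤ 1) {M : ℝ} (hM : ∀ x, ‖g x‖ ≤ M) (hr : 0 ≤ r) :
    r ^ n * ‖schwartzAverage ψ (∂^{m} g) r x‖ ≤ (∫ y, ‖iteratedFDeriv ℝ n ψ y‖) * M := by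
  have hM0 : 0 ≤ M := (norm_nonneg _).trans (hM 0)
  have hint : Integrable (fun y => ‖iteratedFDeriv ℝ n ψ y‖) := by
    simpa only [pow_zero, one_mul] using ψ.integrable_pow_mul_iteratedFDeriv volume 0 n
  calc r ^ n * ‖schwartzAverage ψ (∂^{m} g) r x‖
      = ‖schwartzAverage (∂^{m} ψ) g r x‖ := by
        have := congrArg norm (pow_smul_schwartzAverage_iteratedLineDerivOp ψ g r x m)
        rwa [norm_smul, norm_smul, norm_pow, norm_pow, norm_neg, norm_one, one_pow, one_mul,
          Real.norm_of_nonneg hr] at this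
    _ ≤ (∫ y, ‖(∂^{m} ψ) y‖) * M := norm_scaledAverage_le (SchwartzMap.integrable _) hM r x
    _ ≤ (∫ y, ‖iteratedFDeriv ℝ n ψ y‖) * M :=
        mul_le_mul_of_nonneg_right (integral_mono (SchwartzMap.integrable _).norm hint
          fun y => norm_iteratedLineDerivOp_apply_le hm ψ y) hM0

variable {k : 𝓢(V, ℂ)} {b : ℂ}

lemma hasDerivAt_schwartzAverage_scale :
    HasDerivAt (fun r => schwartzAverage ψ g r x)
      (∫ y, ψ y • fderiv ℝ g (x + r • y) y) r := by
  have hM := SchwartzMap.norm_iteratedFDeriv_le_seminorm ℝ g 1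
  simp only [norm_iteratedFDeriv_one] at hM
  have hbound : Integrable (fun y => ‖y‖ * ‖ψ y‖ * SchwartzMap.seminorm ℝ 0 1 g) := by
    simpa only [pow_one] using (ψ.integrable_pow_mul volume 1).mul_const _
  refine (hasDerivAt_integral_of_dominated_loc_of_deriv_le (𝕜 := ℝ) (s := Set.univ)
    (F := fun r y => ψ y • g (x + r • y)) (F' := fun r y => ψ y • fderiv ℝ g (x + r • y) y)
    Filter.univ_mem
    (.of_forall fun r => (integrable_schwartz_smul_comp_affine ψ g r x).aestronglyMeasurable)
    (integrable_schwartz_smul_comp_affine ψ g r x) ?_ (.of_forall fun y r _ => ?_) hbound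
    (.of_forall fun y r _ => ?_)).2
  · have hfderiv : Continuous (fderiv ℝ g) := (g.smooth 1).continuous_fderiv one_ne_zero
    exact (ψ.continuous.smul
      ((hfderiv.comp (by fun_prop)).clm_apply continuous_id)).aestronglyMeasurable
  · rw [norm_smul, mul_comm ‖y‖, mul_assoc, mul_comm ‖y‖]
    gcongr
    exact (ContinuousLinearMap.le_opNorm _ _).trans (by gcongr; exact hM _)
  · have hline : HasDerivAt (fun r : ℝ => x + r • y) y r := by
      simpa only [one_smul] using ((hasDerivAt_id' r).smul_const y).const_add x
    exact ((g.differentiableAt (x := x + r • y)).hasFDerivAt.comp_hasDerivAt r hline).const_smul _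

lemma IsHeatKernel.integral_smul_fderiv (hk : IsHeatKernel b k) (hb : b ≠ 0) :
    ∫ y, k y • fderiv ℝ g (x + r • y) y =
      (r / (2 * b) : ℂ) • schwartzAverage k (Δ g) r x := by
  set e := stdOrthonormalBasis ℝ V
  have hexpand : ∀ y, k y • fderiv ℝ g (x + r • y) y =
      ∑ i, (-1 / (2 * b)) • ((∂_{e i} k) y • (∂_{e i} g) (x + r • y)) := fun y => by
    have hy : y = ∑ i, (inner ℝ y (e i) : ℝ) • e i := by
      simpa only [real_inner_comm] using (e.sum_repr' y).symm
    calc k y • fderiv ℝ g (x + r • y) y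
        = k y • fderiv ℝ g (x + r • y) (∑ i, (inner ℝ y (e i) : ℝ) • e i) := by rw [← hy]
      _ = _ := by
        rw [map_sum, Finset.smul_sum]
        refine Finset.sum_congr rfl fun i _ => ?_
        rw [hk.lineDerivOp_apply, SchwartzMap.lineDerivOp_apply_eq_fderiv, map_smul,
          ← Complex.coe_smul, smul_smul, smul_smul]
        congr 1
        field_simp
  have hsum : ∀ y, (Δ g) y = ∑ i, (∂_{e i} (∂_{e i} g)) y := fun y => by
    rw [SchwartzMap.laplacian_eq_sum e, sum_apply]
  simp only [hexpand, schwartzAverage, scaledAverage, hsum, Finset.smul_sum]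
  rw [integral_finsetSum _ fun i _ => by
      exact (integrable_schwartz_smul_comp_affine (∂_{e i} k) (∂_{e i} g) r x).smul (-1 / (2 * b)),
    integral_finsetSum _ fun i _ => integrable_schwartz_smul_comp_affine _ _ r x, Finset.smul_sum]
  refine Finset.sum_congr rfl fun i _ => ?_
  have hparts := smul_schwartzAverage_lineDerivOp k (∂_{e i} g) r x (e i)
  rw [schwartzAverage, schwartzAverage, scaledAverage, scaledAverage, ← neg_eq_iff_eq_neg,
    ← Complex.coe_smul] at hparts
  rw [integral_smul, ← hparts, smul_neg, smul_smul, ← neg_smul]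
  congr 1
  ring

lemma IsHeatKernel.hasDerivAt_schwartzAverage (hk : IsHeatKernel b k) (hb : b ≠ 0) :
    HasDerivAt (fun r => schwartzAverage k g r x)
      ((r / (2 * b) : ℂ) • schwartzAverage k (Δ g) r x) r :=
  hk.integral_smul_fderiv g r x hb ▸ hasDerivAt_schwartzAverage_scale k g r x

end SchwartzAverage

section DifferentialInequalities

variable {E : Type*} [NormedAddCommGroup E] [NormedSpace ℝ E] {f f' : ℝ → E} {B B' : ℝ → ℝ}
  {a b : ℝ}

lemma norm_sub_le_sub_of_norm_deriv_le (hab : a ≤ b) (hf : ∀ s, HasDerivAt f (f' s) s)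
    (hB : ∀ s ≥ a, HasDerivAt B (B' s) s) (hle : ∀ s, a ≤ s → s ≤ b → ‖f' s‖ ≤ B' s) :
    ‖f b - f a‖ ≤ B b - B a :=
  image_norm_le_of_norm_deriv_right_le_deriv_boundary' (f := fun s => f s - f a)
    (B := fun s => B s - B a)
    (fun s _ => ((hf s).continuousAt.sub continuousAt_const).continuousWithinAt)
    (fun s _ => ((hf s).sub_const _).hasDerivWithinAt) (by simp only [sub_self, norm_zero, le_refl])
    (fun s hs => ((hB s hs.1).continuousAt.sub continuousAt_const).continuousWithinAt)
    (fun s hs => ((hB s hs.1).sub_const _).hasDerivWithinAt)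
    (fun s hs => hle s hs.1 hs.2.le) ⟨hab, le_rfl⟩

lemma norm_le_neg_of_norm_deriv_le_of_tendsto_zero (hf : ∀ s, HasDerivAt f (f' s) s)
    (hB : ∀ s ≥ a, HasDerivAt B (B' s) s) (hle : ∀ s ≥ a, ‖f' s‖ ≤ B' s)
    (hf0 : Filter.Tendsto f Filter.atTop (𝓝 0)) (hB0 : Filter.Tendsto B Filter.atTop (𝓝 0)) :
    ‖f a‖ ≤ -B a := by
  have hlim := le_of_tendsto_of_tendsto (hf0.sub_const (f a)).norm (hB0.sub_const (B a))
    ((Filter.eventually_ge_atTop a).mono fun b hab =>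
      norm_sub_le_sub_of_norm_deriv_le hab hf hB fun s hs _ => hle s hs)
  simpa only [zero_sub, norm_neg] using hlim

lemma tendsto_exp_neg_mul_sq_atTop {δ : ℝ} (hδ : 0 < δ) :
    Filter.Tendsto (fun s : ℝ => exp (-δ * s ^ 2)) Filter.atTop (𝓝 0) :=
  Real.tendsto_exp_atBot.comp
    ((Filter.tendsto_pow_atTop two_ne_zero).const_mul_atTop_of_neg (neg_lt_zero.2 hδ))

lemma norm_zero_le_of_norm_deriv_le_gaussian {δ L : ℝ} (hδ : 0 < δ)
    (hf : ∀ s, HasDerivAt f (f' s) s) (hle : ∀ s ≥ 0, ‖f' s‖ ≤ 2 * s * L * exp (-δ * s ^ 2))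
    (hf0 : Filter.Tendsto f Filter.atTop (𝓝 0)) : ‖f 0‖ ≤ L / δ := by
  have hB : ∀ s ≥ (0 : ℝ),
      HasDerivAt (fun s => -(L / δ) * exp (-δ * s ^ 2)) (2 * s * L * exp (-δ * s ^ 2)) s :=
    fun s _ => by
      convert! (((hasDerivAt_pow 2 s).const_mul (-δ)).exp.const_mul (-(L / δ))) using 1
      push_cast
      field_simp
  have hB0 : Filter.Tendsto (fun s : ℝ => -(L / δ) * exp (-δ * s ^ 2)) Filter.atTop (𝓝 0) := by
    simpa only [mul_zero] using (tendsto_exp_neg_mul_sq_atTop hδ).const_mul (-(L / δ))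
  simpa using norm_le_neg_of_norm_deriv_le_of_tendsto_zero hf hB hle hf0 hB0

lemma hasDerivAt_neg_div_pow (K : ℝ) (n : ℕ) {s : ℝ} (hs : s ≠ 0) :
    HasDerivAt (fun s => -(K / s ^ n)) (K * n / s ^ (n + 1)) s := by
  convert! ((hasDerivAt_pow n s).inv (pow_ne_zero n hs)).const_mul (-K) using 1
  · funext s
    rw [Pi.inv_apply, div_eq_mul_inv, neg_mul]
  · rcases n with _ | n
    · simp only [CharP.cast_eq_zero, mul_zero, zero_div, zero_mul, neg_zero]
    · rw [Nat.add_sub_cancel]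
      field_simp
      ring

lemma norm_le_div_pow_of_hasDerivAt_two_mul_smul {g : ℝ → E} {K : ℝ} {n : ℕ}
    (hf : ∀ s, HasDerivAt f ((2 * s) • g s) s) (hg : ∀ s > 0, ‖g s‖ ≤ K / s ^ (n + 3))
    (hf0 : Filter.Tendsto f Filter.atTop (𝓝 0)) {r : ℝ} (hr : 0 < r) :
    ‖f r‖ ≤ 2 * K / r ^ (n + 1) := by
  have hK : 0 ≤ K := by simpa using (norm_nonneg _).trans (hg 1 one_pos)
  have hle : ∀ s ≥ r, ‖(2 * s) • g s‖ ≤ 2 * K * (n + 1 : ℕ) / s ^ (n + 2) := fun s hs => by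
    have hs0 : 0 < s := hr.trans_le hs
    rw [norm_smul, Real.norm_of_nonneg (by positivity)]
    calc 2 * s * ‖g s‖ ≤ 2 * s * (K / s ^ (n + 3)) := by gcongr; exact hg s hs0
      _ = 2 * K * 1 / s ^ (n + 2) := by field_simp; ring
      _ ≤ 2 * K * (n + 1 : ℕ) / s ^ (n + 2) := by gcongr; norm_cast; lia
  have hB0 : Filter.Tendsto (fun s : ℝ => -(2 * K / s ^ (n + 1))) Filter.atTop (𝓝 0) := by
    simpa only [neg_zero] using
      (Filter.Tendsto.const_div_atTop (Filter.tendsto_pow_atTop n.succ_ne_zero) (2 * K)).neg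
  simpa only [neg_neg] using norm_le_neg_of_norm_deriv_le_of_tendsto_zero hf
    (fun s hs => hasDerivAt_neg_div_pow (2 * K) (n + 1) (hr.trans_le hs).ne') hle hf0 hB0

variable {P Q : ℝ → E} {M r : ℝ}

lemma norm_two_mul_smul_sub_le_of_norm_le_div_pow_three
    (hP : ∀ r, HasDerivAt P ((2 * r) • Q r) r) (hQ : ∀ r, 0 < r → r ≤ 2 → ‖Q r‖ ≤ M / r ^ 3)
    (hr : 0 ≤ r) (hr2 : r ≤ 2) : ‖(2 * r) • (P r - P 1)‖ ≤ 4 * M := by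
  have hM : 0 ≤ M := by simpa using (norm_nonneg _).trans (hQ 1 one_pos (by norm_num))
  have hincr : ∀ r r', 0 < r → r ≤ r' → r' ≤ 2 → ‖P r' - P r‖ ≤ 2 * M / r - 2 * M / r' := by
    intro r r' hr hrr' hr'
    have hle : ∀ s, r ≤ s → s ≤ r' → ‖(2 * s) • Q s‖ ≤ 2 * M * (1 : ℕ) / s ^ 2 := fun s hs hs' => by
      have hs0 : 0 < s := hr.trans_le hs
      rw [norm_smul, Real.norm_of_nonneg (by positivity)]
      calc 2 * s * ‖Q s‖ ≤ 2 * s * (M / s ^ 3) := by gcongr; exact hQ s hs0 (hs'.trans hr')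
        _ = 2 * M * (1 : ℕ) / s ^ 2 := by push_cast; field_simp
    have := norm_sub_le_sub_of_norm_deriv_le hrr' hP
      (fun s hs => hasDerivAt_neg_div_pow (2 * M) 1 (hr.trans_le hs).ne') hle
    simpa only [pow_one, sub_neg_eq_add, neg_add_eq_sub] using this
  rw [norm_smul, Real.norm_of_nonneg (by positivity)]
  rcases hr.eq_or_lt with rfl | hr0
  · simpa using hM
  rcases le_total r 1 with h1 | h1
  · calc 2 * r * ‖P r - P 1‖ ≤ 2 * r * (2 * M / r - 2 * M / 1) := by
          rw [norm_sub_rev]; gcongr; exact hincr r 1 hr0 h1 (by norm_num)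
      _ = 4 * M * (1 - r) := by field_simp; ring
      _ ≤ 4 * M := by nlinarith
  · calc 2 * r * ‖P r - P 1‖ ≤ 2 * r * (2 * M / 1 - 2 * M / r) := by
          gcongr; exact hincr 1 r one_pos h1 hr2
      _ = 4 * M * (r - 1) := by field_simp; ring
      _ ≤ 4 * M := by nlinarith

lemma norm_second_difference_le {y : ℝ → E} (hy : ∀ r, HasDerivAt y ((2 * r) • P r) r)
    (hP : ∀ r, HasDerivAt P ((2 * r) • Q r) r) (hQ : ∀ r, 0 < r → r ≤ 2 → ‖Q r‖ ≤ M / r ^ 3) :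
    ‖y 0 - (2 : ℝ) • y 1 + y √2‖ ≤ 12 * M := by
  -- Subtracting `r ^ 2 • P 1` leaves the second difference in `r ^ 2` unchanged and makes the
  -- derivative bounded.
  set η : ℝ → E := fun r => y r - r ^ 2 • P 1 with hη
  have hηd : ∀ r, HasDerivAt η ((2 * r) • (P r - P 1)) r := fun r => by
    convert! (hy r).sub ((hasDerivAt_pow 2 r).smul_const (P 1)) using 1
    simp [smul_sub]
  have hlip : ∀ r ∈ Set.Icc (0 : ℝ) 2, ‖η r - η 1‖ ≤ 4 * M * ‖r - 1‖ := fun r hr =>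
    Convex.norm_image_sub_le_of_norm_hasDerivWithin_le (fun s _ => (hηd s).hasDerivWithinAt)
      (fun s hs => norm_two_mul_smul_sub_le_of_norm_le_div_pow_three hP hQ hs.1 hs.2)
      (convex_Icc 0 2) ⟨zero_le_one, one_le_two⟩ hr
  have hsqrt : √2 ≤ 2 := by rw [Real.sqrt_le_left (by norm_num)]; norm_num
  have hM : 0 ≤ M := by simpa using (norm_nonneg _).trans (hQ 1 one_pos (by norm_num))
  have hone : (1 : ℝ) ≤ √2 := by rw [Real.one_le_sqrt]; norm_num
  have hsplit : y 0 - (2 : ℝ) • y 1 + y √2 = (η 0 - η 1) + (η √2 - η 1) := by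
    simp only [hη, Real.sq_sqrt zero_le_two]
    module
  calc ‖y 0 - (2 : ℝ) • y 1 + y √2‖ ≤ ‖η 0 - η 1‖ + ‖η √2 - η 1‖ := hsplit ▸ norm_add_le _ _
    _ ≤ 4 * M * ‖(0 : ℝ) - 1‖ + 4 * M * ‖√2 - 1‖ :=
        add_le_add (hlip 0 (by norm_num)) (hlip √2 ⟨by positivity, hsqrt⟩)
    _ ≤ 12 * M := by
        rw [Real.norm_of_nonneg (by linarith : 0 ≤ √2 - 1), zero_sub, norm_neg, norm_one]
        nlinarith

end DifferentialInequalities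

section Resolvent

variable {V E : Type*} [NormedAddCommGroup V] [InnerProductSpace ℝ V] [FiniteDimensional ℝ V]
  [NormedAddCommGroup E] [NormedSpace ℂ E]

lemma laplacian_sub_schwartz (f g : 𝓢(V, E)) : Δ (f - g) = Δ f - Δ g := by
  simp only [← SchwartzMap.laplacianCLM_eq (𝕜 := ℂ), map_sub]

lemma laplacian_smul_schwartz (c : ℂ) (f : 𝓢(V, E)) : Δ (c • f) = c • Δ f := by
  simp only [← SchwartzMap.laplacianCLM_eq (𝕜 := ℂ), map_smul]

variable [MeasurableSpace V] [BorelSpace V]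

lemma schwartzAverage_smul_sub (k : 𝓢(V, ℂ)) (κ : ℂ) (v w : 𝓢(V, E)) (r : ℝ) (x : V) :
    schwartzAverage k (κ • v - w) r x =
      κ • schwartzAverage k v r x - schwartzAverage k w r x := by
  have hint := integrable_schwartz_smul_comp_affine (E := E) k
  rw [schwartzAverage, schwartzAverage, schwartzAverage, scaledAverage, scaledAverage,
    scaledAverage, ← integral_smul, ← integral_sub (by exact (hint v r x).smul κ) (hint w r x)]
  exact integral_congr_ae (.of_forall fun y => by
    simp only [sub_apply, smul_apply, smul_sub, smul_comm κ])

variable [CompleteSpace E]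

lemma IsHeatKernel.norm_le_of_norm_smul_sub_laplacian_le {e κ : ℂ} {k : 𝓢(V, ℂ)}
    (hk : IsHeatKernel (1 / (4 * e)) k) (he : e ≠ 0) (hκ : 0 < (κ * e).re) (w : 𝓢(V, E)) {F : ℝ}
    (hF : ∀ x, ‖κ • w x - (Δ w) x‖ ≤ F) (x : V) :
    ‖w x‖ ≤ ‖e‖ * ((∫ y, ‖k y‖) * F) / (κ * e).re := by
  set f : ℝ → E := fun r => Complex.exp (-(κ * e) * (r ^ 2 : ℝ)) • schwartzAverage k w r x with hf
  have hexp : ∀ r : ℝ, ‖Complex.exp (-(κ * e) * (r ^ 2 : ℝ))‖ = exp (-(κ * e).re * r ^ 2) :=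
    fun r => by rw [Complex.norm_exp, Complex.re_mul_ofReal, Complex.neg_re]
  have hderiv : ∀ r : ℝ, HasDerivAt f ((-2 * e * r * Complex.exp (-(κ * e) * (r ^ 2 : ℝ))) •
      schwartzAverage k (κ • w - Δ w) r x) r := fun r => by
    have hsq : HasDerivAt (fun r : ℝ => -(κ * e) * ((r ^ 2 : ℝ) : ℂ))
        (-(κ * e) * ((2 * r : ℝ) : ℂ)) r :=
      (by simpa using hasDerivAt_pow 2 r : HasDerivAt (fun r : ℝ => r ^ 2) (2 * r) r)
        |>.ofReal_comp.const_mul _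
    have hheat := hk.hasDerivAt_schwartzAverage w r x (by simpa using he)
    convert! hsq.cexp.smul hheat using 1
    rw [schwartzAverage_smul_sub, smul_sub, smul_smul, smul_smul, sub_eq_neg_add, ← neg_smul]
    push_cast
    congr 2 <;> field_simp
    ring
  have hzero : Filter.Tendsto f Filter.atTop (𝓝 0) := by
    have hgauss := (tendsto_exp_neg_mul_sq_atTop hκ).mul_const
      ((∫ y, ‖k y‖) * SchwartzMap.seminorm ℝ 0 0 w)
    refine squeeze_zero_norm (fun r => ?_) (by simpa only [zero_mul] using hgauss)
    rw [hf, norm_smul, hexp]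
    exact mul_le_mul_of_nonneg_left
      (norm_scaledAverage_le k.integrable (SchwartzMap.norm_le_seminorm ℝ w) r x) (exp_nonneg _)
  have hf0 : f 0 = w x := by
    simp [hf, schwartzAverage, scaledAverage_zero_scale hk.integral_eq_one]
  rw [← hf0]
  refine norm_zero_le_of_norm_deriv_le_gaussian hκ hderiv (fun r hr => ?_) hzero
  rw [norm_smul, norm_mul, norm_mul, norm_mul, norm_neg, Complex.norm_ofNat, hexp,
    Complex.norm_real, Real.norm_of_nonneg hr]
  calc 2 * ‖e‖ * r * exp (-(κ * e).re * r ^ 2) * ‖schwartzAverage k (κ • w - Δ w) r x‖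
      ≤ 2 * ‖e‖ * r * exp (-(κ * e).re * r ^ 2) * ((∫ y, ‖k y‖) * F) := by
        gcongr
        exact norm_scaledAverage_le k.integrable hF r x
    _ = 2 * r * (‖e‖ * ((∫ y, ‖k y‖) * F)) * exp (-(κ * e).re * r ^ 2) := by ring

lemma exists_norm_le_of_norm_smul_sub_laplacian_le (V E : Type*) [NormedAddCommGroup V]
    [InnerProductSpace ℝ V] [FiniteDimensional ℝ V] [NormedAddCommGroup E] [NormedSpace ℂ E]
    [CompleteSpace E] :
    ∃ C : ℝ, 0 ≤ C ∧ ∀ κ : ℂ, ‖κ‖ = 1 → |κ.re| ≤ |κ.im| → ∀ (w : 𝓢(V, E)) (F : ℝ),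
      (∀ x, ‖κ • w x - (Δ w) x‖ ≤ F) → ∀ x, ‖w x‖ ≤ C * F := by
  borelize V
  -- The heat flow is run along one of the two rays through `3 ± 4i`, chosen so that it decays.
  have hray : ∀ e : ℂ, 0 < e.re → ∃ C : ℝ, 0 ≤ C ∧ ∀ κ : ℂ, 1 / 10 ≤ (κ * e).re →
      ∀ (w : 𝓢(V, E)) (F : ℝ), (∀ x, ‖κ • w x - (Δ w) x‖ ≤ F) → ∀ x, ‖w x‖ ≤ C * F := by
    intro e he
    have he0 : e ≠ 0 := by rintro rfl; simp at he
    have hb : 0 < (1 / (4 * e)).re := by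
      rw [one_div, Complex.inv_re]
      exact div_pos (by simpa using he) (Complex.normSq_pos.2 (by simpa using he0))
    obtain ⟨k, hk⟩ := exists_isHeatKernel V hb
    refine ⟨‖e‖ * (∫ y, ‖k y‖) / (1 / 10), by positivity, fun κ hκ w F hF x => ?_⟩
    have hF0 : 0 ≤ F := (norm_nonneg _).trans (hF 0)
    calc ‖w x‖ ≤ ‖e‖ * ((∫ y, ‖k y‖) * F) / (κ * e).re :=
          hk.norm_le_of_norm_smul_sub_laplacian_le he0 (by linarith) w hF x
      _ ≤ ‖e‖ * ((∫ y, ‖k y‖) * F) / (1 / 10) := by gcongr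
      _ = ‖e‖ * (∫ y, ‖k y‖) / (1 / 10) * F := by ring
  obtain ⟨C₁, hC₁, h₁⟩ := hray ⟨3 / 5, 4 / 5⟩ (by norm_num)
  obtain ⟨C₂, _, h₂⟩ := hray ⟨3 / 5, -4 / 5⟩ (by norm_num)
  refine ⟨max C₁ C₂, le_max_of_le_left hC₁, fun κ hκ hsector w F hF x => ?_⟩
  have hF0 : 0 ≤ F := (norm_nonneg _).trans (hF 0)
  have him : 1 / 2 ≤ |κ.im| := by
    have hsq : κ.re ^ 2 + κ.im ^ 2 = 1 := by
      have := Complex.sq_norm κ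
      rw [hκ, Complex.normSq_apply] at this
      linarith
    nlinarith [sq_abs κ.re, sq_abs κ.im, abs_nonneg κ.re, abs_nonneg κ.im]
  have hre := neg_abs_le κ.re
  rcases le_total 0 κ.im with h | h
  · rw [abs_of_nonneg h] at him hsector
    exact (h₂ κ (by simp [Complex.mul_re]; linarith) w F hF x).trans
      (by gcongr; exact le_max_right _ _)
  · rw [abs_of_nonpos h] at him hsector
    exact (h₁ κ (by simp [Complex.mul_re]; linarith) w F hF x).trans
      (by gcongr; exact le_max_left _ _)

end Resolvent

lemma exists_sq_eq_neg_of_re_nonneg {μ : ℂ} (hμ : 0 ≤ μ.re) :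
    ∃ κ : ℂ, κ ^ 2 = -μ ∧ |κ.re| ≤ |κ.im| := by
  obtain ⟨κ, hκ⟩ := IsAlgClosed.exists_pow_nat_eq (-μ) (n := 2) (by norm_num)
  refine ⟨κ, hκ, sq_le_sq.1 ?_⟩
  have hre := congrArg Complex.re hκ
  rw [sq, Complex.mul_re, Complex.neg_re] at hre
  nlinarith

lemma opNorm_le_of_norm_apply_le {V E : Type*} [NormedAddCommGroup V] [NormedSpace ℝ V]
    [NormedAddCommGroup E] [NormedSpace ℝ E] {n : ℕ} {A : V [×n]→L[ℝ] E} {C : ℝ} (hC : 0 ≤ C)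
    (hA : ∀ m : Fin n → V, (∀ i, ‖m i‖ ≤ 1) → ‖A m‖ ≤ C) : ‖A‖ ≤ C := by
  refine ContinuousMultilinearMap.opNorm_le_bound hC fun m => ?_
  have hm : A m = (∏ i, ‖m i‖) • A fun i => ‖m i‖⁻¹ • m i := by
    rw [← ContinuousMultilinearMap.map_smul_univ]
    congr 1
    funext i
    rcases eq_or_ne (m i) 0 with h | h
    · simp only [h, smul_zero]
    · rw [smul_inv_smul₀ (norm_ne_zero_iff.2 h)]
  rw [hm, norm_smul, Real.norm_of_nonneg (by positivity), mul_comm C]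
  refine mul_le_mul_of_nonneg_left (hA _ fun i => ?_) (by positivity)
  rw [norm_smul, norm_inv, norm_norm]
  exact inv_mul_le_one

lemma exists_norm_le_of_norm_smul_add_laplacian_laplacian_le (V E : Type*)
    [NormedAddCommGroup V] [InnerProductSpace ℝ V] [FiniteDimensional ℝ V]
    [NormedAddCommGroup E] [NormedSpace ℂ E] [CompleteSpace E] :
    ∃ C : ℝ, 0 ≤ C ∧ ∀ μ : ℂ, ‖μ‖ = 1 → 0 ≤ μ.re → ∀ (w : 𝓢(V, E)) (F : ℝ),
      (∀ x, ‖μ • w x + (Δ (Δ w)) x‖ ≤ F) → ∀ x, ‖w x‖ ≤ C * F := by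
  obtain ⟨C, hC, hres⟩ := exists_norm_le_of_norm_smul_sub_laplacian_le V E
  refine ⟨C * C, by positivity, fun μ hμ hre w F hF x => ?_⟩
  obtain ⟨κ, hκ, hsector⟩ := exists_sq_eq_neg_of_re_nonneg hre
  have hκ1 : ‖κ‖ = 1 := by
    have := congrArg norm hκ
    rw [norm_pow, norm_neg, hμ] at this
    exact (pow_eq_one_iff_of_nonneg (norm_nonneg _) two_ne_zero).1 this
  have hfactor : ∀ x, ‖(-κ) • (κ • w - Δ w) x - (Δ (κ • w - Δ w)) x‖ ≤ F := fun x => by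
    refine le_of_eq_of_le ?_ (hF x)
    rw [laplacian_sub_schwartz, laplacian_smul_schwartz, ← neg_neg μ, ← hκ]
    simp only [sub_apply, smul_apply]
    congr 1
    module
  have hfirst : ∀ x, ‖κ • w x - (Δ w) x‖ ≤ C * F :=
    hres (-κ) (by rwa [norm_neg]) (by simpa using hsector) (κ • w - Δ w) F hfactor
  simpa only [mul_assoc] using hres κ hκ1 hsector w (C * F) hfirst x

section Bilaplacian

variable {V E : Type*} [NormedAddCommGroup V] [InnerProductSpace ℝ V] [FiniteDimensional ℝ V]
  [MeasurableSpace V] [BorelSpace V] [NormedAddCommGroup E] [NormedSpace ℂ E]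
  {k : 𝓢(V, ℂ)} {w : 𝓢(V, E)} {F : ℝ}

lemma IsHeatKernel.hasDerivAt_schwartzAverage_quarter (hk : IsHeatKernel (1 / 4) k) (g : 𝓢(V, E))
    (x : V) (r : ℝ) : HasDerivAt (fun r => schwartzAverage k g r x)
      ((2 * r) • schwartzAverage k (Δ g) r x) r := by
  convert! hk.hasDerivAt_schwartzAverage g r x (by norm_num) using 1
  rw [← Complex.coe_smul]
  congr 1
  push_cast
  ring

lemma IsHeatKernel.norm_schwartzAverage_iteratedLineDerivOp_le (hk : IsHeatKernel (1 / 4) k)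
    (hF : ∀ x, ‖(Δ (Δ w)) x‖ ≤ F) {n : ℕ} {m : Fin (n + 5) → V} (hm : ∀ i, ‖m i‖ ≤ 1) (x : V)
    {r : ℝ} (hr : 0 < r) : ‖schwartzAverage k (∂^{m} w) r x‖ ≤
      4 * (∫ y, ‖iteratedFDeriv ℝ (n + 5) k y‖) * F / r ^ (n + 1) := by
  set I := ∫ y, ‖iteratedFDeriv ℝ (n + 5) k y‖
  have hdecay : ∀ (g : 𝓢(V, E)) {M : ℝ}, (∀ x, ‖g x‖ ≤ M) → ∀ s > 0,
      ‖schwartzAverage k (∂^{m} g) s x‖ ≤ I * M / s ^ (n + 5) := fun g M hM s hs => by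
    rw [le_div_iff₀ (by positivity), mul_comm]
    exact pow_mul_norm_schwartzAverage_iteratedLineDerivOp_le k g s x hm hM hs.le
  have hzero : ∀ g : 𝓢(V, E), Filter.Tendsto (fun s => schwartzAverage k (∂^{m} g) s x)
      Filter.atTop (𝓝 0) := fun g =>
    squeeze_zero_norm' ((Filter.eventually_gt_atTop 0).mono fun s hs =>
        hdecay g (SchwartzMap.norm_le_seminorm ℝ g) s hs)
      (Filter.Tendsto.const_div_atTop (Filter.tendsto_pow_atTop (by lia)) _)
  have hheat : ∀ (g : 𝓢(V, E)) (s : ℝ), HasDerivAt (fun s => schwartzAverage k (∂^{m} g) s x)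
      ((2 * s) • schwartzAverage k (∂^{m} (Δ g)) s x) s := fun g s => by
    rw [← laplacian_iteratedLineDerivOp_comm]
    exact hk.hasDerivAt_schwartzAverage_quarter (∂^{m} g) x s
  have hlap : ∀ s > 0, ‖schwartzAverage k (∂^{m} (Δ w)) s x‖ ≤ 2 * (I * F) / s ^ (n + 2 + 1) :=
    fun s hs => norm_le_div_pow_of_hasDerivAt_two_mul_smul (hheat (Δ w))
      (hdecay (Δ (Δ w)) hF) (hzero (Δ w)) hs
  calc ‖schwartzAverage k (∂^{m} w) r x‖ ≤ 2 * (2 * (I * F)) / r ^ (n + 1) :=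
        norm_le_div_pow_of_hasDerivAt_two_mul_smul (hheat w) hlap (hzero w) hr
    _ = 4 * I * F / r ^ (n + 1) := by ring

variable [CompleteSpace E]

lemma IsHeatKernel.norm_second_difference_iteratedLineDerivOp_le (hk : IsHeatKernel (1 / 4) k)
    {h : ℕ} (hh : h ≤ 3) (hF : ∀ x, ‖(Δ (Δ w)) x‖ ≤ F) {m : Fin h → V} (hm : ∀ i, ‖m i‖ ≤ 1)
    (x : V) :
    ‖(∂^{m} w) x - (2 : ℝ) • schwartzAverage k (∂^{m} w) 1 x + schwartzAverage k (∂^{m} w) √2 x‖ ≤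
      96 * (∫ y, ‖iteratedFDeriv ℝ h k y‖) * F := by
  have hQ : ∀ r : ℝ, 0 < r → r ≤ 2 → ‖schwartzAverage k (Δ (Δ (∂^{m} w))) r x‖ ≤
      8 * ((∫ y, ‖iteratedFDeriv ℝ h k y‖) * F) / r ^ 3 := fun r hr hr2 => by
    rw [le_div_iff₀ (by positivity), laplacian_iteratedLineDerivOp_comm,
      laplacian_iteratedLineDerivOp_comm]
    have hpow : r ^ 3 ≤ 8 * r ^ h := by
      calc r ^ 3 = r ^ (3 - h) * r ^ h := by rw [← pow_add, Nat.sub_add_cancel hh]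
        _ ≤ 2 ^ 3 * r ^ h := by
          gcongr
          calc r ^ (3 - h) ≤ 2 ^ (3 - h) := by gcongr
            _ ≤ 2 ^ 3 := pow_le_pow_right₀ one_le_two (Nat.sub_le 3 h)
        _ = 8 * r ^ h := by norm_num
    calc ‖schwartzAverage k (∂^{m} (Δ (Δ w))) r x‖ * r ^ 3
        ≤ ‖schwartzAverage k (∂^{m} (Δ (Δ w))) r x‖ * (8 * r ^ h) := by gcongr
      _ = 8 * (r ^ h * ‖schwartzAverage k (∂^{m} (Δ (Δ w))) r x‖) := by ring
      _ ≤ 8 * ((∫ y, ‖iteratedFDeriv ℝ h k y‖) * F) := mul_le_mul_of_nonneg_left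
        (pow_mul_norm_schwartzAverage_iteratedLineDerivOp_le k (Δ (Δ w)) r x hm hF hr.le)
        (by norm_num)
  have hsecond := norm_second_difference_le (hk.hasDerivAt_schwartzAverage_quarter (∂^{m} w) x)
    (hk.hasDerivAt_schwartzAverage_quarter (Δ (∂^{m} w)) x) hQ
  simp only [schwartzAverage, scaledAverage_zero_scale hk.integral_eq_one] at hsecond
  linarith

lemma IsHeatKernel.norm_iteratedFDeriv_le (hk : IsHeatKernel (1 / 4) k) {h : ℕ} (hh : h ≤ 3)
    {W : ℝ} (hF : ∀ x, ‖(Δ (Δ w)) x‖ ≤ F) (hW : ∀ x, ‖w x‖ ≤ W) (x : V) :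
    ‖iteratedFDeriv ℝ h w x‖ ≤ 96 * (∫ y, ‖iteratedFDeriv ℝ h k y‖) * (F + W) := by
  have hF0 : 0 ≤ F := (norm_nonneg _).trans (hF 0)
  have hW0 : 0 ≤ W := (norm_nonneg _).trans (hW 0)
  refine opNorm_le_of_norm_apply_le (by positivity) fun m hm => ?_
  rw [← SchwartzMap.iteratedLineDerivOp_eq_iteratedFDeriv]
  set I := ∫ y, ‖iteratedFDeriv ℝ h k y‖
  have hI : 0 ≤ I := integral_nonneg fun y => norm_nonneg _
  have haverage : ∀ r : ℝ, 1 ≤ r → ‖schwartzAverage k (∂^{m} w) r x‖ ≤ I * W := fun r hr =>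
    (le_mul_of_one_le_left (norm_nonneg _) (one_le_pow₀ hr)).trans
      (pow_mul_norm_schwartzAverage_iteratedLineDerivOp_le k w r x hm hW (by linarith))
  calc ‖(∂^{m} w) x‖
      = ‖((∂^{m} w) x - (2 : ℝ) • schwartzAverage k (∂^{m} w) 1 x +
          schwartzAverage k (∂^{m} w) √2 x) + ((2 : ℝ) • schwartzAverage k (∂^{m} w) 1 x -
          schwartzAverage k (∂^{m} w) √2 x)‖ := by congr 1; abel
    _ ≤ 96 * I * F + (2 * (I * W) + I * W) := by
        refine norm_add_le_of_le (hk.norm_second_difference_iteratedLineDerivOp_le hh hF hm x)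
          (norm_sub_le_of_le ?_ (haverage √2 (by rw [Real.one_le_sqrt]; norm_num)))
        rw [norm_smul, Real.norm_ofNat]
        exact mul_le_mul_of_nonneg_left (haverage 1 le_rfl) zero_le_two
    _ ≤ 96 * I * (F + W) := by nlinarith [mul_nonneg hI hW0]

end Bilaplacian

lemma exists_norm_iteratedFDeriv_le_of_norm_smul_add_laplacian_laplacian_le (V E : Type*)
    [NormedAddCommGroup V] [InnerProductSpace ℝ V] [FiniteDimensional ℝ V]
    [NormedAddCommGroup E] [NormedSpace ℂ E] [CompleteSpace E] :
    ∃ C : ℝ, 0 ≤ C ∧ ∀ μ : ℂ, ‖μ‖ = 1 → 0 ≤ μ.re → ∀ (w : 𝓢(V, E)) (F : ℝ),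
      (∀ x, ‖μ • w x + (Δ (Δ w)) x‖ ≤ F) → ∀ h ≤ 3, ∀ x, ‖iteratedFDeriv ℝ h w x‖ ≤ C * F := by
  borelize V
  obtain ⟨k, hk⟩ := exists_isHeatKernel V (b := 1 / 4) (by norm_num)
  obtain ⟨C₀, hC₀, hres⟩ := exists_norm_le_of_norm_smul_add_laplacian_laplacian_le V E
  set I : ℕ → ℝ := fun h => 96 * ∫ y, ‖iteratedFDeriv ℝ h k y‖
  have hI : ∀ h, 0 ≤ I h := fun h => by positivity
  refine ⟨(∑ h ∈ Finset.range 4, I h) * (1 + 2 * C₀),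
    mul_nonneg (Finset.sum_nonneg fun h _ => hI h) (by positivity),
    fun μ hμ hre w F hF h hh x => ?_⟩
  have hF0 : 0 ≤ F := (norm_nonneg _).trans (hF 0)
  have hw := hres μ hμ hre w F hF
  have hbilap : ∀ x, ‖(Δ (Δ w)) x‖ ≤ F + C₀ * F := fun x => by
    calc ‖(Δ (Δ w)) x‖ = ‖(μ • w x + (Δ (Δ w)) x) - μ • w x‖ := by rw [add_sub_cancel_left]
      _ ≤ F + C₀ * F := norm_sub_le_of_le (hF x) (by rw [norm_smul, hμ, one_mul]; exact hw x)
  calc ‖iteratedFDeriv ℝ h w x‖ ≤ I h * (F + C₀ * F + C₀ * F) :=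
        hk.norm_iteratedFDeriv_le hh hbilap hw x
    _ ≤ (∑ h ∈ Finset.range 4, I h) * (F + C₀ * F + C₀ * F) := by
        gcongr
        exact Finset.single_le_sum (fun i _ => hI i) (Finset.mem_range.2 (by lia))
    _ = (∑ h ∈ Finset.range 4, I h) * (1 + 2 * C₀) * F := by ring

section IteratedDerivatives

variable {V E : Type*} [NormedAddCommGroup V] [NormedSpace ℝ V] [NormedAddCommGroup E]
  [NormedSpace ℝ E] {n : ℕ}

lemma iteratedFDeriv_comp_add_smul {u : V → E} (hu : ContDiff ℝ n u) (c : V) (r : ℝ) (x : V) :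
    iteratedFDeriv ℝ n (fun x => u (c + r • x)) x = r ^ n • iteratedFDeriv ℝ n u (c + r • x) := by
  have hshift : ContDiff ℝ n (fun x => u (c + x)) := hu.comp (contDiff_const.add contDiff_id)
  rw [congrFun (iteratedFDeriv_comp_const_smul r hshift) x, iteratedFDeriv_comp_add_left]

lemma norm_iteratedFDeriv_smul_sub_le {χ : V → ℝ} {z : V → E} (hχ : ContDiff ℝ n χ)
    (hz : ContDiff ℝ n z) {x : V} {A B : ℝ} (hA0 : 0 ≤ A) (hB0 : 0 ≤ B)
    (hA : ∀ j, 1 ≤ j → j ≤ n → ‖iteratedFDeriv ℝ j χ x‖ ≤ A)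
    (hB : ∀ j < n, ‖iteratedFDeriv ℝ j z x‖ ≤ B) :
    ‖iteratedFDeriv ℝ n (fun y => χ y • z y) x - χ x • iteratedFDeriv ℝ n z x‖ ≤
      2 ^ n * (A * B) := by
  have hχc : ContDiff ℝ n (fun y => χ y - χ x) := hχ.sub contDiff_const
  have hfreeze : iteratedFDeriv ℝ n (fun y => χ y • z y) x - χ x • iteratedFDeriv ℝ n z x =
      iteratedFDeriv ℝ n (fun y => (χ y - χ x) • z y) x := by
    simp only [sub_smul]
    rw [fun_iteratedFDeriv_sub_apply (by exact (hχ.smul hz).contDiffAt)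
      (by exact (hz.const_smul (χ x)).contDiffAt), iteratedFDeriv_const_smul_apply' hz.contDiffAt]
  have hterm : ∀ j ∈ Finset.range (n + 1), (n.choose j : ℝ) *
      ‖iteratedFDeriv ℝ j (fun y => χ y - χ x) x‖ * ‖iteratedFDeriv ℝ (n - j) z x‖ ≤
      n.choose j * (A * B) := fun j hj => by
    rw [mul_assoc]
    refine mul_le_mul_of_nonneg_left ?_ (Nat.cast_nonneg _)
    rcases j.eq_zero_or_pos with rfl | hj0
    · simp only [norm_iteratedFDeriv_zero, sub_self, norm_zero, zero_mul]
      positivity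
    · have hjn : j ≤ n := Nat.lt_succ_iff.1 (Finset.mem_range.1 hj)
      rw [fun_iteratedFDeriv_sub_apply (hχ.of_le (by exact_mod_cast hjn)).contDiffAt
        contDiffAt_const, iteratedFDeriv_const_of_ne hj0.ne', Pi.zero_apply, sub_zero]
      exact mul_le_mul (hA j hj0 hjn) (hB _ (by lia)) (norm_nonneg _) hA0
  rw [hfreeze]
  refine (norm_iteratedFDeriv_smul_le hχc hz x le_rfl).trans ((Finset.sum_le_sum hterm).trans_eq ?_)
  rw [← Finset.sum_mul, ← Nat.cast_sum, Nat.sum_range_choose]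
  norm_cast

lemma exists_norm_iteratedFDeriv_le_of_hasCompactSupport {f : V → E} (hf : ContDiff ℝ n f)
    (hsupp : HasCompactSupport f) :
    ∃ A : ℝ, 0 ≤ A ∧ ∀ j ≤ n, ∀ x, ‖iteratedFDeriv ℝ j f x‖ ≤ A := by
  have hbound : ∀ j ≤ n, ∃ A, ∀ x, ‖iteratedFDeriv ℝ j f x‖ ≤ A := fun j hj =>
    (hsupp.iteratedFDeriv j).exists_bound_of_continuous
      (hf.continuous_iteratedFDeriv (by exact_mod_cast hj))
  choose! A hA using hbound
  have hA0 : ∀ j ∈ Finset.range (n + 1), 0 ≤ A j := fun j hj =>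
    (norm_nonneg _).trans (hA j (Nat.lt_succ_iff.1 (Finset.mem_range.1 hj)) 0)
  exact ⟨∑ j ∈ Finset.range (n + 1), A j, Finset.sum_nonneg hA0, fun j hj x => (hA j hj x).trans
    (Finset.single_le_sum hA0 (Finset.mem_range.2 (Nat.lt_succ_iff.2 hj)))⟩

lemma iteratedFDeriv_two_iteratedFDeriv_apply (u : V → E) (x v w : V) (m : Fin n → V) :
    iteratedFDeriv ℝ 2 (iteratedFDeriv ℝ n u) x ![v, w] m =
      iteratedFDeriv ℝ (n + 2) u x (Matrix.vecCons v (Matrix.vecCons w m)) := by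
  rw [iteratedFDeriv_two_apply, fderiv_iteratedFDeriv, LinearIsometryEquiv.comp_fderiv]
  rfl

/-- A smooth cutoff function equal to `1` on the closed unit ball and to `0` outside the ball of
radius `2`. -/
noncomputable def unitCutoff (V : Type*) [NormedAddCommGroup V] [NormedSpace ℝ V]
    [FiniteDimensional ℝ V] : ContDiffBump (0 : V) :=
  ⟨1, 2, one_pos, one_lt_two⟩

variable [FiniteDimensional ℝ V] {x : V}

lemma unitCutoff_eq_one (hx : ‖x‖ ≤ 1) : unitCutoff V x = 1 :=
  (unitCutoff V).one_of_mem_closedBall (by simpa [unitCutoff] using hx)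

lemma unitCutoff_eq_zero (hx : 2 ≤ ‖x‖) : unitCutoff V x = 0 :=
  (unitCutoff V).zero_of_le_dist (by simpa [unitCutoff] using hx)

end IteratedDerivatives

section BilaplacianForm

variable {V E : Type*} [NormedAddCommGroup V] [InnerProductSpace ℝ V] [FiniteDimensional ℝ V]
  [NormedAddCommGroup E] [NormedSpace ℝ E]

/-- The bilaplacian as a linear form on the fourth derivative: the trace over both pairs of
arguments. -/
noncomputable def bilaplacianForm (V E : Type*) [NormedAddCommGroup V] [InnerProductSpace ℝ V]
    [FiniteDimensional ℝ V] [NormedAddCommGroup E] [NormedSpace ℝ E] : (V [×4]→L[ℝ] E) →L[ℝ] E :=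
  ∑ j, ∑ i, ContinuousMultilinearMap.apply ℝ (fun _ : Fin 4 => V) E
    ![stdOrthonormalBasis ℝ V j, stdOrthonormalBasis ℝ V j, stdOrthonormalBasis ℝ V i,
      stdOrthonormalBasis ℝ V i]

lemma laplacian_laplacian_eq_bilaplacianForm {u : V → E} (hu : ContDiff ℝ 4 u) (x : V) :
    Δ (Δ u) x = bilaplacianForm V E (iteratedFDeriv ℝ 4 u x) := by
  set e := stdOrthonormalBasis ℝ V
  set T : (V [×2]→L[ℝ] E) →L[ℝ] E :=
    ∑ i, ContinuousMultilinearMap.apply ℝ (fun _ : Fin 2 => V) E ![e i, e i] with hT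
  have hlap : Δ u = T ∘ iteratedFDeriv ℝ 2 u := by
    rw [InnerProductSpace.laplacian_eq_iteratedFDeriv_orthonormalBasis u e]
    ext x
    simp [hT]
  have hD2 : ContDiffAt ℝ 2 (iteratedFDeriv ℝ 2 u) x :=
    (hu.iteratedFDeriv_right (by norm_num)).contDiffAt
  rw [hlap, hD2.laplacian_CLM_comp_left, Function.comp_apply,
    InnerProductSpace.laplacian_eq_iteratedFDeriv_orthonormalBasis _ e]
  simp only [map_sum, hT, bilaplacianForm, sum_apply, ContinuousMultilinearMap.apply_apply,
    iteratedFDeriv_two_iteratedFDeriv_apply]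
  rfl

lemma schwartz_laplacian_laplacian_apply (w : 𝓢(V, E)) (x : V) :
    (Δ (Δ w)) x = bilaplacianForm V E (iteratedFDeriv ℝ 4 w x) := by
  rw [SchwartzMap.laplacian_apply, ← laplacian_laplacian_eq_bilaplacianForm (w.smooth 4),
    show ⇑(Δ w : 𝓢(V, E)) = Δ ⇑w from funext (SchwartzMap.laplacian_apply w)]

lemma norm_bilaplacianForm_smul_le {χ : V → ℝ} {z : V → E} (hχ : ContDiff ℝ 4 χ)
    (hz : ContDiff ℝ 4 z) {x : V} {A B : ℝ} (hA0 : 0 ≤ A) (hB0 : 0 ≤ B)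
    (hA : ∀ j, 1 ≤ j → j ≤ 4 → ‖iteratedFDeriv ℝ j χ x‖ ≤ A)
    (hB : ∀ j < 4, ‖iteratedFDeriv ℝ j z x‖ ≤ B) :
    ‖bilaplacianForm V E (iteratedFDeriv ℝ 4 (fun y => χ y • z y) x) -
        χ x • bilaplacianForm V E (iteratedFDeriv ℝ 4 z x)‖ ≤
      ‖bilaplacianForm V E‖ * (2 ^ 4 * (A * B)) := by
  rw [← map_smul, ← map_sub]
  exact ContinuousLinearMap.le_opNorm_of_le _
    (norm_iteratedFDeriv_smul_sub_le hχ hz hA0 hB0 hA hB)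

end BilaplacianForm

section Plancherel

open scoped FourierTransform

variable {V H : Type*} [NormedAddCommGroup V] [InnerProductSpace ℝ V] [FiniteDimensional ℝ V]
  [MeasurableSpace V] [BorelSpace V] [NormedAddCommGroup H] [InnerProductSpace ℂ H]

lemma norm_fourier_lineDerivOp_apply (f : 𝓢(V, H)) (m ξ : V) :
    ‖(𝓕 (∂_{m} f)) ξ‖ = 2 * π * |inner ℝ ξ m| * ‖(𝓕 f) ξ‖ := by
  have htemp : (fun x : V => inner ℝ x m).HasTemperateGrowth := by fun_prop
  rw [SchwartzMap.fourier_lineDerivOp_eq, smul_apply, SchwartzMap.smulLeftCLM_apply_apply htemp,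
    norm_smul, norm_smul]
  simp only [norm_mul, Complex.norm_ofNat, Complex.norm_real, Complex.norm_I, mul_one,
    Real.norm_eq_abs, abs_of_pos Real.pi_pos, mul_assoc]

lemma integrable_norm_sq_schwartz (f : 𝓢(V, H)) : Integrable (fun x => ‖f x‖ ^ 2) :=
  (memLp_two_iff_integrable_sq_norm f.continuous.aestronglyMeasurable).1 (f.memLp 2 volume)

variable [CompleteSpace H]

lemma norm_fourier_laplacian_apply (f : 𝓢(V, H)) (ξ : V) :
    ‖(𝓕 (Δ f)) ξ‖ = (2 * π * ‖ξ‖) ^ 2 * ‖(𝓕 f) ξ‖ := by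
  have htemp : (fun x : V => ‖x‖ ^ 2).HasTemperateGrowth := by fun_prop
  rw [SchwartzMap.laplacian_eq_fourierMultiplierCLM, FourierTransform.fourier_smul,
    SchwartzMap.fourierMultiplierCLM_apply, FourierTransform.fourier_fourierInv_eq, smul_apply,
    SchwartzMap.smulLeftCLM_apply_apply htemp, norm_smul, norm_smul]
  simp [abs_of_pos Real.pi_pos]
  ring

lemma integral_norm_sq_iteratedLineDerivOp_four_le (f : 𝓢(V, H)) {m : Fin 4 → V}
    (hm : ∀ i, ‖m i‖ ≤ 1) : ∫ x, ‖(∂^{m} f) x‖ ^ 2 ≤ ∫ x, ‖(Δ (Δ f)) x‖ ^ 2 := by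
  rw [← SchwartzMap.integral_norm_sq_fourier (∂^{m} f),
    ← SchwartzMap.integral_norm_sq_fourier (Δ (Δ f))]
  refine integral_mono (integrable_norm_sq_schwartz _) (integrable_norm_sq_schwartz _) fun ξ =>
    pow_le_pow_left₀ (norm_nonneg _) ?_ 2
  have hinner : ∀ i, |inner ℝ ξ (m i)| ≤ ‖ξ‖ := fun i =>
    (abs_real_inner_le_norm _ _).trans (mul_le_of_le_one_right (norm_nonneg _) (hm i))
  have := Real.pi_pos
  calc ‖(𝓕 (∂^{m} f)) ξ‖
      = 2 * π * |inner ℝ ξ (m 0)| * (2 * π * |inner ℝ ξ (m 1)| * (2 * π * |inner ℝ ξ (m 2)| *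
          (2 * π * |inner ℝ ξ (m 3)| * ‖(𝓕 f) ξ‖))) := by
        simp only [LineDeriv.iteratedLineDerivOp_succ_left, LineDeriv.iteratedLineDerivOp_fin_zero,
          norm_fourier_lineDerivOp_apply]
        rfl
    _ ≤ 2 * π * ‖ξ‖ * (2 * π * ‖ξ‖ * (2 * π * ‖ξ‖ * (2 * π * ‖ξ‖ * ‖(𝓕 f) ξ‖))) := by
        gcongr <;> exact hinner _
    _ = ‖(𝓕 (Δ (Δ f))) ξ‖ := by
        rw [norm_fourier_laplacian_apply, norm_fourier_laplacian_apply]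
        ring

lemma integral_norm_sq_iteratedLineDerivOp_four_le_of_eq_zero {w : 𝓢(V, H)} {F R : ℝ}
    (hF : ∀ x, ‖(Δ (Δ w)) x‖ ≤ F) (hzero : ∀ x, R < ‖x‖ → (Δ (Δ w)) x = 0) {m : Fin 4 → V}
    (hm : ∀ i, ‖m i‖ ≤ 1) :
    ∫ x, ‖(∂^{m} w) x‖ ^ 2 ≤ volume.real (closedBall (0 : V) R) * F ^ 2 := by
  calc ∫ x, ‖(∂^{m} w) x‖ ^ 2 ≤ ∫ x, ‖(Δ (Δ w)) x‖ ^ 2 :=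
        integral_norm_sq_iteratedLineDerivOp_four_le w hm
    _ = ∫ x in closedBall (0 : V) R, ‖(Δ (Δ w)) x‖ ^ 2 := by
        refine (setIntegral_eq_integral_of_forall_compl_eq_zero fun x hx => ?_).symm
        rw [hzero x (by simpa using hx), norm_zero, zero_pow two_ne_zero]
    _ ≤ ∫ x in closedBall (0 : V) R, F ^ 2 := by
        refine setIntegral_mono (integrable_norm_sq_schwartz (Δ (Δ w))).integrableOn
          (integrableOn_const measure_closedBall_lt_top.ne) fun x => ?_
        exact pow_le_pow_left₀ (norm_nonneg _) (hF x) 2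
    _ = volume.real (closedBall (0 : V) R) * F ^ 2 := by rw [setIntegral_const, smul_eq_mul]

end Plancherel

section HeatSmoothing

variable {V E : Type*} [NormedAddCommGroup V] [InnerProductSpace ℝ V] [FiniteDimensional ℝ V]
  [MeasurableSpace V] [BorelSpace V] [NormedAddCommGroup E] [NormedSpace ℂ E] {k : 𝓢(V, ℂ)}
  {w : 𝓢(V, E)} {F : ℝ}

/-- The second-order smoothing of `w` by the kernel `k`: the affine combination of the averages of
`w` at the scales `1` and `√2` whose distance to `w` is controlled by `Δ (Δ w)` when `k` is a heat
kernel. -/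
noncomputable def heatSmoothing (k : 𝓢(V, ℂ)) (w : 𝓢(V, E)) (x : V) : E :=
  (2 : ℝ) • schwartzAverage k w 1 x - schwartzAverage k w √2 x

lemma norm_heatSmoothing_le {M : ℝ} (hM : ∀ x, ‖w x‖ ≤ M) (x : V) :
    ‖heatSmoothing k w x‖ ≤ 3 * (∫ y, ‖k y‖) * M := by
  calc ‖heatSmoothing k w x‖ ≤ 2 * ((∫ y, ‖k y‖) * M) + (∫ y, ‖k y‖) * M := by
        refine norm_sub_le_of_le ?_ (norm_scaledAverage_le k.integrable hM √2 x)
        rw [norm_smul, Real.norm_ofNat]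
        exact mul_le_mul_of_nonneg_left (norm_scaledAverage_le k.integrable hM 1 x) zero_le_two
    _ = 3 * (∫ y, ‖k y‖) * M := by ring

variable [CompleteSpace E]

lemma iteratedFDeriv_schwartzAverage (k : 𝓢(V, ℂ)) (w : 𝓢(V, E)) (n : ℕ) (r : ℝ) :
    iteratedFDeriv ℝ n (schwartzAverage k w r) =
      scaledAverage volume k (iteratedFDeriv ℝ n w) r :=
  iteratedFDeriv_scaledAverage k.integrable (w.smooth n)
    (fun j _ => ⟨_, SchwartzMap.norm_iteratedFDeriv_le_seminorm ℝ w j⟩) r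

lemma contDiff_schwartzAverage (k : 𝓢(V, ℂ)) (w : 𝓢(V, E)) (r : ℝ) (n : ℕ∞) :
    ContDiff ℝ n (schwartzAverage k w r) := by
  refine contDiff_of_differentiable_iteratedFDeriv fun j _ x => ?_
  rw [iteratedFDeriv_schwartzAverage]
  refine (hasFDerivAt_scaledAverage k.integrable
    ((w.smooth (j + 1)).iteratedFDeriv_right (by rw [add_comm]; norm_cast))
    (SchwartzMap.norm_iteratedFDeriv_le_seminorm ℝ w j)
    (M' := SchwartzMap.seminorm ℝ 0 (j + 1) w) (fun x => ?_) r x).differentiableAt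
  rw [norm_fderiv_iteratedFDeriv]
  exact SchwartzMap.norm_iteratedFDeriv_le_seminorm ℝ w (j + 1) x

lemma contDiff_heatSmoothing (k : 𝓢(V, ℂ)) (w : 𝓢(V, E)) (n : ℕ∞) :
    ContDiff ℝ n (heatSmoothing k w) :=
  ((contDiff_schwartzAverage k w 1 n).const_smul (2 : ℝ)).sub (contDiff_schwartzAverage k w √2 n)

lemma clm_iteratedFDeriv_heatSmoothing {G : Type*} [NormedAddCommGroup G] [NormedSpace ℂ G]
    [CompleteSpace G] {n : ℕ} (T : (V [×n]→L[ℝ] E) →L[ℝ] G)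
    (hT : ∀ (c : ℂ) A, T (c • A) = c • T A) (g : 𝓢(V, G))
    (hg : ∀ y, T (iteratedFDeriv ℝ n w y) = g y) (x : V) :
    T (iteratedFDeriv ℝ n (heatSmoothing k w) x) = heatSmoothing k g x := by
  have haverage : ∀ r, T (scaledAverage volume k (iteratedFDeriv ℝ n w) r x) =
      schwartzAverage k g r x := fun r => by
    rw [← scaledAverage_clm_comp T hT k.integrable
      ((w.smooth n).continuous_iteratedFDeriv le_rfl)
      (SchwartzMap.norm_iteratedFDeriv_le_seminorm ℝ w n)]
    simp only [hg]
  have h1 := (contDiff_schwartzAverage k w 1 n).contDiffAt (x := x)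
  have h2 := (contDiff_schwartzAverage k w √2 n).contDiffAt (x := x)
  unfold heatSmoothing
  rw [fun_iteratedFDeriv_sub_apply (by exact h1.const_smul (2 : ℝ)) h2,
    iteratedFDeriv_const_smul_apply' h1, iteratedFDeriv_schwartzAverage,
    iteratedFDeriv_schwartzAverage, map_sub, map_smul, haverage, haverage]

lemma iteratedFDeriv_heatSmoothing_apply {n : ℕ} (m : Fin n → V) (x : V) :
    iteratedFDeriv ℝ n (heatSmoothing k w) x m = heatSmoothing k (∂^{m} w) x :=
  clm_iteratedFDeriv_heatSmoothing (ContinuousMultilinearMap.apply ℝ _ E m) (fun _ _ => rfl) _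
    (fun _ => SchwartzMap.iteratedLineDerivOp_eq_iteratedFDeriv.symm) x

lemma bilaplacianForm_heatSmoothing (x : V) :
    bilaplacianForm V E (iteratedFDeriv ℝ 4 (heatSmoothing k w) x) =
      heatSmoothing k (Δ (Δ w)) x :=
  clm_iteratedFDeriv_heatSmoothing (bilaplacianForm V E)
    (fun c A => by simp [bilaplacianForm, sum_apply, Finset.smul_sum]) _
    (fun y => (schwartz_laplacian_laplacian_apply w y).symm) x

lemma iteratedFDeriv_sub_heatSmoothing (n : ℕ) (x : V) :
    iteratedFDeriv ℝ n (⇑w - heatSmoothing k w) x =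
      iteratedFDeriv ℝ n w x - iteratedFDeriv ℝ n (heatSmoothing k w) x :=
  iteratedFDeriv_sub_apply (w.smooth n).contDiffAt (contDiff_heatSmoothing k w n).contDiffAt

lemma norm_bilaplacianForm_sub_heatSmoothing_le (hF : ∀ x, ‖(Δ (Δ w)) x‖ ≤ F) (x : V) :
    ‖bilaplacianForm V E (iteratedFDeriv ℝ 4 (⇑w - heatSmoothing k w) x)‖ ≤
      (1 + 3 * ∫ y, ‖k y‖) * F := by
  rw [iteratedFDeriv_sub_heatSmoothing, map_sub, bilaplacianForm_heatSmoothing,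
    ← schwartz_laplacian_laplacian_apply, add_mul, one_mul]
  exact norm_sub_le_of_le (hF x) (norm_heatSmoothing_le hF x)

lemma IsHeatKernel.norm_iteratedFDeriv_sub_heatSmoothing_le (hk : IsHeatKernel (1 / 4) k) {h : ℕ}
    (hh : h ≤ 3) (hF : ∀ x, ‖(Δ (Δ w)) x‖ ≤ F) (x : V) :
    ‖iteratedFDeriv ℝ h (⇑w - heatSmoothing k w) x‖ ≤
      96 * (∫ y, ‖iteratedFDeriv ℝ h k y‖) * F := by
  have hF0 : 0 ≤ F := (norm_nonneg _).trans (hF 0)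
  refine opNorm_le_of_norm_apply_le (by positivity) fun m hm => ?_
  rw [iteratedFDeriv_sub_heatSmoothing, sub_apply,
    iteratedFDeriv_heatSmoothing_apply, ← SchwartzMap.iteratedLineDerivOp_eq_iteratedFDeriv]
  convert! hk.norm_second_difference_iteratedLineDerivOp_le hh hF hm x using 2
  rw [heatSmoothing]
  abel

lemma IsHeatKernel.norm_iteratedFDeriv_five_heatSmoothing_le (hk : IsHeatKernel (1 / 4) k)
    (hF : ∀ x, ‖(Δ (Δ w)) x‖ ≤ F) (x : V) :
    ‖iteratedFDeriv ℝ 5 (heatSmoothing k w) x‖ ≤ 12 * (∫ y, ‖iteratedFDeriv ℝ 5 k y‖) * F := by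
  have hF0 : 0 ≤ F := (norm_nonneg _).trans (hF 0)
  refine opNorm_le_of_norm_apply_le (by positivity) fun m hm => ?_
  set I := ∫ y, ‖iteratedFDeriv ℝ 5 k y‖
  have haverage : ∀ r : ℝ, 1 ≤ r → ‖schwartzAverage k (∂^{m} w) r x‖ ≤ 4 * I * F := fun r hr =>
    (hk.norm_schwartzAverage_iteratedLineDerivOp_le (n := 0) hF hm x (by linarith)).trans
      (div_le_self (by positivity) (one_le_pow₀ hr))
  rw [iteratedFDeriv_heatSmoothing_apply]
  calc ‖heatSmoothing k (∂^{m} w) x‖ ≤ 2 * (4 * I * F) + 4 * I * F := by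
        refine norm_sub_le_of_le ?_ (haverage √2 (by rw [Real.one_le_sqrt]; norm_num))
        rw [norm_smul, Real.norm_ofNat]
        exact mul_le_mul_of_nonneg_left (haverage 1 le_rfl) zero_le_two
    _ = 12 * I * F := by ring

lemma IsHeatKernel.norm_iteratedFDeriv_four_heatSmoothing_sub_le (hk : IsHeatKernel (1 / 4) k)
    (hF : ∀ x, ‖(Δ (Δ w)) x‖ ≤ F) (x y : V) :
    ‖iteratedFDeriv ℝ 4 (heatSmoothing k w) x - iteratedFDeriv ℝ 4 (heatSmoothing k w) y‖ ≤
      12 * (∫ y, ‖iteratedFDeriv ℝ 5 k y‖) * F * ‖x - y‖ := by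
  refine convex_univ.norm_image_sub_le_of_norm_fderiv_le (𝕜 := ℝ) (fun z _ => ?_) (fun z _ => ?_)
    (Set.mem_univ y) (Set.mem_univ x)
  · exact (((contDiff_heatSmoothing k w 5).iteratedFDeriv_right (m := 1)
      (by norm_num)).differentiable one_ne_zero) z
  · rw [norm_fderiv_iteratedFDeriv]
    exact hk.norm_iteratedFDeriv_five_heatSmoothing_le hF z

lemma IsHeatKernel.norm_iteratedLineDerivOp_four_sub_heatSmoothing_le (hk : IsHeatKernel (1 / 4) k)
    (hF : ∀ x, ‖(Δ (Δ w)) x‖ ≤ F) {f : 𝓢(V, E)} {x : V} (hf : ⇑f =ᶠ[𝓝 x] ⇑w - heatSmoothing k w)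
    (hx : ‖x‖ ≤ 1) {m : Fin 4 → V} (hm : ∀ i, ‖m i‖ ≤ 1) :
    ‖(∂^{m} w) x - iteratedFDeriv ℝ 4 (heatSmoothing k w) 0 m‖ ≤
      ‖(∂^{m} f) x‖ + 12 * (∫ y, ‖iteratedFDeriv ℝ 5 k y‖) * F := by
  have hF0 : 0 ≤ F := (norm_nonneg _).trans (hF 0)
  set S := heatSmoothing k w
  have hfw : iteratedFDeriv ℝ 4 f x = iteratedFDeriv ℝ 4 w x - iteratedFDeriv ℝ 4 S x := by
    rw [(hf.iteratedFDeriv ℝ 4).eq_of_nhds, iteratedFDeriv_sub_heatSmoothing]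
  have hsplit : (∂^{m} w) x - iteratedFDeriv ℝ 4 S 0 m =
      (∂^{m} f) x + (iteratedFDeriv ℝ 4 S x - iteratedFDeriv ℝ 4 S 0) m := by
    simp only [SchwartzMap.iteratedLineDerivOp_eq_iteratedFDeriv, hfw, sub_apply]
    abel
  rw [hsplit]
  refine norm_add_le_of_le le_rfl ((ContinuousMultilinearMap.le_opNorm _ m).trans ?_)
  calc ‖iteratedFDeriv ℝ 4 S x - iteratedFDeriv ℝ 4 S 0‖ * ∏ i, ‖m i‖
      ≤ ‖iteratedFDeriv ℝ 4 S x - iteratedFDeriv ℝ 4 S 0‖ :=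
        mul_le_of_le_one_right (norm_nonneg _)
          (Finset.prod_le_one (fun i _ => norm_nonneg _) fun i _ => hm i)
    _ ≤ 12 * (∫ y, ‖iteratedFDeriv ℝ 5 k y‖) * F :=
        (hk.norm_iteratedFDeriv_four_heatSmoothing_sub_le hF x 0).trans
          (mul_le_of_le_one_right (by positivity) (by rwa [sub_zero]))

end HeatSmoothing

section LocalOscillation

lemma exists_schwartz_eq_of_norm_bilaplacianForm_le (V E : Type*) [NormedAddCommGroup V]
    [InnerProductSpace ℝ V] [FiniteDimensional ℝ V] [NormedAddCommGroup E] [NormedSpace ℝ E] :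
    ∃ C : ℝ, 0 ≤ C ∧ ∀ z : V → E, (∀ n : ℕ∞, ContDiff ℝ n z) → ∀ B G : ℝ,
      (∀ j < 4, ∀ x, ‖iteratedFDeriv ℝ j z x‖ ≤ B) →
      (∀ x, ‖bilaplacianForm V E (iteratedFDeriv ℝ 4 z x)‖ ≤ G) →
      ∃ f : 𝓢(V, E), (∀ x, ‖x‖ ≤ 1 → f x = z x) ∧ (∀ x, ‖(Δ (Δ f)) x‖ ≤ C * B + G) ∧
        ∀ x, 2 < ‖x‖ → (Δ (Δ f)) x = 0 := by
  set χ := unitCutoff V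
  obtain ⟨A, hA0, hA⟩ := exists_norm_iteratedFDeriv_le_of_hasCompactSupport (n := 4)
    (χ.contDiff (n := 4)) χ.hasCompactSupport
  refine ⟨‖bilaplacianForm V E‖ * (2 ^ 4 * A), by positivity, fun z hz B G hB hG => ?_⟩
  have hB0 : 0 ≤ B := (norm_nonneg _).trans (hB 0 (by norm_num) 0)
  have hsupp : HasCompactSupport (fun x => χ x • z x) := χ.hasCompactSupport.smul_right
  have hzero : ∀ x, 2 < ‖x‖ → (fun x => χ x • z x) =ᶠ[𝓝 x] fun _ => 0 := fun x hx => by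
    filter_upwards [continuous_norm.isOpen_preimage _ isOpen_Ioi |>.mem_nhds hx] with y hy
    rw [unitCutoff_eq_zero (le_of_lt hy), zero_smul]
  refine ⟨hsupp.toSchwartzMap (χ.contDiff.smul (hz ⊤)), fun x hx => ?_, fun x => ?_, fun x hx => ?_⟩
  · change χ x • z x = z x
    rw [unitCutoff_eq_one hx, one_smul]
  · rw [schwartz_laplacian_laplacian_apply]
    change ‖bilaplacianForm V E (iteratedFDeriv ℝ 4 (fun x => χ x • z x) x)‖ ≤ _
    rw [← sub_add_cancel (bilaplacianForm V E (iteratedFDeriv ℝ 4 (fun x => χ x • z x) x))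
      (χ x • bilaplacianForm V E (iteratedFDeriv ℝ 4 z x))]
    refine norm_add_le_of_le ((norm_bilaplacianForm_smul_le χ.contDiff (hz 4) hA0 hB0
      (fun j _ hj => hA j hj x) fun j hj => hB j hj x).trans_eq (by ring)) ?_
    rw [norm_smul, Real.norm_of_nonneg χ.nonneg]
    exact (mul_le_of_le_one_left (norm_nonneg _) χ.le_one).trans (hG x)
  · rw [schwartz_laplacian_laplacian_apply]
    change bilaplacianForm V E (iteratedFDeriv ℝ 4 (fun x => χ x • z x) x) = 0
    rw [((hzero x hx).iteratedFDeriv ℝ 4).eq_of_nhds, iteratedFDeriv_fun_zero, Pi.zero_apply,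
      map_zero]

variable (V H : Type*) [NormedAddCommGroup V] [InnerProductSpace ℝ V] [FiniteDimensional ℝ V]
  [MeasurableSpace V] [BorelSpace V] [NormedAddCommGroup H] [InnerProductSpace ℂ H]
  [CompleteSpace H]

lemma exists_norm_iteratedLineDerivOp_four_sub_le :
    ∃ C : ℝ, 0 ≤ C ∧ ∀ (w : 𝓢(V, H)) (F : ℝ), (∀ x, ‖(Δ (Δ w)) x‖ ≤ F) →
      ∃ f : 𝓢(V, H), (∀ x, ‖(Δ (Δ f)) x‖ ≤ C * F) ∧ (∀ x, 2 < ‖x‖ → (Δ (Δ f)) x = 0) ∧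
        ∀ m : Fin 4 → V, (∀ i, ‖m i‖ ≤ 1) →
          ∃ c : H, ∀ x ∈ ball (0 : V) 1, ‖(∂^{m} w) x - c‖ ≤ ‖(∂^{m} f) x‖ + C * F := by
  obtain ⟨k, hk⟩ := exists_isHeatKernel V (b := 1 / 4) (by norm_num)
  obtain ⟨C₀, hC₀, hlocal⟩ := exists_schwartz_eq_of_norm_bilaplacianForm_le V H
  set I : ℕ → ℝ := fun h => 96 * ∫ y, ‖iteratedFDeriv ℝ h k y‖
  have hI : ∀ h, 0 ≤ I h := fun h => by positivity
  set B := ∑ h ∈ Finset.range 6, I h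
  have hIB : ∀ h < 6, I h ≤ B := fun h hh =>
    Finset.single_le_sum (fun i _ => hI i) (Finset.mem_range.2 hh)
  have hB0 : 0 ≤ B := (hI 0).trans (hIB 0 (by norm_num))
  set K := 1 + 3 * ∫ y, ‖k y‖
  have hK0 : 0 ≤ K := by positivity
  refine ⟨C₀ * B + K + B, by positivity, fun w F hF => ?_⟩
  have hF0 : 0 ≤ F := (norm_nonneg _).trans (hF 0)
  set S := heatSmoothing k w
  obtain ⟨f, hfz, hflap, hfzero⟩ := hlocal (⇑w - S)
    (fun n => (w.smooth n).sub (contDiff_heatSmoothing k w n)) (B * F) (K * F)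
    (fun h hh x => (hk.norm_iteratedFDeriv_sub_heatSmoothing_le (by lia) hF x).trans
      (mul_le_mul_of_nonneg_right (hIB h (by lia)) hF0))
    (norm_bilaplacianForm_sub_heatSmoothing_le hF)
  refine ⟨f, fun x => (hflap x).trans (by nlinarith [mul_nonneg hB0 hF0]), hfzero, fun m hm =>
    ⟨iteratedFDeriv ℝ 4 S 0 m, fun x hx => ?_⟩⟩
  have hfS : ⇑f =ᶠ[𝓝 x] ⇑w - S := by
    filter_upwards [isOpen_ball.mem_nhds hx] with y hy
    exact hfz y (mem_ball_zero_iff.1 hy).le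
  refine (hk.norm_iteratedLineDerivOp_four_sub_heatSmoothing_le hF hfS
    (mem_ball_zero_iff.1 hx).le hm).trans ?_
  gcongr
  linarith [hIB 5 (by norm_num), hI 5, mul_nonneg hC₀ hB0]

lemma exists_setIntegral_norm_iteratedLineDerivOp_four_sub_sq_le :
    ∃ C : ℝ, 0 ≤ C ∧ ∀ (w : 𝓢(V, H)) (F : ℝ), (∀ x, ‖(Δ (Δ w)) x‖ ≤ F) → ∀ m : Fin 4 → V,
      (∀ i, ‖m i‖ ≤ 1) → ∃ c : H, ∫ x in ball 0 1, ‖(∂^{m} w) x - c‖ ^ 2 ≤ C * F ^ 2 := by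
  obtain ⟨C, _, hlocal⟩ := exists_norm_iteratedLineDerivOp_four_sub_le V H
  refine ⟨2 * (volume.real (closedBall (0 : V) 2) * C ^ 2) +
    volume.real (ball (0 : V) 1) * (2 * C ^ 2), by positivity, fun w F hF m hm => ?_⟩
  obtain ⟨f, hflap, hfzero, hfc⟩ := hlocal w F hF
  obtain ⟨c, hc⟩ := hfc m hm
  have hfint := integrable_norm_sq_schwartz (∂^{m} f)
  have hconst : IntegrableOn (fun _ : V => 2 * (C * F) ^ 2) (ball (0 : V) 1) :=
    integrableOn_const measure_ball_lt_top.ne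
  refine ⟨c, ?_⟩
  calc ∫ x in ball 0 1, ‖(∂^{m} w) x - c‖ ^ 2
      ≤ ∫ x in ball (0 : V) 1, (2 * ‖(∂^{m} f) x‖ ^ 2 + 2 * (C * F) ^ 2) := by
        refine setIntegral_mono_on ?_ ((hfint.const_mul 2).integrableOn.add hconst)
          measurableSet_ball fun x hx => ?_
        · have hcont : Continuous fun x => ‖(∂^{m} w) x - c‖ ^ 2 := by fun_prop
          exact (hcont.continuousOn.integrableOn_compact (isCompact_closedBall 0 1)).mono_set
            ball_subset_closedBall
        · rw [← mul_add]
          exact (pow_le_pow_left₀ (norm_nonneg _) (hc x hx) 2).trans (add_sq_le)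
    _ = 2 * (∫ x in ball (0 : V) 1, ‖(∂^{m} f) x‖ ^ 2) +
        volume.real (ball (0 : V) 1) * (2 * (C * F) ^ 2) := by
        rw [integral_add (hfint.const_mul 2).integrableOn hconst, integral_const_mul,
          setIntegral_const, smul_eq_mul]
    _ ≤ 2 * (volume.real (closedBall (0 : V) 2) * (C * F) ^ 2) +
        volume.real (ball (0 : V) 1) * (2 * (C * F) ^ 2) := by
        gcongr
        exact (setIntegral_le_integral hfint (.of_forall fun x => by positivity)).trans
          (integral_norm_sq_iteratedLineDerivOp_four_le_of_eq_zero hflap hfzero hm)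
    _ = _ := by ring

end LocalOscillation

section Bellman

/-- The Bellman function of the John–Nirenberg inequality: for a function with mean `a`, mean square
`q` and variance at most `1` on all pieces of a dyadic decomposition, `bellman a q` dominates the
mean of its exponential with rate `1 / 3`. -/
noncomputable def bellman (a q : ℝ) : ℝ :=
  exp (a / 3) * (1 + 2 * (q - a ^ 2) - (q - a ^ 2) ^ 2 / 2)

lemma bellman_profile_midpoint_le {v d δ : ℝ} (hd : |d| ≤ v) (hv : v + δ ^ 2 ≤ 1) :
    ((1 + δ / 3 + (δ / 3) ^ 2) * (1 + 2 * (v + d) - (v + d) ^ 2 / 2) +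
      (1 - δ / 3 + (δ / 3) ^ 2) * (1 + 2 * (v - d) - (v - d) ^ 2 / 2)) / 2 ≤
      1 + 2 * (v + δ ^ 2) - (v + δ ^ 2) ^ 2 / 2 := by
  have hv0 : 0 ≤ v := (abs_nonneg d).trans hd
  have hδ : 0 ≤ δ ^ 2 := sq_nonneg δ
  have hv1 : v ≤ 1 := by linarith
  have hsq : 0 ≤ (d - 2 / 3 * δ * (1 - v / 2)) ^ 2 := sq_nonneg _
  have h₁ : δ ^ 2 * (1 - v / 2) ^ 2 ≤ δ ^ 2 := mul_le_of_le_one_right hδ (by nlinarith)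
  have h₂ : 0 ≤ δ ^ 2 * d ^ 2 := by positivity
  have h₃ : 0 ≤ δ ^ 2 * v ^ 2 := by positivity
  have h₄ : δ ^ 2 * v ≤ δ ^ 2 := mul_le_of_le_one_right hδ hv1
  have h₅ : δ ^ 2 * (v + δ ^ 2) ≤ δ ^ 2 := mul_le_of_le_one_right hδ hv
  nlinarith [hsq, h₁, h₂, h₃, h₄, h₅]

lemma bellman_midpoint_le {a₁ a₂ q₁ q₂ : ℝ} (h₁ : 0 ≤ q₁ - a₁ ^ 2) (h₂ : 0 ≤ q₂ - a₂ ^ 2)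
    (h : (q₁ + q₂) / 2 - ((a₁ + a₂) / 2) ^ 2 ≤ 1) :
    (bellman a₁ q₁ + bellman a₂ q₂) / 2 ≤ bellman ((a₁ + a₂) / 2) ((q₁ + q₂) / 2) := by
  obtain ⟨m, δ, rfl, rfl⟩ : ∃ m δ, a₁ = m + δ ∧ a₂ = m - δ :=
    ⟨(a₁ + a₂) / 2, (a₁ - a₂) / 2, by ring, by ring⟩
  obtain ⟨v, d, rfl, rfl⟩ : ∃ v d, q₁ = v + d + (m + δ) ^ 2 ∧ q₂ = v - d + (m - δ) ^ 2 :=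
    ⟨((q₁ - (m + δ) ^ 2) + (q₂ - (m - δ) ^ 2)) / 2,
      ((q₁ - (m + δ) ^ 2) - (q₂ - (m - δ) ^ 2)) / 2, by ring, by ring⟩
  have hd : |d| ≤ v := abs_le.2 ⟨by linarith, by linarith⟩
  have hv : v + δ ^ 2 ≤ 1 := by nlinarith
  have hv1 : v ≤ 1 := by nlinarith [sq_nonneg δ]
  have hδ : |δ| ≤ 1 := by
    rw [← sq_le_one_iff_abs_le_one]
    linarith [(abs_nonneg d).trans hd]
  have exp_le : ∀ t : ℝ, |t| ≤ 1 → exp (t / 3) ≤ 1 + t / 3 + (t / 3) ^ 2 := fun t ht => by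
    have := (abs_le.1 (Real.abs_exp_sub_one_sub_id_le (x := t / 3)
      (by rw [abs_div, abs_of_pos (three_pos : (0 : ℝ) < 3)]; linarith))).2
    linarith
  have profile_nonneg : ∀ t : ℝ, 0 ≤ t → t ≤ 2 → 0 ≤ 1 + 2 * t - t ^ 2 / 2 := fun t h0 h2 => by
    nlinarith
  have hplus := mul_le_mul_of_nonneg_right (exp_le δ hδ)
    (profile_nonneg (v + d) (by linarith) (by linarith [abs_le.1 hd]))
  have hminus := mul_le_mul_of_nonneg_right (exp_le (-δ) (by rwa [abs_neg]))
    (profile_nonneg (v - d) (by linarith) (by linarith [abs_le.1 hd]))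
  have hprofile := bellman_profile_midpoint_le hd hv
  calc (bellman (m + δ) (v + d + (m + δ) ^ 2) + bellman (m - δ) (v - d + (m - δ) ^ 2)) / 2
      = exp (m / 3) * ((exp (δ / 3) * (1 + 2 * (v + d) - (v + d) ^ 2 / 2) +
          exp (-δ / 3) * (1 + 2 * (v - d) - (v - d) ^ 2 / 2)) / 2) := by
        simp only [bellman, add_sub_cancel_right, sub_eq_add_neg m, add_div, Real.exp_add]
        ring
    _ ≤ exp (m / 3) * (1 + 2 * (v + δ ^ 2) - (v + δ ^ 2) ^ 2 / 2) := by
        refine mul_le_mul_of_nonneg_left ?_ (exp_pos _).le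
        linarith
    _ = bellman ((m + δ + (m - δ)) / 2)
          ((v + d + (m + δ) ^ 2 + (v - d + (m - δ) ^ 2)) / 2) := by
        rw [bellman]
        ring_nf

lemma exp_div_three_le_bellman {a q : ℝ} (h₀ : 0 ≤ q - a ^ 2) (h₁ : q - a ^ 2 ≤ 1) :
    exp (a / 3) ≤ bellman a q :=
  le_mul_of_one_le_right (exp_pos _).le (by nlinarith)

lemma bellman_le {a q : ℝ} (h : q - a ^ 2 ≤ 1) :
    bellman a q ≤ 5 / 2 * exp (a / 3) := by
  rw [bellman, mul_comm]
  gcongr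
  nlinarith

end Bellman

section HalvingTree

variable {α : Type*} [MeasurableSpace α] {μ : Measure α} {G : α → ℝ} {B ω : ℝ} {s t : Set α}

/-- The set `s` has positive finite measure, and on it `G` has mean square distance at most `1`
from some constant. -/
structure HasUnitOscillation (μ : Measure α) (G : α → ℝ) (s : Set α) : Prop where
  measurableSet : MeasurableSet s
  measure_ne_zero : μ s ≠ 0
  measure_ne_top : μ s ≠ ⊤
  exists_setIntegral_sub_sq_le : ∃ d : ℝ, ∫ x in s, (G x - d) ^ 2 ∂μ ≤ μ.real s

/-- The set can be cut into pieces on which `G` oscillates by at most `ω`, by successive bisections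
into parts of equal measure, in such a way that `G` has unit oscillation on every set that occurs.
-/
inductive HalvingTree (μ : Measure α) (G : α → ℝ) (ω : ℝ) : Set α → Prop
  | leaf {s : Set α} (hs : HasUnitOscillation μ G s) (hω : ∀ x ∈ s, ∀ y ∈ s, G x ≤ G y + ω) :
      HalvingTree μ G ω s
  | node {s t : Set α} (hst : HasUnitOscillation μ G (s ∪ t)) (hdisj : Disjoint s t)
      (hμ : μ s = μ t) (hs : HalvingTree μ G ω s) (ht : HalvingTree μ G ω t) :
      HalvingTree μ G ω (s ∪ t)

lemma HalvingTree.hasUnitOscillation (h : HalvingTree μ G ω s) : HasUnitOscillation μ G s := by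
  cases h <;> assumption

lemma integrableOn_comp_of_abs_le (hG : Measurable G) (hB : ∀ x, |G x| ≤ B) (hs : μ s ≠ ⊤)
    {φ : ℝ → ℝ} (hφ : Continuous φ) : IntegrableOn (fun x => φ (G x)) s μ := by
  obtain ⟨C, hC⟩ :=
    isCompact_Icc.exists_bound_of_continuousOn (hφ.continuousOn (s := Set.Icc (-B) B))
  exact Measure.integrableOn_of_bounded hs (hφ.measurable.comp hG).aestronglyMeasurable
    (.of_forall fun x => hC _ (abs_le.1 (hB x)))

lemma setAverage_union_of_measure_eq {f : α → ℝ} (hdisj : Disjoint s t) (ht : MeasurableSet t)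
    (hμ : μ s = μ t) (hs0 : μ s ≠ 0) (hs : μ s ≠ ⊤) (hfs : IntegrableOn f s μ)
    (hft : IntegrableOn f t μ) :
    ⨍ x in s ∪ t, f x ∂μ = ((⨍ x in s, f x ∂μ) + ⨍ x in t, f x ∂μ) / 2 := by
  have hr : μ.real s ≠ 0 := (ENNReal.toReal_pos hs0 hs).ne'
  have hr' : μ.real t = μ.real s := by rw [measureReal_def, measureReal_def, hμ]
  rw [average_union hdisj.aedisjoint ht.nullMeasurableSet hs (hμ ▸ hs) hfs hft, hr']
  simp only [smul_eq_mul]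
  field_simp
  ring

lemma setIntegral_sub_const_sq (hG : Measurable G) (hB : ∀ x, |G x| ≤ B) (hs0 : μ s ≠ 0)
    (hs : μ s ≠ ⊤) (d : ℝ) :
    ∫ x in s, (G x - d) ^ 2 ∂μ = μ.real s *
      ((⨍ x in s, G x ^ 2 ∂μ) - (⨍ x in s, G x ∂μ) ^ 2 + ((⨍ x in s, G x ∂μ) - d) ^ 2) := by
  have hr : μ.real s ≠ 0 := (ENNReal.toReal_pos hs0 hs).ne'
  have hint : ∀ {φ : ℝ → ℝ}, Continuous φ → IntegrableOn (fun x => φ (G x)) s μ :=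
    integrableOn_comp_of_abs_le hG hB hs
  have hexpand : ∫ x in s, (G x - d) ^ 2 ∂μ =
      ∫ x in s, (G x ^ 2 - 2 * d * G x + d ^ 2) ∂μ := by
    congr 1 with x
    ring
  rw [hexpand, integral_add (hint (φ := fun t => t ^ 2 - 2 * d * t) (by fun_prop))
      (integrableOn_const hs),
    integral_sub (hint (φ := fun t => t ^ 2) (by fun_prop))
      (hint (φ := fun t => 2 * d * t) (by fun_prop)),
    integral_const_mul, setIntegral_const, setAverage_eq, setAverage_eq]
  simp only [smul_eq_mul]
  field_simp
  ring

lemma HasUnitOscillation.variance_nonneg (h : HasUnitOscillation μ G s) (hG : Measurable G)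
    (hB : ∀ x, |G x| ≤ B) : 0 ≤ (⨍ x in s, G x ^ 2 ∂μ) - (⨍ x in s, G x ∂μ) ^ 2 := by
  have hpos : 0 < μ.real s := ENNReal.toReal_pos h.measure_ne_zero h.measure_ne_top
  have hsq : 0 ≤ ∫ x in s, (G x - ⨍ y in s, G y ∂μ) ^ 2 ∂μ := integral_nonneg fun x => sq_nonneg _
  rw [setIntegral_sub_const_sq hG hB h.measure_ne_zero h.measure_ne_top, sub_self] at hsq
  simpa using nonneg_of_mul_nonneg_right hsq hpos

lemma HasUnitOscillation.variance_le_one (h : HasUnitOscillation μ G s) (hG : Measurable G)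
    (hB : ∀ x, |G x| ≤ B) : (⨍ x in s, G x ^ 2 ∂μ) - (⨍ x in s, G x ∂μ) ^ 2 ≤ 1 := by
  have hpos : 0 < μ.real s := ENNReal.toReal_pos h.measure_ne_zero h.measure_ne_top
  obtain ⟨d, hd⟩ := h.exists_setIntegral_sub_sq_le
  rw [setIntegral_sub_const_sq hG hB h.measure_ne_zero h.measure_ne_top] at hd
  linarith [le_of_mul_le_mul_left (hd.trans_eq (mul_one _).symm) hpos,
    sq_nonneg ((⨍ x in s, G x ∂μ) - d)]

lemma le_setAverage_add (hG : Measurable G) (hB : ∀ x, |G x| ≤ B)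
    (hs : HasUnitOscillation μ G s) (hω : ∀ x ∈ s, ∀ y ∈ s, G x ≤ G y + ω) {x : α} (hx : x ∈ s) :
    G x ≤ (⨍ y in s, G y ∂μ) + ω := by
  have hpos : 0 < μ.real s := ENNReal.toReal_pos hs.measure_ne_zero hs.measure_ne_top
  have hle : ∫ _ in s, (G x - ω) ∂μ ≤ ∫ y in s, G y ∂μ :=
    setIntegral_mono_on (integrableOn_const hs.measure_ne_top)
      (integrableOn_comp_of_abs_le hG hB hs.measure_ne_top continuous_id) hs.measurableSet
      fun _ hy => by linarith [hω x hx _ hy]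
  rw [← sub_le_iff_le_add, setAverage_eq, smul_eq_mul, le_inv_mul_iff₀ hpos]
  rwa [setIntegral_const, smul_eq_mul] at hle

lemma setAverage_exp_le_of_le_add (hG : Measurable G) (hB : ∀ x, |G x| ≤ B)
    (hs : HasUnitOscillation μ G s) (hω : ∀ x ∈ s, ∀ y ∈ s, G x ≤ G y + ω) :
    ⨍ x in s, exp (G x / 3) ∂μ ≤ exp ((⨍ x in s, G x ∂μ) / 3) * exp (ω / 3) := by
  have hpos : 0 < μ.real s := ENNReal.toReal_pos hs.measure_ne_zero hs.measure_ne_top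
  rw [setAverage_eq, smul_eq_mul, inv_mul_le_iff₀ hpos, ← Real.exp_add, ← add_div]
  calc ∫ x in s, exp (G x / 3) ∂μ ≤ ∫ x in s, exp (((⨍ x in s, G x ∂μ) + ω) / 3) ∂μ := by
        refine setIntegral_mono_on (integrableOn_comp_of_abs_le hG hB hs.measure_ne_top
          (φ := fun t => exp (t / 3)) (by fun_prop)) (integrableOn_const hs.measure_ne_top)
          hs.measurableSet fun x hx => ?_
        gcongr
        exact le_setAverage_add hG hB hs hω hx
    _ = μ.real s * exp (((⨍ x in s, G x ∂μ) + ω) / 3) := by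
        rw [setIntegral_const, smul_eq_mul]

lemma HalvingTree.setAverage_exp_le_bellman (h : HalvingTree μ G ω s) (hG : Measurable G)
    (hB : ∀ x, |G x| ≤ B) :
    ⨍ x in s, exp (G x / 3) ∂μ ≤
      bellman (⨍ x in s, G x ∂μ) (⨍ x in s, G x ^ 2 ∂μ) * exp (ω / 3) := by
  induction h with
  | leaf hs hω =>
    refine (setAverage_exp_le_of_le_add hG hB hs hω).trans ?_
    gcongr
    exact exp_div_three_le_bellman (hs.variance_nonneg hG hB) (hs.variance_le_one hG hB)
  | @node s t hst hdisj hμ hs ht ihs iht =>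
    have hs' := hs.hasUnitOscillation
    have ht' := ht.hasUnitOscillation
    have hunion : ∀ {φ : ℝ → ℝ}, Continuous φ → ⨍ x in s ∪ t, φ (G x) ∂μ =
        ((⨍ x in s, φ (G x) ∂μ) + ⨍ x in t, φ (G x) ∂μ) / 2 := fun hφ =>
      setAverage_union_of_measure_eq hdisj ht'.measurableSet hμ hs'.measure_ne_zero
        hs'.measure_ne_top (integrableOn_comp_of_abs_le hG hB hs'.measure_ne_top hφ)
        (integrableOn_comp_of_abs_le hG hB ht'.measure_ne_top hφ)
    have hvar := hst.variance_le_one hG hB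
    rw [hunion (φ := fun t => t) (by fun_prop), hunion (φ := fun t => t ^ 2) (by fun_prop)]
      at hvar ⊢
    have hmid := bellman_midpoint_le (hs'.variance_nonneg hG hB) (ht'.variance_nonneg hG hB) hvar
    rw [hunion (φ := fun t => exp (t / 3)) (by fun_prop)]
    linarith [mul_le_mul_of_nonneg_right hmid (exp_pos (ω / 3)).le]

lemma HalvingTree.setAverage_exp_le (h : HalvingTree μ G ω s) (hG : Measurable G)
    (hB : ∀ x, |G x| ≤ B) (hω : ω ≤ 1) :
    ⨍ x in s, exp (G x / 3) ∂μ ≤ 8 * exp ((⨍ x in s, G x ∂μ) / 3) := by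
  have hs := h.hasUnitOscillation
  have hexp : exp (ω / 3) ≤ 3 :=
    (Real.exp_le_exp.2 (by linarith : ω / 3 ≤ 1)).trans (by linarith [Real.exp_one_lt_d9])
  calc ⨍ x in s, exp (G x / 3) ∂μ
      ≤ bellman (⨍ x in s, G x ∂μ) (⨍ x in s, G x ^ 2 ∂μ) * exp (ω / 3) :=
        h.setAverage_exp_le_bellman hG hB
    _ ≤ 5 / 2 * exp ((⨍ x in s, G x ∂μ) / 3) * 3 := by
        gcongr
        exact bellman_le (hs.variance_le_one hG hB)
    _ ≤ 8 * exp ((⨍ x in s, G x ∂μ) / 3) := by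
        linarith [exp_pos ((⨍ x in s, G x ∂μ) / 3)]

end HalvingTree

section Boxes

variable {ι : Type*}

/-- The half-open box in Euclidean space with lower corner `c` and side lengths `l`. -/
def box (c l : ι → ℝ) : Set (EuclideanSpace ℝ ι) :=
  {x | ∀ i, c i ≤ x i ∧ x i < c i + l i}

/-- Positive side lengths whose ratios are at most `2`; this class is stable under halving the
longest side. -/
structure IsBalanced (l : ι → ℝ) : Prop where
  pos : ∀ i, 0 < l i
  le_two_mul : ∀ i j, l i ≤ 2 * l j

lemma IsBalanced.update_half [DecidableEq ι] {l : ι → ℝ} (hl : IsBalanced l) {i₀ : ι}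
    (hi₀ : ∀ i, l i ≤ l i₀) : IsBalanced (Function.update l i₀ (l i₀ / 2)) where
  pos i := by
    have := hl.pos i
    rcases eq_or_ne i i₀ with rfl | hi <;> simp [*]
  le_two_mul i j := by
    have := hl.pos i₀
    rcases eq_or_ne i i₀ with hi | hi <;> rcases eq_or_ne j i₀ with hj | hj
    · rw [hi, hj, Function.update_self]
      linarith
    · rw [hi, Function.update_self, Function.update_of_ne hj]
      linarith [hl.le_two_mul i₀ j]
    · rw [hj, Function.update_self, Function.update_of_ne hi]
      linarith [hi₀ i]
    · rw [Function.update_of_ne hi, Function.update_of_ne hj]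
      exact hl.le_two_mul i j

lemma mem_box_update_iff [DecidableEq ι] {c l : ι → ℝ} {i₀ : ι} {a b : ℝ}
    {x : EuclideanSpace ℝ ι} : x ∈ box (Function.update c i₀ a) (Function.update l i₀ b) ↔
      (a ≤ x i₀ ∧ x i₀ < a + b) ∧ ∀ i ≠ i₀, c i ≤ x i ∧ x i < c i + l i := by
  refine ⟨fun h => ⟨by simpa using h i₀, fun i hi => by simpa [hi] using h i⟩, fun h i => ?_⟩
  rcases eq_or_ne i i₀ with rfl | hi
  · simpa using h.1
  · simpa [hi] using h.2 i hi

lemma box_eq_union [DecidableEq ι] (c : ι → ℝ) {l : ι → ℝ} (hl : IsBalanced l) (i₀ : ι) :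
    box c l = box c (Function.update l i₀ (l i₀ / 2)) ∪
      box (Function.update c i₀ (c i₀ + l i₀ / 2)) (Function.update l i₀ (l i₀ / 2)) := by
  have hpos := hl.pos i₀
  ext x
  nth_rw 1 2 [← Function.update_eq_self i₀ c]
  nth_rw 1 [← Function.update_eq_self i₀ l]
  rw [Set.mem_union, mem_box_update_iff, mem_box_update_iff, mem_box_update_iff, ← or_and_right]
  refine and_congr_left fun _ => ⟨fun h => ?_, ?_⟩
  · rcases lt_or_ge (x i₀) (c i₀ + l i₀ / 2) with hx | hx
    · exact .inl ⟨h.1, hx⟩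
    · exact .inr ⟨hx, by linarith⟩
  · rintro (h | h) <;> constructor <;> linarith

lemma disjoint_box_halves [DecidableEq ι] (c l : ι → ℝ) (i₀ : ι) :
    Disjoint (box c (Function.update l i₀ (l i₀ / 2)))
      (box (Function.update c i₀ (c i₀ + l i₀ / 2)) (Function.update l i₀ (l i₀ / 2))) := by
  refine Set.disjoint_left.2 fun x hlow hhigh => ?_
  have h₁ := (hlow i₀).2
  have h₂ := (hhigh i₀).1
  simp only [Function.update_self] at h₁ h₂
  linarith

lemma box_eq_preimage (c l : ι → ℝ) :
    box c l = WithLp.ofLp ⁻¹' Set.univ.pi fun i => Set.Ico (c i) (c i + l i) := by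
  ext x
  simp [box, Set.mem_pi]

lemma measurableSet_box [Countable ι] (c l : ι → ℝ) : MeasurableSet (box c l) := by
  rw [box_eq_preimage]
  exact WithLp.measurable_ofLp 2 (ι → ℝ) (MeasurableSet.univ_pi fun i => measurableSet_Ico)

variable [Fintype ι]

lemma volume_box (c l : ι → ℝ) : volume (box c l) = ∏ i, ENNReal.ofReal (l i) := by
  rw [box_eq_preimage, (PiLp.volume_preserving_ofLp ι).measure_preimage
    (MeasurableSet.univ_pi fun i => measurableSet_Ico).nullMeasurableSet, volume_pi_pi]
  simp

lemma volume_box_ne_top (c l : ι → ℝ) : volume (box c l) ≠ ⊤ := by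
  rw [volume_box]
  exact ENNReal.prod_ne_top fun i _ => ENNReal.ofReal_ne_top

lemma volume_box_ne_zero (c : ι → ℝ) {l : ι → ℝ} (hl : IsBalanced l) : volume (box c l) ≠ 0 := by
  rw [volume_box, Finset.prod_ne_zero_iff]
  intro i _
  simpa using hl.pos i

lemma volume_real_box (c : ι → ℝ) {l : ι → ℝ} (hl : IsBalanced l) :
    volume.real (box c l) = ∏ i, l i := by
  rw [measureReal_def, volume_box, ENNReal.toReal_prod]
  exact Finset.prod_congr rfl fun i _ => ENNReal.toReal_ofReal (hl.pos i).le

lemma norm_sub_le_of_mem_box {c l : ι → ℝ} {m : ℝ} (hm : ∀ i, l i ≤ m) {x y : EuclideanSpace ℝ ι}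
    (hx : x ∈ box c l) (hy : y ∈ box c l) : ‖x - y‖ ≤ Fintype.card ι * m := by
  classical
  calc ‖x - y‖ = ‖∑ i, EuclideanSpace.single i ((x - y) i)‖ := by
        congr 1
        ext j
        simp [Pi.single_apply]
    _ ≤ ∑ i, ‖EuclideanSpace.single i ((x - y) i)‖ := norm_sum_le _ _
    _ ≤ ∑ _i : ι, m := by
        refine Finset.sum_le_sum fun i _ => ?_
        rw [PiLp.norm_single, PiLp.sub_apply, Real.norm_eq_abs, abs_le]
        constructor <;> linarith [hm i, hx i, hy i]
    _ = Fintype.card ι * m := by simp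

end Boxes

section BoxJohnNirenberg

variable {ι : Type*} [Fintype ι] {G : EuclideanSpace ℝ ι → ℝ} {B δ : ℝ} {K : ℝ≥0} {c l : ι → ℝ}

/-- On every balanced box `G` has mean square distance at most `1` from some constant: the form of
bounded mean oscillation used here. -/
def HasUnitBoxOscillation (G : EuclideanSpace ℝ ι → ℝ) : Prop :=
  ∀ c l : ι → ℝ, IsBalanced l →
    ∃ d : ℝ, ∫ x in box c l, (G x - d) ^ 2 ≤ volume.real (box c l)

lemma HasUnitBoxOscillation.neg (hosc : HasUnitBoxOscillation G) :
    HasUnitBoxOscillation fun x => -G x := fun c l hl => by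
  obtain ⟨d, hd⟩ := hosc c l hl
  refine ⟨-d, le_of_eq_of_le ?_ hd⟩
  congr 1 with x
  ring

lemma HasUnitBoxOscillation.hasUnitOscillation (hosc : HasUnitBoxOscillation G) (c : ι → ℝ)
    (hl : IsBalanced l) : HasUnitOscillation volume G (box c l) :=
  ⟨measurableSet_box c l, volume_box_ne_zero c hl, volume_box_ne_top c l, hosc c l hl⟩

variable [Nonempty ι]

lemma le_add_of_mem_box (hK : LipschitzWith K G) (hl : IsBalanced l)
    (hprod : ∏ i, l i ≤ δ ^ Fintype.card ι) (hδ : 0 < δ) :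
    ∀ x ∈ box c l, ∀ y ∈ box c l, G x ≤ G y + K * (Fintype.card ι * (2 * δ)) := by
  obtain ⟨j, hj⟩ : ∃ j, l j ≤ δ := by
    by_contra! hlt
    have hlt' := Finset.prod_lt_prod_of_nonempty (f := fun _ => δ) (fun i _ => hδ)
      (fun i _ => hlt i) Finset.univ_nonempty
    simp only [Finset.prod_const, Finset.card_univ] at hlt'
    exact hprod.not_gt hlt'
  intro x hx y hy
  have hdist := norm_sub_le_of_mem_box (m := 2 * δ)
    (fun i => (hl.le_two_mul i j).trans (by linarith)) hx hy
  have hG := (le_abs_self _).trans (hK.dist_le_mul x y)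
  rw [dist_eq_norm] at hG
  linarith [mul_le_mul_of_nonneg_left hdist K.coe_nonneg]

lemma HasUnitBoxOscillation.halvingTree (hosc : HasUnitBoxOscillation G) (hK : LipschitzWith K G)
    (hδ : 0 < δ) (n : ℕ) : ∀ c l : ι → ℝ, IsBalanced l → ∏ i, l i ≤ 2 ^ n * δ ^ Fintype.card ι →
      HalvingTree volume G (K * (Fintype.card ι * (2 * δ))) (box c l) := by
  classical
  induction n with
  | zero =>
    intro c l hl hprod
    exact .leaf (hosc.hasUnitOscillation c hl)
      (le_add_of_mem_box hK hl (by simpa using hprod) hδ)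
  | succ n ih =>
    intro c l hl hprod
    obtain ⟨i₀, hi₀⟩ := Finite.exists_max l
    have hl' := hl.update_half hi₀
    have hprod' : ∏ i, Function.update l i₀ (l i₀ / 2) i ≤ 2 ^ n * δ ^ Fintype.card ι := by
      have hhalf : ∏ i, Function.update l i₀ (l i₀ / 2) i = (∏ i, l i) / 2 := by
        rw [Finset.prod_update_of_mem (Finset.mem_univ i₀),
          ← Finset.mul_prod_erase Finset.univ l (Finset.mem_univ i₀),
          Finset.sdiff_singleton_eq_erase]
        ring
      rw [hhalf]
      rw [pow_succ] at hprod
      linarith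
    have hunit := hosc.hasUnitOscillation c hl
    rw [box_eq_union c hl i₀] at hunit ⊢
    exact .node hunit (disjoint_box_halves c l i₀) (by rw [volume_box, volume_box])
      (ih _ _ hl' hprod') (ih _ _ hl' hprod')

lemma HasUnitBoxOscillation.setAverage_exp_le (hosc : HasUnitBoxOscillation G)
    (hK : LipschitzWith K G) (hB : ∀ x, |G x| ≤ B) (c : ι → ℝ) (hl : IsBalanced l) :
    ⨍ x in box c l, exp (G x / 3) ≤ 8 * exp ((⨍ x in box c l, G x) / 3) := by
  have : (0 : ℝ) < Fintype.card ι := by exact_mod_cast Fintype.card_pos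
  set δ : ℝ := 1 / ((K + 1) * (2 * Fintype.card ι)) with hδ
  have hδ0 : 0 < δ := by positivity
  obtain ⟨n, hn⟩ := pow_unbounded_of_one_lt ((∏ i, l i) / δ ^ Fintype.card ι) one_lt_two
  rw [div_lt_iff₀ (by positivity)] at hn
  refine (hosc.halvingTree hK hδ0 n c l hl hn.le).setAverage_exp_le hK.continuous.measurable
    hB ?_
  have hω : K * (Fintype.card ι * (2 * δ)) = K / (K + 1) := by
    rw [hδ]
    field_simp
  rw [hω]
  exact div_le_one_of_le₀ (by simp) (by positivity)

lemma HasUnitBoxOscillation.setIntegral_exp_abs_sub_setAverage_le (hosc : HasUnitBoxOscillation G)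
    (hK : LipschitzWith K G) (hB : ∀ x, |G x| ≤ B) (c : ι → ℝ) (hl : IsBalanced l) :
    ∫ x in box c l, exp (|G x - ⨍ y in box c l, G y| / 3) ≤ 16 * volume.real (box c l) := by
  have hvol : 0 < volume.real (box c l) :=
    ENNReal.toReal_pos (volume_box_ne_zero c hl) (volume_box_ne_top c l)
  have hint : ∀ {φ : ℝ → ℝ}, Continuous φ → IntegrableOn (fun x => φ (G x)) (box c l) :=
    integrableOn_comp_of_abs_le hK.continuous.measurable hB (volume_box_ne_top c l)
  set m := ⨍ y in box c l, G y with hm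
  have hplus := hosc.setAverage_exp_le hK hB c hl
  have hminus := hosc.neg.setAverage_exp_le hK.neg (B := B) (by simpa using hB) c hl
  have hneg : ⨍ x in box c l, -G x = -m := by rw [average_neg]
  rw [hneg, setAverage_eq, smul_eq_mul, inv_mul_le_iff₀ hvol] at hminus
  rw [← hm, setAverage_eq, smul_eq_mul, inv_mul_le_iff₀ hvol] at hplus
  have hintPlus := (hint (φ := fun t => exp (t / 3)) (by fun_prop)).mul_const (exp (-m / 3))
  have hintMinus := (hint (φ := fun t => exp (-t / 3)) (by fun_prop)).mul_const (exp (m / 3))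
  calc ∫ x in box c l, exp (|G x - m| / 3)
      ≤ ∫ x in box c l, (exp (G x / 3) * exp (-m / 3) + exp (-G x / 3) * exp (m / 3)) := by
        refine setIntegral_mono (hint (φ := fun t => exp (|t - m| / 3)) (by fun_prop))
          (hintPlus.add hintMinus) fun x => ?_
        rw [← Real.exp_add, ← Real.exp_add, ← add_div, ← add_div]
        rcases abs_choice (G x - m) with h | h
        · rw [h, sub_eq_add_neg]
          exact le_add_of_nonneg_right (exp_pos _).le
        · rw [h, neg_sub', sub_neg_eq_add]
          exact le_add_of_nonneg_left (exp_pos _).le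
    _ = (∫ x in box c l, exp (G x / 3)) * exp (-m / 3) +
          (∫ x in box c l, exp (-G x / 3)) * exp (m / 3) := by
        rw [integral_add hintPlus hintMinus, integral_mul_const, integral_mul_const]
    _ ≤ volume.real (box c l) * (8 * exp (m / 3)) * exp (-m / 3) +
          volume.real (box c l) * (8 * exp (-m / 3)) * exp (m / 3) := by gcongr
    _ = 16 * volume.real (box c l) * (exp (m / 3) * exp (-m / 3)) := by ring
    _ = 16 * volume.real (box c l) := by
        rw [← Real.exp_add, neg_div, add_neg_cancel, Real.exp_zero, mul_one]

end BoxJohnNirenberg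

section AffineRescaling

variable {V : Type*} [NormedAddCommGroup V] [NormedSpace ℝ V] {c : V} {l : ℝ}

lemma measurableEmbedding_const_add_smul [MeasurableSpace V] [BorelSpace V] (c : V) (hl : l ≠ 0) :
    MeasurableEmbedding fun y => c + l • y :=
  ((Homeomorph.addLeft c).toMeasurableEquiv.measurableEmbedding).comp
    (Homeomorph.smulOfNeZero l hl).toMeasurableEquiv.measurableEmbedding

lemma preimage_const_add_smul_ball (c : V) (hl : 0 < l) :
    (fun y => c + l • y) ⁻¹' ball c l = ball 0 1 := by
  ext y
  simp only [Set.mem_preimage, mem_ball, dist_self_add_left, norm_smul, Real.norm_eq_abs,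
    abs_of_pos hl, dist_zero_right]
  exact mul_lt_iff_lt_one_right hl

lemma exists_schwartzMap_eq_comp_affine {E : Type*} [NormedAddCommGroup E] [NormedSpace ℂ E]
    (w : 𝓢(V, E)) (c : V) (hl : l ≠ 0) : ∃ v : 𝓢(V, E), ∀ y, v y = w (c + l • y) := by
  refine ⟨SchwartzMap.compCLMOfContinuousLinearEquiv ℂ
    (ContinuousLinearEquiv.smulLeft (Units.mk0 l hl)) (SchwartzMap.compSubConstCLM ℂ (-c) w),
    fun y => ?_⟩
  simp [Units.smul_def, add_comm]

variable [FiniteDimensional ℝ V] [MeasurableSpace V] [BorelSpace V] (μ : Measure V)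
  [μ.IsAddHaarMeasure]

lemma map_const_add_smul_restrict_ball (c : V) (hl : 0 < l) :
    (μ.restrict (ball 0 1)).map (fun y => c + l • y) =
      ENNReal.ofReal (l ^ Module.finrank ℝ V)⁻¹ • μ.restrict (ball c l) := by
  have hmap : μ.map (fun y => c + l • y) = ENNReal.ofReal (l ^ Module.finrank ℝ V)⁻¹ • μ := by
    change μ.map ((fun z => c + z) ∘ fun y => l • y) = _
    rw [← Measure.map_map (by fun_prop) (by fun_prop), Measure.map_addHaar_smul _ hl.ne',
      Measure.map_smul, map_add_left_eq_self, abs_of_pos (by positivity)]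
  rw [← preimage_const_add_smul_ball c hl,
    ← (measurableEmbedding_const_add_smul c hl.ne').restrict_map, hmap, Measure.restrict_smul]

lemma setIntegral_ball_comp_affine (g : V → ℝ) (c : V) (hl : 0 < l) :
    ∫ y in ball 0 1, g (c + l • y) ∂μ = (l ^ Module.finrank ℝ V)⁻¹ * ∫ x in ball c l, g x ∂μ := by
  rw [← (measurableEmbedding_const_add_smul c hl.ne').integral_map,
    map_const_add_smul_restrict_ball μ c hl, integral_smul_measure,
    ENNReal.toReal_ofReal (by positivity), smul_eq_mul]

lemma eLpNorm_restrict_ball_eq (g : V → ℝ) (c : V) (hl : 0 < l) {p : ℝ} (hp : 0 < p) :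
    eLpNorm g (ENNReal.ofReal p) (μ.restrict (ball c l)) =
      ENNReal.ofReal (l ^ (Module.finrank ℝ V / p)) *
        eLpNorm (fun y => g (c + l • y)) (ENNReal.ofReal p) (μ.restrict (ball 0 1)) := by
  have hcomp : eLpNorm (fun y => g (c + l • y)) (ENNReal.ofReal p) (μ.restrict (ball 0 1)) =
      ENNReal.ofReal (((l ^ Module.finrank ℝ V)⁻¹) ^ p⁻¹) *
        eLpNorm g (ENNReal.ofReal p) (μ.restrict (ball c l)) := by
    change eLpNorm (g ∘ fun y => c + l • y) _ _ = _
    rw [← (measurableEmbedding_const_add_smul c hl.ne').eLpNorm_map_measure,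
      map_const_add_smul_restrict_ball μ c hl,
      eLpNorm_smul_measure_of_ne_top ENNReal.ofReal_ne_top, smul_eq_mul, one_div,
      ENNReal.toReal_inv, ENNReal.toReal_ofReal hp.le,
      ENNReal.ofReal_rpow_of_nonneg (by positivity) (by positivity)]
  have hcancel : l ^ (Module.finrank ℝ V / p) * ((l ^ Module.finrank ℝ V)⁻¹) ^ p⁻¹ = 1 := by
    rw [Real.inv_rpow (by positivity), ← Real.rpow_natCast, ← Real.rpow_mul hl.le, div_eq_mul_inv]
    exact mul_inv_cancel₀ (by positivity)
  rw [hcomp, ← mul_assoc, ← ENNReal.ofReal_mul (by positivity), hcancel, ENNReal.ofReal_one,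
    one_mul]

end AffineRescaling

section BoxOscillation

variable (H : Type*) [NormedAddCommGroup H] [InnerProductSpace ℂ H] [CompleteSpace H]

lemma exists_setIntegral_ball_norm_iteratedLineDerivOp_four_sub_sq_le (V : Type*)
    [NormedAddCommGroup V] [InnerProductSpace ℝ V] [FiniteDimensional ℝ V] [MeasurableSpace V]
    [BorelSpace V] :
    ∃ C : ℝ, 0 ≤ C ∧ ∀ (w : 𝓢(V, H)) (F : ℝ), (∀ x, ‖(Δ (Δ w)) x‖ ≤ F) →
      ∀ m : Fin 4 → V, (∀ i, ‖m i‖ ≤ 1) → ∀ (c : V) (l : ℝ), 0 < l → ∃ d : H,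
        ∫ x in ball c l, ‖(∂^{m} w) x - d‖ ^ 2 ≤ C * F ^ 2 * l ^ Module.finrank ℝ V := by
  obtain ⟨C, hC, hunit⟩ := exists_setIntegral_norm_iteratedLineDerivOp_four_sub_sq_le V H
  refine ⟨C, hC, fun w F hF m hm c l hl => ?_⟩
  obtain ⟨v, hv⟩ := exists_schwartzMap_eq_comp_affine w c hl.ne'
  have hD : ∀ y, iteratedFDeriv ℝ 4 v y = l ^ 4 • iteratedFDeriv ℝ 4 w (c + l • y) := fun y => by
    rw [show (v : V → H) = fun y => w (c + l • y) from funext hv]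
    exact iteratedFDeriv_comp_add_smul (w.smooth 4) c l y
  obtain ⟨d, hd⟩ := hunit v (l ^ 4 * F) (fun y => by
    rw [schwartz_laplacian_laplacian_apply, hD, map_smul, norm_smul,
      ← schwartz_laplacian_laplacian_apply, Real.norm_of_nonneg (by positivity)]
    gcongr
    exact hF _) m hm
  refine ⟨(l ^ 4)⁻¹ • d, ?_⟩
  have hscale : ∀ y, ‖(∂^{m} v) y - d‖ ^ 2 =
      l ^ 8 * ‖(∂^{m} w) (c + l • y) - (l ^ 4)⁻¹ • d‖ ^ 2 := fun y => by
    have : (∂^{m} v) y - d = l ^ 4 • ((∂^{m} w) (c + l • y) - (l ^ 4)⁻¹ • d) := by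
      rw [SchwartzMap.iteratedLineDerivOp_eq_iteratedFDeriv, hD,
        SchwartzMap.iteratedLineDerivOp_eq_iteratedFDeriv, smul_sub,
        smul_inv_smul₀ (by positivity), smul_apply]
    rw [this, norm_smul, Real.norm_of_nonneg (by positivity)]
    ring
  simp_rw [hscale] at hd
  rw [integral_const_mul, setIntegral_ball_comp_affine volume
    (fun x => ‖(∂^{m} w) x - (l ^ 4)⁻¹ • d‖ ^ 2) c hl, mul_pow, ← pow_mul, mul_left_comm C,
    mul_le_mul_iff_right₀ (by positivity), inv_mul_le_iff₀ (by positivity)] at hd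
  linarith

variable (ι : Type*) [Fintype ι] [Nonempty ι]

lemma box_subset_ball {ι : Type*} [Fintype ι] (c : ι → ℝ) {l : ι → ℝ} (hl : IsBalanced l) (i₀ : ι) :
    box c l ⊆ ball (WithLp.toLp 2 c) ((2 * Fintype.card ι + 1) * l i₀) := fun x hx => by
  have := norm_sub_le_of_mem_box (m := 2 * l i₀) (fun i => hl.le_two_mul i i₀) hx
    (y := WithLp.toLp 2 c) fun i => ⟨le_rfl, lt_add_of_pos_right _ (hl.pos i)⟩
  rw [mem_ball, dist_eq_norm]
  linarith [hl.pos i₀]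

lemma exists_setIntegral_box_norm_iteratedLineDerivOp_four_sub_sq_le :
    ∃ C : ℝ, 1 ≤ C ∧ ∀ (w : 𝓢(EuclideanSpace ℝ ι, H)) (F : ℝ), (∀ x, ‖(Δ (Δ w)) x‖ ≤ F) →
      ∀ m : Fin 4 → EuclideanSpace ℝ ι, (∀ i, ‖m i‖ ≤ 1) → ∀ c l : ι → ℝ, IsBalanced l →
        ∃ d : H, ∫ x in box c l, ‖(∂^{m} w) x - d‖ ^ 2 ≤ (C * F) ^ 2 * volume.real (box c l) := by
  obtain ⟨C, hC, hball⟩ :=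
    exists_setIntegral_ball_norm_iteratedLineDerivOp_four_sub_sq_le H (EuclideanSpace ℝ ι)
  set κ : ℝ := 2 * Fintype.card ι + 1
  have : 0 < κ := by positivity
  refine ⟨C * κ ^ Fintype.card ι + 1, by simpa using by positivity,
    fun w F hF m hm c l hl => ?_⟩
  obtain ⟨i₀, hi₀⟩ := Finite.exists_min l
  have hpos := hl.pos i₀
  obtain ⟨d, hd⟩ := hball w F hF m hm (WithLp.toLp 2 c) (κ * l i₀) (by positivity)
  refine ⟨d, ?_⟩
  have hmono : ∫ x in box c l, ‖(∂^{m} w) x - d‖ ^ 2 ≤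
      ∫ x in ball (WithLp.toLp 2 c) (κ * l i₀), ‖(∂^{m} w) x - d‖ ^ 2 := by
    refine setIntegral_mono_set ?_ (.of_forall fun x => by positivity)
      (box_subset_ball c hl i₀).eventuallyLE
    exact (((∂^{m} w).continuous.sub continuous_const).norm.pow 2).continuousOn.integrableOn_compact
      (isCompact_closedBall _ _) |>.mono_set ball_subset_closedBall
  have hvol : l i₀ ^ Fintype.card ι ≤ volume.real (box c l) := by
    rw [volume_real_box c hl]
    simpa using Finset.prod_le_prod (s := Finset.univ) (fun i _ => hpos.le) fun i _ => hi₀ i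
  have hCκ : 0 ≤ C * κ ^ Fintype.card ι := by positivity
  calc ∫ x in box c l, ‖(∂^{m} w) x - d‖ ^ 2
      ≤ C * F ^ 2 * (κ * l i₀) ^ Fintype.card ι := by
        simpa using hmono.trans hd
    _ = C * κ ^ Fintype.card ι * F ^ 2 * l i₀ ^ Fintype.card ι := by rw [mul_pow]; ring
    _ ≤ (C * κ ^ Fintype.card ι + 1) ^ 2 * F ^ 2 * volume.real (box c l) := by
        gcongr
        nlinarith
    _ = _ := by rw [mul_pow]

end BoxOscillation

section LpBound

variable {ι : Type*} [Fintype ι] {G : EuclideanSpace ℝ ι → ℝ} {B : ℝ} {K : ℝ≥0} {c l : ι → ℝ}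

lemma HasUnitOscillation.abs_setAverage_le_one {α : Type*} [MeasurableSpace α] {μ : Measure α}
    {G : α → ℝ} {s : Set α} (h : HasUnitOscillation μ G s) (hG : Measurable G)
    (hB : ∀ x, |G x| ≤ B) (hsq : ∫ x in s, G x ^ 2 ∂μ ≤ μ.real s) : |⨍ x in s, G x ∂μ| ≤ 1 := by
  have hpos : 0 < μ.real s := ENNReal.toReal_pos h.measure_ne_zero h.measure_ne_top
  have hmean : ⨍ x in s, G x ^ 2 ∂μ ≤ 1 := by
    rwa [setAverage_eq, smul_eq_mul, inv_mul_le_iff₀ hpos, mul_one]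
  rw [← sq_le_one_iff_abs_le_one]
  linarith [h.variance_nonneg hG hB]

lemma abs_rpow_le_mul_exp_abs_sub {p x a : ℝ} (hp : 0 ≤ p) (ha : |a| ≤ 1) :
    |x| ^ p ≤ (3 * p) ^ p * exp (1 / 3) * exp (|x - a| / 3) := by
  calc |x| ^ p ≤ (p / |1 / 3|) ^ p * exp (|1 / 3| * |x|) :=
        ProbabilityTheory.rpow_abs_le_mul_exp_abs x hp (by norm_num)
    _ = (3 * p) ^ p * exp (|x| / 3) := by
        rw [abs_of_pos (by norm_num)]
        ring_nf
    _ ≤ (3 * p) ^ p * exp (1 / 3 + |x - a| / 3) := by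
        gcongr
        linarith [abs_sub_abs_le_abs_sub x a]
    _ = _ := by rw [Real.exp_add, mul_assoc]

lemma HasUnitBoxOscillation.lintegral_rpow_le [Nonempty ι] (hosc : HasUnitBoxOscillation G)
    (hK : LipschitzWith K G) (hB : ∀ x, |G x| ≤ B) {p : ℝ} (hp : 0 ≤ p) (c : ι → ℝ)
    (hl : IsBalanced l) (hsq : ∫ x in box c l, G x ^ 2 ≤ volume.real (box c l)) :
    ∫⁻ x in box c l, ENNReal.ofReal (|G x| ^ p) ≤
      ENNReal.ofReal ((3 * p) ^ p * exp (1 / 3) * (16 * volume.real (box c l))) := by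
  set a := ⨍ x in box c l, G x
  have ha1 : |a| ≤ 1 :=
    (hosc.hasUnitOscillation c hl).abs_setAverage_le_one hK.continuous.measurable hB hsq
  calc ∫⁻ x in box c l, ENNReal.ofReal (|G x| ^ p)
      ≤ ∫⁻ x in box c l, ENNReal.ofReal ((3 * p) ^ p * exp (1 / 3) * exp (|G x - a| / 3)) :=
        lintegral_mono fun x => ENNReal.ofReal_le_ofReal (abs_rpow_le_mul_exp_abs_sub hp ha1)
    _ = ENNReal.ofReal (∫ x in box c l, (3 * p) ^ p * exp (1 / 3) * exp (|G x - a| / 3)) :=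
        (ofReal_integral_eq_lintegral_ofReal
          (integrableOn_comp_of_abs_le hK.continuous.measurable hB (volume_box_ne_top c l)
            (φ := fun t => (3 * p) ^ p * exp (1 / 3) * exp (|t - a| / 3)) (by fun_prop))
          (.of_forall fun x => by positivity)).symm
    _ ≤ _ := by
        refine ENNReal.ofReal_le_ofReal ?_
        rw [integral_const_mul]
        gcongr
        exact hosc.setIntegral_exp_abs_sub_setAverage_le hK hB c hl

lemma HasUnitBoxOscillation.eLpNorm_le [Nonempty ι] (hosc : HasUnitBoxOscillation G)
    (hK : LipschitzWith K G) (hB : ∀ x, |G x| ≤ B) {p : ℝ} (hp : 0 < p) (c : ι → ℝ)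
    (hl : IsBalanced l) (hsq : ∫ x in box c l, G x ^ 2 ≤ volume.real (box c l)) :
    eLpNorm G (ENNReal.ofReal p) (volume.restrict (box c l)) ≤
      ENNReal.ofReal (((3 * p) ^ p * exp (1 / 3) * (16 * volume.real (box c l))) ^ (1 / p)) := by
  rw [eLpNorm_eq_lintegral_rpow_enorm_toReal (by simpa using hp) ENNReal.ofReal_ne_top,
    ENNReal.toReal_ofReal hp.le, ← ENNReal.ofReal_rpow_of_nonneg (by positivity) (by positivity)]
  gcongr
  refine le_of_eq_of_le (lintegral_congr fun x => ?_) (hosc.lintegral_rpow_le hK hB hp.le c hl hsq)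
  rw [Real.enorm_eq_ofReal_abs, ENNReal.ofReal_rpow_of_nonneg (abs_nonneg _) hp.le]

end LpBound

section CalderonZygmund

variable {ι : Type*} [Fintype ι]

lemma closedBall_subset_box (R : ℝ) :
    closedBall (0 : EuclideanSpace ℝ ι) R ⊆ box (fun _ => -(R + 1)) fun _ => 2 * (R + 1) := by
  intro x hx i
  have hxi := abs_le.1 ((PiLp.norm_apply_le x i).trans (mem_closedBall_zero_iff.1 hx))
  constructor <;> linarith [hxi.1, hxi.2]

lemma hasUnitBoxOscillation_of_setIntegral_norm_sub_sq_le [Nonempty ι] {E : Type*}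
    [NormedAddCommGroup E] [NormedSpace ℝ E] {f : EuclideanSpace ℝ ι → E} (hf : Continuous f)
    {A : ℝ} (hA : 0 < A) (hosc : ∀ c l : ι → ℝ, IsBalanced l →
      ∃ d, ∫ x in box c l, ‖f x - d‖ ^ 2 ≤ A ^ 2 * volume.real (box c l))
    {φ : E →L[ℝ] ℝ} (hφ : ‖φ‖ ≤ 1) : HasUnitBoxOscillation fun x => A⁻¹ * φ (f x) := by
  intro c l hl
  obtain ⟨d, hd⟩ := hosc c l hl
  refine ⟨A⁻¹ * φ d, ?_⟩
  have hint : IntegrableOn (fun x => ‖f x - d‖ ^ 2) (box c l) :=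
    (((hf.sub continuous_const).norm.pow 2).continuousOn.integrableOn_compact
      (isCompact_closedBall _ _)).mono_set
        ((box_subset_ball c hl (Classical.arbitrary ι)).trans ball_subset_closedBall)
  calc ∫ x in box c l, (A⁻¹ * φ (f x) - A⁻¹ * φ d) ^ 2
      ≤ ∫ x in box c l, (A ^ 2)⁻¹ * ‖f x - d‖ ^ 2 := by
        refine integral_mono_of_nonneg (.of_forall fun x => sq_nonneg _) (hint.const_mul _)
          (.of_forall fun x => ?_)
        dsimp only
        rw [← mul_sub, ← map_sub, mul_pow, inv_pow, ← sq_abs (φ _), ← Real.norm_eq_abs]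
        gcongr
        simpa only [one_mul] using φ.le_of_opNorm_le hφ (f x - d)
    _ ≤ (A ^ 2)⁻¹ * (A ^ 2 * volume.real (box c l)) := by
        rw [integral_const_mul]
        gcongr
    _ = volume.real (box c l) := inv_mul_cancel_left₀ (by positivity) _

lemma exists_lipschitzWith_schwartz {V E : Type*} [NormedAddCommGroup V] [NormedSpace ℝ V]
    [NormedAddCommGroup E] [NormedSpace ℝ E] (f : 𝓢(V, E)) : ∃ K, LipschitzWith K f := by
  refine ⟨_, lipschitzWith_of_nnnorm_fderiv_le
    (C := (SchwartzMap.seminorm ℝ 0 1 f).toNNReal) f.differentiable fun x => ?_⟩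
  rw [← norm_toNNReal]
  refine Real.toNNReal_le_toNNReal ?_
  rw [← norm_iteratedFDeriv_one]
  exact SchwartzMap.norm_iteratedFDeriv_le_seminorm ℝ f 1 x

lemma setIntegral_clm_iteratedLineDerivOp_four_sq_le {V H : Type*} [NormedAddCommGroup V]
    [InnerProductSpace ℝ V] [FiniteDimensional ℝ V] [MeasurableSpace V] [BorelSpace V]
    [NormedAddCommGroup H] [InnerProductSpace ℂ H] [CompleteSpace H] {w : 𝓢(V, H)} {F R : ℝ}
    (hF : ∀ x, ‖(Δ (Δ w)) x‖ ≤ F) (hzero : ∀ x, R < ‖x‖ → (Δ (Δ w)) x = 0) {m : Fin 4 → V}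
    (hm : ∀ i, ‖m i‖ ≤ 1) {φ : H →L[ℝ] ℝ} (hφ : ‖φ‖ ≤ 1) {s : Set V} (hs : closedBall 0 R ⊆ s)
    (hs_top : volume s ≠ ⊤) :
    ∫ x in s, φ ((∂^{m} w) x) ^ 2 ≤ volume.real s * F ^ 2 := by
  have hint := integrable_norm_sq_schwartz (∂^{m} w)
  calc ∫ x in s, φ ((∂^{m} w) x) ^ 2 ≤ ∫ x in s, ‖(∂^{m} w) x‖ ^ 2 := by
        refine integral_mono_of_nonneg (.of_forall fun x => sq_nonneg _) hint.integrableOn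
          (.of_forall fun x => ?_)
        dsimp only
        rw [← sq_abs, ← Real.norm_eq_abs]
        gcongr
        simpa only [one_mul] using φ.le_of_opNorm_le hφ _
    _ ≤ ∫ x, ‖(∂^{m} w) x‖ ^ 2 := setIntegral_le_integral hint (.of_forall fun x => sq_nonneg _)
    _ ≤ volume.real (closedBall (0 : V) R) * F ^ 2 :=
        integral_norm_sq_iteratedLineDerivOp_four_le_of_eq_zero hF hzero hm
    _ ≤ volume.real s * F ^ 2 := by
        gcongr

lemma setIntegral_inv_mul_sq_le {α : Type*} [MeasurableSpace α] {μ : Measure α} {s : Set α}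
    {g : α → ℝ} {A F : ℝ} (hA : 0 < A) (hF : 0 ≤ F) (hFA : F ≤ A)
    (hg : ∫ x in s, g x ^ 2 ∂μ ≤ μ.real s * F ^ 2) :
    ∫ x in s, (A⁻¹ * g x) ^ 2 ∂μ ≤ μ.real s := by
  simp only [mul_pow, integral_const_mul, inv_pow]
  rw [inv_mul_le_iff₀ (by positivity), mul_comm]
  exact hg.trans (by gcongr)

lemma exists_eLpNorm_clm_iteratedLineDerivOp_four_le (ι H : Type*) [Fintype ι] [Nonempty ι]
    [NormedAddCommGroup H] [InnerProductSpace ℂ H] [CompleteSpace H] {p : ℝ} (hp : 0 < p) {R : ℝ}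
    (hR : 0 ≤ R) :
    ∃ C : ℝ, 0 ≤ C ∧ ∀ (w : 𝓢(EuclideanSpace ℝ ι, H)) (F : ℝ), 0 < F →
      (∀ x, ‖(Δ (Δ w)) x‖ ≤ F) → (∀ x, R < ‖x‖ → (Δ (Δ w)) x = 0) →
      ∀ m : Fin 4 → EuclideanSpace ℝ ι, (∀ i, ‖m i‖ ≤ 1) → ∀ φ : H →L[ℝ] ℝ, ‖φ‖ ≤ 1 →
        eLpNorm (fun x => φ ((∂^{m} w) x)) (ENNReal.ofReal p) (volume.restrict (closedBall 0 R)) ≤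
          ENNReal.ofReal (C * F) := by
  obtain ⟨K, hK, hosc⟩ := exists_setIntegral_box_norm_iteratedLineDerivOp_four_sub_sq_le H ι
  set c : ι → ℝ := fun _ => -(R + 1)
  set l : ι → ℝ := fun _ => 2 * (R + 1)
  have hl : IsBalanced l := ⟨fun _ => by positivity, fun _ _ => by simp only [l]; linarith⟩
  set T := ((3 * p) ^ p * exp (1 / 3) * (16 * volume.real (box c l))) ^ (1 / p)
  refine ⟨K * T, by positivity, fun w F hF0 hF hzero m hm φ hφ => ?_⟩
  have hA : 0 < K * F := by positivity
  set G : EuclideanSpace ℝ ι → ℝ := fun x => (K * F)⁻¹ * φ ((∂^{m} w) x) with hG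
  have hGosc : HasUnitBoxOscillation G := hasUnitBoxOscillation_of_setIntegral_norm_sub_sq_le
    (∂^{m} w).continuous hA (hosc w F hF m hm) hφ
  have hGle : ∀ x, |G x| ≤ (K * F)⁻¹ * ‖(∂^{m} w) x‖ := fun x => by
    rw [hG, abs_mul, abs_of_pos (by positivity)]
    gcongr
    simpa using φ.le_of_opNorm_le hφ _
  have hGB : ∀ x, |G x| ≤ (K * F)⁻¹ * SchwartzMap.seminorm ℝ 0 0 (∂^{m} w) := fun x =>
    (hGle x).trans (by gcongr; exact SchwartzMap.norm_le_seminorm ℝ _ x)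
  obtain ⟨L, hL⟩ := exists_lipschitzWith_schwartz (∂^{m} w)
  have hGL : LipschitzWith _ G := ((lipschitzWith_smul (K * F)⁻¹).comp φ.lipschitz).comp hL
  have hGsq : ∫ x in box c l, G x ^ 2 ≤ volume.real (box c l) :=
    setIntegral_inv_mul_sq_le hA hF0.le (le_mul_of_one_le_left hF0.le hK)
      (setIntegral_clm_iteratedLineDerivOp_four_sq_le hF hzero hm hφ
        (closedBall_subset_box R) (volume_box_ne_top c l))
  have hfactor : (fun x => φ ((∂^{m} w) x)) = (K * F) • G := by
    ext x
    simp only [hG, Pi.smul_apply, smul_eq_mul]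
    field_simp
  calc eLpNorm (fun x => φ ((∂^{m} w) x)) (ENNReal.ofReal p) (volume.restrict (closedBall 0 R))
      ≤ ‖K * F‖ₑ * eLpNorm G (ENNReal.ofReal p) (volume.restrict (closedBall 0 R)) := by
        rw [hfactor]
        exact eLpNorm_const_smul_le
    _ ≤ ‖K * F‖ₑ * ENNReal.ofReal T := by
        gcongr
        exact (eLpNorm_mono_measure G
          (Measure.restrict_mono (closedBall_subset_box R) le_rfl)).trans
            (hGosc.eLpNorm_le hGL hGB hp c hl hGsq)
    _ = ENNReal.ofReal (K * T * F) := by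
        rw [Real.enorm_of_nonneg hA.le, ← ENNReal.ofReal_mul hA.le]
        ring_nf

lemma norm_multilinear_le_sum_norm_single {n : ℕ} {E : Type*} [NormedAddCommGroup E]
    [NormedSpace ℝ E] [DecidableEq ι] (A : EuclideanSpace ℝ ι [×n]→L[ℝ] E) :
    ‖A‖ ≤ ∑ I : Fin n → ι, ‖A fun k => EuclideanSpace.single (I k) 1‖ := by
  refine ContinuousMultilinearMap.opNorm_le_bound
    (Finset.sum_nonneg fun _ _ => norm_nonneg _) fun m => ?_
  have hm : m = fun k => ∑ i, m k i • (EuclideanSpace.single i 1 : EuclideanSpace ℝ ι) := by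
    ext k j
    simp [Finset.sum_apply, Pi.single_apply]
  have hexpand : A m =
      ∑ I : Fin n → ι, (∏ k, m k (I k)) • A fun k => EuclideanSpace.single (I k) 1 := by
    conv_lhs => rw [hm, A.map_sum]
    exact Finset.sum_congr rfl fun I _ => A.map_smul_univ _ _
  rw [hexpand, Finset.sum_mul]
  refine (norm_sum_le _ _).trans (Finset.sum_le_sum fun I _ => ?_)
  rw [norm_smul, mul_comm, norm_prod]
  gcongr with k
  exact PiLp.norm_apply_le (m k) (I k)

lemma exists_eLpNorm_norm_iteratedFDeriv_four_schwartz_le (ι : Type*) [Fintype ι] [Nonempty ι]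
    {p : ℝ} (hp : 1 ≤ p) {R : ℝ} (hR : 0 ≤ R) :
    ∃ C : ℝ, 0 ≤ C ∧ ∀ (w : 𝓢(EuclideanSpace ℝ ι, ℂ)) (F : ℝ), 0 < F →
      (∀ x, ‖(Δ (Δ w)) x‖ ≤ F) → (∀ x, R < ‖x‖ → (Δ (Δ w)) x = 0) →
      eLpNorm (fun x => ‖iteratedFDeriv ℝ 4 w x‖) (ENNReal.ofReal p)
        (volume.restrict (closedBall 0 R)) ≤ ENNReal.ofReal (C * F) := by
  classical
  obtain ⟨C, hC, hcomp⟩ :=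
    exists_eLpNorm_clm_iteratedLineDerivOp_four_le ι ℂ (zero_lt_one.trans_le hp) hR
  refine ⟨∑ _I : Fin 4 → ι, (C + C), by positivity, fun w F hF0 hF hzero => ?_⟩
  set e : (Fin 4 → ι) → Fin 4 → EuclideanSpace ℝ ι :=
    fun I k => EuclideanSpace.single (I k) 1
  have he : ∀ I k, ‖e I k‖ ≤ 1 := fun I k => by simp [e]
  set re := fun I x => ‖Complex.reCLM ((∂^{e I} w) x)‖
  set im := fun I x => ‖Complex.imCLM ((∂^{e I} w) x)‖
  have hmeas : ∀ (φ : ℂ →L[ℝ] ℝ) I, AEStronglyMeasurable (fun x => ‖φ ((∂^{e I} w) x)‖)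
      (volume.restrict (closedBall 0 R)) := fun φ I =>
    (φ.continuous.comp (∂^{e I} w).continuous).norm.aestronglyMeasurable
  have hp1 : 1 ≤ ENNReal.ofReal p := ENNReal.one_le_ofReal.2 hp
  have hpoint : ∀ x, ‖iteratedFDeriv ℝ 4 w x‖ ≤ (∑ I, (re I + im I)) x := fun x => by
    refine (norm_multilinear_le_sum_norm_single _).trans ?_
    rw [Finset.sum_apply]
    refine Finset.sum_le_sum fun I _ => ?_
    rw [← SchwartzMap.iteratedLineDerivOp_eq_iteratedFDeriv]
    exact Complex.norm_le_abs_re_add_abs_im _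
  calc eLpNorm (fun x => ‖iteratedFDeriv ℝ 4 w x‖) (ENNReal.ofReal p)
        (volume.restrict (closedBall 0 R))
      ≤ eLpNorm (∑ I, (re I + im I)) (ENNReal.ofReal p) (volume.restrict (closedBall 0 R)) :=
        eLpNorm_mono_real fun x => by rw [norm_norm]; exact hpoint x
    _ ≤ ∑ I, eLpNorm (re I + im I) (ENNReal.ofReal p) (volume.restrict (closedBall 0 R)) :=
        eLpNorm_sum_le (fun I _ => (hmeas _ I).add (hmeas _ I)) hp1
    _ ≤ ∑ _I : Fin 4 → ι, ENNReal.ofReal ((C + C) * F) := by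
        refine Finset.sum_le_sum fun I _ =>
          (eLpNorm_add_le (hmeas _ I) (hmeas _ I) hp1).trans ?_
        rw [eLpNorm_norm, eLpNorm_norm, add_mul, ENNReal.ofReal_add (by positivity) (by positivity)]
        exact add_le_add (hcomp w F hF0 hF hzero _ (he I) _ Complex.reCLM_norm.le)
          (hcomp w F hF0 hF hzero _ (he I) _ Complex.imCLM_norm.le)
    _ = ENNReal.ofReal ((∑ _I : Fin 4 → ι, (C + C)) * F) := by
        rw [← ENNReal.ofReal_sum_of_nonneg (fun I _ => by positivity), Finset.sum_mul]

end CalderonZygmund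

section Mollification

open Filter
open scoped Convolution

variable {V E : Type*} [NormedAddCommGroup V] [InnerProductSpace ℝ V] [FiniteDimensional ℝ V]
  [MeasurableSpace V] [BorelSpace V] [NormedAddCommGroup E] [NormedSpace ℝ E]
  (φ : ContDiffBump (0 : V)) {g w : V → E}

/-- The convolution of `g` with the bump function `φ` normalised to integral `1`. -/
noncomputable def mollify (φ : ContDiffBump (0 : V)) (g : V → E) : V → E :=
  scaledAverage volume (φ.normed volume) g (-1)

lemma mollify_eq_convolution (g : V → E) :
    mollify φ g = φ.normed volume ⋆[ContinuousLinearMap.lsmul ℝ ℝ, volume] g := by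
  ext x
  simp [mollify, scaledAverage, convolution_def, sub_eq_add_neg]

lemma norm_mollify_le {F : ℝ} (hF : ∀ x, ‖g x‖ ≤ F) (x : V) : ‖mollify φ g x‖ ≤ F := by
  refine (norm_scaledAverage_le φ.integrable_normed hF _ x).trans_eq ?_
  simp only [Real.norm_of_nonneg (φ.nonneg_normed _), φ.integral_normed, one_mul]

lemma mollify_eq_zero {R : ℝ} (hg : ∀ x, R < ‖x‖ → g x = 0) {x : V} (hx : R + φ.rOut < ‖x‖) :
    mollify φ g x = 0 := by
  refine integral_eq_zero_of_ae (.of_forall fun y => ?_)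
  rcases lt_or_ge ‖y‖ φ.rOut with hy | hy
  · have := norm_sub_norm_le x y
    simp [← sub_eq_add_neg, hg (x - y) (by linarith)]
  · have : φ.normed volume y = 0 := by
      rw [← Function.notMem_support, φ.support_normed_eq]
      simpa using hy
    simp [this]

lemma tendsto_mollify [CompleteSpace E] {φ : ℕ → ContDiffBump (0 : V)}
    (hφ : Tendsto (fun n => (φ n).rOut) atTop (𝓝 0)) (hg : Continuous g) (x : V) :
    Tendsto (fun n => mollify (φ n) g x) atTop (𝓝 (g x)) := by
  simp only [mollify_eq_convolution]
  exact ContDiffBump.convolution_tendsto_right_of_continuous hφ hg x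

lemma exists_schwartz_eq_mollify (hw : Continuous w) (hsupp : HasCompactSupport w) :
    ∃ f : 𝓢(V, E), ⇑f = mollify φ w := by
  have hsmooth : ContDiff ℝ ((⊤ : ℕ∞) : WithTop ℕ∞) (mollify φ w) := by
    rw [mollify_eq_convolution]
    exact φ.hasCompactSupport_normed.contDiff_convolution_left _ φ.contDiff_normed
      hw.locallyIntegrable
  have hcompact : HasCompactSupport (mollify φ w) := by
    rw [mollify_eq_convolution]
    exact φ.hasCompactSupport_normed.convolution _ hsupp
  exact ⟨hcompact.toSchwartzMap hsmooth, rfl⟩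

lemma mollify_add {f : V → E} (hf : Continuous f) (hf_supp : HasCompactSupport f)
    (hg : Continuous g) (hg_supp : HasCompactSupport g) (x : V) :
    mollify φ (fun y => f y + g y) x = mollify φ f x + mollify φ g x := by
  obtain ⟨M, hM⟩ := hf_supp.exists_bound_of_continuous hf
  obtain ⟨M', hM'⟩ := hg_supp.exists_bound_of_continuous hg
  simp only [mollify, scaledAverage, smul_add]
  exact integral_add (integrable_smul_comp_affine φ.integrable_normed hf hM _ x)
    (integrable_smul_comp_affine φ.integrable_normed hg hM' _ x)

variable [CompleteSpace E]

lemma mollify_clm_comp {F : Type*} [NormedAddCommGroup F] [NormedSpace ℝ F] [CompleteSpace F]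
    (T : E →L[ℝ] F) (hg : Continuous g) (hsupp : HasCompactSupport g) (x : V) :
    mollify φ (fun y => T (g y)) x = T (mollify φ g x) := by
  obtain ⟨M, hM⟩ := hsupp.exists_bound_of_continuous hg
  exact scaledAverage_clm_comp T T.map_smul φ.integrable_normed hg hM _ x

lemma iteratedFDeriv_mollify {n : ℕ} (hw : ContDiff ℝ n w) (hsupp : HasCompactSupport w) :
    iteratedFDeriv ℝ n (mollify φ w) = mollify φ (iteratedFDeriv ℝ n w) := by
  obtain ⟨M, -, hM⟩ := exists_norm_iteratedFDeriv_le_of_hasCompactSupport hw hsupp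
  exact iteratedFDeriv_scaledAverage φ.integrable_normed hw (fun j hj => ⟨M, hM j hj⟩) _

lemma laplacian_laplacian_schwartz_eq_mollify (hw : ContDiff ℝ 4 w) (hsupp : HasCompactSupport w)
    {f : 𝓢(V, E)} (hf : ⇑f = mollify φ w) (x : V) :
    (Δ (Δ f)) x = mollify φ (fun y => bilaplacianForm V E (iteratedFDeriv ℝ 4 w y)) x := by
  rw [schwartz_laplacian_laplacian_apply, hf, iteratedFDeriv_mollify φ (n := 4) hw hsupp,
    mollify_clm_comp φ _ (hw.continuous_iteratedFDeriv le_rfl) (hsupp.iteratedFDeriv 4)]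

lemma exists_contDiffBump_rOut_tendsto_zero (V : Type*) [NormedAddCommGroup V] :
    ∃ φ : ℕ → ContDiffBump (0 : V),
      (∀ n, (φ n).rOut ≤ 1) ∧ Tendsto (fun n => (φ n).rOut) atTop (𝓝 0) := by
  refine ⟨fun n => ⟨1 / (n + 1) / 2, 1 / (n + 1), by positivity, half_lt_self (by positivity)⟩,
    fun n => ?_, tendsto_one_div_add_atTop_nhds_zero_nat⟩
  exact div_le_one_of_le₀ (by linarith [n.cast_nonneg (α := ℝ)]) (by positivity)

end Mollification

section CompactSupport

open Filter

lemma exists_norm_iteratedFDeriv_le_of_norm_smul_add_bilaplacianForm_le (V E : Type*)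
    [NormedAddCommGroup V] [InnerProductSpace ℝ V] [FiniteDimensional ℝ V]
    [NormedAddCommGroup E] [NormedSpace ℂ E] [CompleteSpace E] :
    ∃ C : ℝ, 0 ≤ C ∧ ∀ μ : ℂ, ‖μ‖ = 1 → 0 ≤ μ.re → ∀ w : V → E, ContDiff ℝ 4 w →
      HasCompactSupport w → ∀ F : ℝ,
      (∀ x, ‖μ • w x + bilaplacianForm V E (iteratedFDeriv ℝ 4 w x)‖ ≤ F) →
      ∀ h ≤ 3, ∀ x, ‖iteratedFDeriv ℝ h w x‖ ≤ C * F := by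
  borelize V
  obtain ⟨C, hC, hschwartz⟩ :=
    exists_norm_iteratedFDeriv_le_of_norm_smul_add_laplacian_laplacian_le V E
  refine ⟨C, hC, fun μ hμ hre w hw hsupp F hF h hh x => ?_⟩
  obtain ⟨φ, -, hφ⟩ := exists_contDiffBump_rOut_tendsto_zero V
  have hwh : ContDiff ℝ h w := hw.of_le (by exact_mod_cast (by lia : h ≤ 4))
  refine le_of_tendsto (tendsto_mollify hφ (hwh.continuous_iteratedFDeriv le_rfl) x).norm
    (.of_forall fun n => ?_)
  obtain ⟨f, hf⟩ := exists_schwartz_eq_mollify (φ n) hw.continuous hsupp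
  rw [← iteratedFDeriv_mollify (φ n) hwh hsupp, ← hf]
  refine hschwartz μ hμ hre f F (fun y => ?_) h hh x
  have hjet : μ • f y + (Δ (Δ f)) y =
      mollify (φ n) (fun z => μ • w z + bilaplacianForm V E (iteratedFDeriv ℝ 4 w z)) y := by
    have hsplit := mollify_add (φ n) (f := fun z => μ • w z)
      (g := fun z => bilaplacianForm V E (iteratedFDeriv ℝ 4 w z)) (hw.continuous.const_smul μ)
      (hsupp.comp_left (g := fun z => μ • z) (smul_zero μ))
      ((bilaplacianForm V E).continuous.comp (hw.continuous_iteratedFDeriv (m := 4) le_rfl))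
      ((hsupp.iteratedFDeriv 4).comp_left (map_zero (bilaplacianForm V E))) y
    rw [hsplit, ← laplacian_laplacian_schwartz_eq_mollify (φ n) hw hsupp hf, hf]
    congr 1
    exact (mollify_clm_comp (φ n) (μ • ContinuousLinearMap.id ℝ E) hw.continuous hsupp y).symm
  rw [hjet]
  exact norm_mollify_le (φ n) hF y

lemma exists_eLpNorm_norm_iteratedFDeriv_four_le (ι : Type*) [Fintype ι] [Nonempty ι] {p : ℝ}
    (hp : 1 ≤ p) {R : ℝ} (hR : 0 ≤ R) :
    ∃ C : ℝ, 0 ≤ C ∧ ∀ w : EuclideanSpace ℝ ι → ℂ, ContDiff ℝ 4 w → HasCompactSupport w →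
      (∀ x, R < ‖x‖ → bilaplacianForm (EuclideanSpace ℝ ι) ℂ (iteratedFDeriv ℝ 4 w x) = 0) →
      ∀ F : ℝ, (∀ x, ‖bilaplacianForm (EuclideanSpace ℝ ι) ℂ (iteratedFDeriv ℝ 4 w x)‖ ≤ F) →
      eLpNorm (fun x => ‖iteratedFDeriv ℝ 4 w x‖) (ENNReal.ofReal p)
        (volume.restrict (closedBall 0 R)) ≤ ENNReal.ofReal (C * F) := by
  obtain ⟨C, hC, hschwartz⟩ := exists_eLpNorm_norm_iteratedFDeriv_four_schwartz_le ι hp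
    (R := R + 1) (by positivity)
  refine ⟨C, hC, fun w hw hsupp hzero F₀ hF₀ => ?_⟩
  have hcont : Tendsto (fun F => ENNReal.ofReal (C * F)) (𝓝[>] F₀) (𝓝 (ENNReal.ofReal (C * F₀))) :=
    ((ENNReal.continuous_ofReal.comp (continuous_const_mul C)).tendsto F₀).mono_left
      nhdsWithin_le_nhds
  refine ge_of_tendsto hcont ?_
  filter_upwards [self_mem_nhdsWithin] with F hF_gt
  have hF0 : 0 < F := ((norm_nonneg _).trans (hF₀ 0)).trans_lt hF_gt
  have hF := fun x => (hF₀ x).trans (le_of_lt hF_gt)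
  obtain ⟨φ, hφ1, hφ⟩ := exists_contDiffBump_rOut_tendsto_zero (EuclideanSpace ℝ ι)
  choose f hf using fun n => exists_schwartz_eq_mollify (φ n) hw.continuous hsupp
  have hbound : ∀ n, eLpNorm (fun x => ‖iteratedFDeriv ℝ 4 (f n) x‖) (ENNReal.ofReal p)
      (volume.restrict (closedBall 0 R)) ≤ ENNReal.ofReal (C * F) := fun n => by
    have hbilap := laplacian_laplacian_schwartz_eq_mollify (φ n) hw hsupp (hf n)
    refine (eLpNorm_mono_measure _ (Measure.restrict_mono
      (closedBall_subset_closedBall (by linarith)) le_rfl)).trans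
        (hschwartz (f n) F hF0 (fun y => ?_) fun y hy => ?_)
    · rw [hbilap]
      exact norm_mollify_le (φ n) hF y
    · rw [hbilap]
      exact mollify_eq_zero (φ n) hzero (by linarith [hφ1 n])
  have hlim : ∀ x, Tendsto (fun n => ‖iteratedFDeriv ℝ 4 (f n) x‖) atTop
      (𝓝 ‖iteratedFDeriv ℝ 4 w x‖) := fun x => by
    simp only [hf, iteratedFDeriv_mollify (φ _) (n := 4) hw hsupp]
    exact (tendsto_mollify hφ (hw.continuous_iteratedFDeriv le_rfl) x).norm
  have hmeas : ∀ n, AEStronglyMeasurable (fun x => ‖iteratedFDeriv ℝ 4 (f n) x‖)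
      (volume.restrict (closedBall 0 R)) := fun n =>
    (((f n).smooth 4).continuous_iteratedFDeriv le_rfl).norm.aestronglyMeasurable
  refine (Lp.eLpNorm_lim_le_liminf_eLpNorm hmeas _ (.of_forall hlim)).trans ?_
  refine liminf_le_of_le (by isBoundedDefault) fun b hb => ?_
  obtain ⟨n, hn⟩ := hb.exists
  exact hn.trans (hbound n)

end CompactSupport

lemma lipschitzWith_sqrt_of_norm_gradient_le {V : Type*} [NormedAddCommGroup V]
    [InnerProductSpace ℝ V] [CompleteSpace V] {a : V → ℝ} {c : ℝ≥0} (ha : Differentiable ℝ a)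
    (ha_pos : ∀ x, 0 < a x) (hgrad : ∀ x, ‖gradient a x‖ ≤ c * √(a x)) :
    LipschitzWith c (fun x => √(a x)) := by
  refine lipschitzWith_of_nnnorm_fderiv_le (fun x => (ha x).sqrt (ha_pos x).ne') fun x => ?_
  have hsqrt : 0 < √(a x) := Real.sqrt_pos.2 (ha_pos x)
  have hderiv : ‖fderiv ℝ a x‖ ≤ c * √(a x) := by
    simpa only [gradient, LinearIsometryEquiv.norm_map] using hgrad x
  rw [fderiv_sqrt (ha x) (ha_pos x).ne', ← NNReal.coe_le_coe, coe_nnnorm, norm_smul,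
    Real.norm_of_nonneg (by positivity), one_div, inv_mul_le_iff₀ (by positivity)]
  nlinarith [mul_nonneg c.coe_nonneg hsqrt.le]

section Localization

open Filter

variable {V E : Type*} [NormedAddCommGroup V] [NormedSpace ℝ V] [FiniteDimensional ℝ V]
  [NormedAddCommGroup E] [NormedSpace ℝ E] {K : ℝ} {v : V → E} {z : V}

/-- The function `v` cut off at scale `K`: it agrees with `v` on the ball of radius `K` and vanishes
outside the ball of radius `2 * K`. -/
noncomputable def localize (K : ℝ) (v : V → E) : V → E :=
  fun z => unitCutoff V (K⁻¹ • z) • v z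

lemma contDiff_unitCutoff_comp_smul {n : ℕ} (K : ℝ) :
    ContDiff ℝ n (fun z : V => unitCutoff V (K⁻¹ • z)) :=
  (unitCutoff V).contDiff.comp (contDiff_const_smul _)

lemma contDiff_localize {n : ℕ} (hv : ContDiff ℝ n v) : ContDiff ℝ n (localize K v) :=
  (contDiff_unitCutoff_comp_smul K).smul hv

lemma localize_eq_self (hK : 0 < K) (hz : ‖z‖ ≤ K) : localize K v z = v z := by
  have hnorm : ‖K⁻¹ • z‖ ≤ 1 := by
    rwa [norm_smul, norm_inv, Real.norm_of_nonneg hK.le, inv_mul_le_iff₀ hK, mul_one]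
  rw [localize, unitCutoff_eq_one hnorm, one_smul]

lemma localize_eq_zero (hK : 0 < K) (hz : 2 * K ≤ ‖z‖) : localize K v z = 0 := by
  have hnorm : 2 ≤ ‖K⁻¹ • z‖ := by
    rwa [norm_smul, norm_inv, Real.norm_of_nonneg hK.le, le_inv_mul_iff₀ hK, mul_comm]
  rw [localize, unitCutoff_eq_zero hnorm, zero_smul]

lemma hasCompactSupport_localize (hK : 0 < K) (v : V → E) : HasCompactSupport (localize K v) :=
  .intro (isCompact_closedBall 0 (2 * K)) fun z hz =>
    localize_eq_zero hK (by simpa using (not_le.1 (mt mem_closedBall_zero_iff.2 hz)).le)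

lemma iteratedFDeriv_localize (hz : ‖z‖ < K) (n : ℕ) :
    iteratedFDeriv ℝ n (localize K v) z = iteratedFDeriv ℝ n v z := by
  have heq : localize K v =ᶠ[𝓝 z] v := by
    filter_upwards [(isOpen_lt continuous_norm continuous_const).mem_nhds hz] with y hy
    exact localize_eq_self ((norm_nonneg z).trans_lt hz) (le_of_lt hy)
  exact (EventuallyEq.iteratedFDeriv ℝ heq n).eq_of_nhds

lemma iteratedFDeriv_localize_eq_zero (hK : 0 < K) (hz : 2 * K < ‖z‖) (n : ℕ) :
    iteratedFDeriv ℝ n (localize K v) z = 0 := by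
  have heq : localize K v =ᶠ[𝓝 z] 0 := by
    filter_upwards [(isOpen_lt continuous_const continuous_norm).mem_nhds hz] with y hy
    exact localize_eq_zero hK (le_of_lt hy)
  rw [(EventuallyEq.iteratedFDeriv ℝ heq n).eq_of_nhds, iteratedFDeriv_zero, Pi.zero_apply]

lemma exists_norm_iteratedFDeriv_unitCutoff_comp_smul_le (V : Type*) [NormedAddCommGroup V]
    [NormedSpace ℝ V] [FiniteDimensional ℝ V] (n : ℕ) :
    ∃ A : ℝ, 0 ≤ A ∧ ∀ K : ℝ, 1 ≤ K → ∀ j, 1 ≤ j → j ≤ n → ∀ z : V,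
      ‖iteratedFDeriv ℝ j (fun z => unitCutoff V (K⁻¹ • z)) z‖ ≤ A / K := by
  obtain ⟨A, hA, hbound⟩ := exists_norm_iteratedFDeriv_le_of_hasCompactSupport
    ((unitCutoff V).contDiff (n := n)) (unitCutoff V).hasCompactSupport
  refine ⟨A, hA, fun K hK j hj1 hjn z => ?_⟩
  have : 0 < K := one_pos.trans_le hK
  rw [congrFun (iteratedFDeriv_comp_const_smul K⁻¹ (unitCutoff V).contDiff) z, norm_smul, norm_pow,
    Real.norm_of_nonneg (by positivity), div_eq_inv_mul]
  exact mul_le_mul (pow_le_of_le_one (by positivity) (inv_le_one_of_one_le₀ hK) (by lia))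
    (hbound j hjn _) (norm_nonneg _) (by positivity)

lemma exists_norm_smul_add_bilaplacianForm_localize_le (V E : Type*) [NormedAddCommGroup V]
    [InnerProductSpace ℝ V] [FiniteDimensional ℝ V] [NormedAddCommGroup E] [NormedSpace ℂ E] :
    ∃ C : ℝ, 0 ≤ C ∧ ∀ K : ℝ, 1 ≤ K → ∀ v : V → E, ContDiff ℝ 4 v → ∀ (μ : ℂ) (B F : ℝ),
      (∀ z, ‖z‖ ≤ 2 * K → ∀ j ≤ 3, ‖iteratedFDeriv ℝ j v z‖ ≤ B) →
      (∀ z, ‖z‖ ≤ 2 * K → ‖μ • v z + bilaplacianForm V E (iteratedFDeriv ℝ 4 v z)‖ ≤ F) → ∀ z,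
      ‖μ • localize K v z + bilaplacianForm V E (iteratedFDeriv ℝ 4 (localize K v) z)‖ ≤
        F + C * B / K := by
  obtain ⟨A, hA, hcutoff⟩ := exists_norm_iteratedFDeriv_unitCutoff_comp_smul_le V 4
  refine ⟨‖bilaplacianForm V E‖ * (2 ^ 4 * A), by positivity,
    fun K hK v hv μ B F hB hF z => ?_⟩
  have hK0 : 0 < K := one_pos.trans_le hK
  have hB0 : 0 ≤ B := (norm_nonneg _).trans (hB 0 (by simpa using hK0.le) 0 (Nat.zero_le _))
  have hF0 : 0 ≤ F := (norm_nonneg _).trans (hF 0 (by simpa using hK0.le))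
  rcases lt_or_ge (2 * K) ‖z‖ with hz | hz
  · rw [localize_eq_zero hK0 hz.le, iteratedFDeriv_localize_eq_zero hK0 hz, smul_zero, map_zero,
      add_zero, norm_zero]
    positivity
  set θ := unitCutoff V (K⁻¹ • z)
  have hcommutator : ‖bilaplacianForm V E (iteratedFDeriv ℝ 4 (localize K v) z) -
      θ • bilaplacianForm V E (iteratedFDeriv ℝ 4 v z)‖ ≤
      ‖bilaplacianForm V E‖ * (2 ^ 4 * (A / K * B)) :=
    norm_bilaplacianForm_smul_le (contDiff_unitCutoff_comp_smul K) hv (by positivity) hB0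
      (fun j hj1 hj4 => hcutoff K hK j hj1 hj4 z) fun j hj => hB z hz j (by lia)
  calc ‖μ • localize K v z + bilaplacianForm V E (iteratedFDeriv ℝ 4 (localize K v) z)‖
      = ‖θ • (μ • v z + bilaplacianForm V E (iteratedFDeriv ℝ 4 v z)) +
          (bilaplacianForm V E (iteratedFDeriv ℝ 4 (localize K v) z) -
            θ • bilaplacianForm V E (iteratedFDeriv ℝ 4 v z))‖ := by
        rw [localize, smul_comm μ]
        congr 1
        module
    _ ≤ F + ‖bilaplacianForm V E‖ * (2 ^ 4 * (A / K * B)) := by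
        refine (norm_add_le _ _).trans (add_le_add ?_ hcommutator)
        rw [norm_smul, Real.norm_of_nonneg (unitCutoff V).nonneg]
        exact (mul_le_of_le_one_left (norm_nonneg _) (unitCutoff V).le_one).trans (hF z hz)
    _ = F + ‖bilaplacianForm V E‖ * (2 ^ 4 * A) * B / K := by ring

end Localization

section FrozenCoefficients

variable {V E : Type*} [NormedAddCommGroup V] [NormedSpace ℝ V] [NormedAddCommGroup E]

section Rescaling

variable [NormedSpace ℝ E] {r : V → ℝ} {k : ℝ≥0} {u : V → E} {M : ℝ} {x z : V}

/-- The derivatives of `u` up to order three are bounded by `M` when each differentiation is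
weighted by the length scale `r`. -/
def HasWeightedC3Bound (r : V → ℝ) (u : V → E) (M : ℝ) : Prop :=
  ∀ h ≤ 3, ∀ x, r x ^ h * ‖iteratedFDeriv ℝ h u x‖ ≤ M

lemma HasWeightedC3Bound.norm_le (hM : HasWeightedC3Bound r u M) (x : V) : ‖u x‖ ≤ M := by
  simpa using hM 0 (Nat.zero_le _) x

lemma HasWeightedC3Bound.nonneg (hM : HasWeightedC3Bound r u M) : 0 ≤ M :=
  (norm_nonneg _).trans (hM.norm_le 0)

lemma abs_comp_add_smul_div_sub_one_le (hlip : LipschitzWith k r) (hx : 0 < r x) (z : V) :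
    |r (x + r x • z) / r x - 1| ≤ k * ‖z‖ := by
  rw [div_sub_one hx.ne', abs_div, abs_of_pos hx, div_le_iff₀ hx]
  calc |r (x + r x • z) - r x| ≤ k * ‖(x + r x • z) - x‖ := hlip.norm_sub_le _ _
    _ = k * ‖z‖ * r x := by
        rw [add_sub_cancel_left, norm_smul, Real.norm_of_nonneg hx.le]
        ring

lemma comp_add_smul_le_two_mul (hlip : LipschitzWith k r) (hx : 0 < r x) (hz : k * ‖z‖ ≤ 1) :
    r (x + r x • z) ≤ 2 * r x := by
  have habs := (abs_le.1 ((abs_comp_add_smul_div_sub_one_le hlip hx z).trans hz)).2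
  rw [← div_le_iff₀ hx]
  linarith

lemma le_two_mul_comp_add_smul (hlip : LipschitzWith k r) (hx : 0 < r x) (hz : k * ‖z‖ ≤ 1 / 2) :
    r x ≤ 2 * r (x + r x • z) := by
  have habs := (abs_le.1 ((abs_comp_add_smul_div_sub_one_le hlip hx z).trans hz)).1
  have hratio : 1 / 2 ≤ r (x + r x • z) / r x := by linarith
  rw [le_div_iff₀ hx] at hratio
  linarith

lemma HasWeightedC3Bound.norm_iteratedFDeriv_comp_add_smul_le (hM : HasWeightedC3Bound r u M)
    (hu : ContDiff ℝ 3 u) (hlip : LipschitzWith k r) (hx : 0 < r x) (hz : k * ‖z‖ ≤ 1 / 2) {j : ℕ}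
    (hj : j ≤ 3) : ‖iteratedFDeriv ℝ j (fun z => u (x + r x • z)) z‖ ≤ 8 * M := by
  have hscale := le_two_mul_comp_add_smul hlip hx hz
  have hy : 0 < r (x + r x • z) := by linarith
  rw [iteratedFDeriv_comp_add_smul (hu.of_le (by exact_mod_cast hj)), norm_smul, norm_pow,
    Real.norm_of_nonneg hx.le]
  calc r x ^ j * ‖iteratedFDeriv ℝ j u (x + r x • z)‖
      ≤ (2 * r (x + r x • z)) ^ j * ‖iteratedFDeriv ℝ j u (x + r x • z)‖ := by
        gcongr
    _ = 2 ^ j * (r (x + r x • z) ^ j * ‖iteratedFDeriv ℝ j u (x + r x • z)‖) := by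
        rw [mul_pow, mul_assoc]
    _ ≤ 2 ^ 3 * M :=
        mul_le_mul (pow_le_pow_right₀ one_le_two hj) (hM j hj _) (by positivity) (by positivity)
    _ = 8 * M := by norm_num

end Rescaling

section AlgebraicPerturbation

variable [NormedSpace ℂ E] {μ : ℂ} {v b : E} {t δ M Γ : ℝ}

lemma abs_inv_pow_four_sub_one_le (h : |t - 1| ≤ δ) (hδ : δ ≤ 1 / 2) :
    |(t ^ 4)⁻¹ - 1| ≤ 130 * δ := by
  have hδ0 : 0 ≤ δ := (abs_nonneg _).trans h
  obtain ⟨hlow, hupp⟩ := abs_le.1 (h.trans hδ)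
  have ht : 1 / 2 ≤ t := by linarith
  have ht' : t ≤ 3 / 2 := by linarith
  have : 0 < t := by linarith
  have hfactor : (t ^ 4)⁻¹ - 1 = -((t - 1) * ((1 + t) * (1 + t ^ 2))) / t ^ 4 := by
    field_simp
    ring
  rw [hfactor, abs_div, abs_neg, abs_mul, abs_of_pos (by positivity : 0 < t ^ 4),
    abs_of_pos (by positivity : 0 < (1 + t) * (1 + t ^ 2))]
  calc |t - 1| * ((1 + t) * (1 + t ^ 2)) / t ^ 4
      ≤ δ * ((1 + 3 / 2) * (1 + (3 / 2) ^ 2)) / (1 / 2) ^ 4 := by gcongr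
    _ = 130 * δ := by ring

lemma norm_pow_four_smul_le (hμ : ‖μ‖ = 1) (hv : ‖v‖ ≤ M) (h : ‖μ • v + t ^ 4 • b‖ ≤ Γ) :
    ‖t ^ 4 • b‖ ≤ Γ + M := by
  calc ‖t ^ 4 • b‖ = ‖(μ • v + t ^ 4 • b) - μ • v‖ := by rw [add_sub_cancel_left]
    _ ≤ ‖μ • v + t ^ 4 • b‖ + ‖μ • v‖ := norm_sub_le _ _
    _ ≤ Γ + M := by
        rw [norm_smul, hμ, one_mul]
        exact add_le_add h hv

lemma norm_le_of_norm_smul_add_pow_four_smul_le (hμ : ‖μ‖ = 1) (ht : 1 / 2 ≤ t) (hv : ‖v‖ ≤ M)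
    (h : ‖μ • v + t ^ 4 • b‖ ≤ Γ) : ‖b‖ ≤ 16 * (Γ + M) := by
  have hpow : (1 / 2 : ℝ) ^ 4 * ‖b‖ ≤ t ^ 4 * ‖b‖ := by gcongr
  have hnorm := norm_pow_four_smul_le hμ hv h
  rw [norm_smul, Real.norm_of_nonneg (by positivity)] at hnorm
  linarith

lemma norm_smul_add_le_of_norm_smul_add_pow_four_smul_le (hμ : ‖μ‖ = 1) (ht : |t - 1| ≤ δ)
    (hδ : δ ≤ 1 / 2) (hv : ‖v‖ ≤ M) (h : ‖μ • v + t ^ 4 • b‖ ≤ Γ) :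
    ‖μ • v + b‖ ≤ Γ + 130 * δ * (Γ + M) := by
  have ht0 : 0 < t := by linarith [(abs_le.1 (ht.trans hδ)).1]
  have hinv := abs_inv_pow_four_sub_one_le ht hδ
  have hsplit : μ • v + b = (μ • v + t ^ 4 • b) + ((t ^ 4)⁻¹ - 1) • (t ^ 4 • b) := by
    rw [sub_smul, one_smul, inv_smul_smul₀ (by positivity)]
    abel
  rw [hsplit]
  refine (norm_add_le _ _).trans (add_le_add h ?_)
  rw [norm_smul, Real.norm_eq_abs]
  exact mul_le_mul hinv (norm_pow_four_smul_le hμ hv h) (norm_nonneg _)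
    ((abs_nonneg _).trans hinv)

end AlgebraicPerturbation

end FrozenCoefficients

section WeightedEstimate

variable {V E : Type*} [NormedAddCommGroup V] [InnerProductSpace ℝ V] [FiniteDimensional ℝ V]
  [NormedAddCommGroup E] [NormedSpace ℂ E] {r : V → ℝ} {k : ℝ≥0} {u : V → E} {μ : ℂ}
  {M Γ δ : ℝ} {x z : V}

lemma norm_smul_add_smul_bilaplacianForm_comp_add_smul_le (hu : ContDiff ℝ 4 u) (hx : 0 < r x)
    (hΓ : ∀ x, ‖μ • u x + r x ^ 4 • bilaplacianForm V E (iteratedFDeriv ℝ 4 u x)‖ ≤ Γ) (z : V) :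
    ‖μ • u (x + r x • z) + (r (x + r x • z) / r x) ^ 4 •
      bilaplacianForm V E (iteratedFDeriv ℝ 4 (fun z => u (x + r x • z)) z)‖ ≤ Γ := by
  rw [iteratedFDeriv_comp_add_smul (n := 4) hu, map_smul, smul_smul, ← mul_pow,
    div_mul_cancel₀ _ hx.ne']
  exact hΓ _

lemma norm_bilaplacianForm_comp_add_smul_le (hμ : ‖μ‖ = 1) (hu : ContDiff ℝ 4 u)
    (hM : HasWeightedC3Bound r u M)
    (hΓ : ∀ x, ‖μ • u x + r x ^ 4 • bilaplacianForm V E (iteratedFDeriv ℝ 4 u x)‖ ≤ Γ)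
    (hlip : LipschitzWith k r) (hx : 0 < r x) (hz : k * ‖z‖ ≤ 1 / 2) :
    ‖bilaplacianForm V E (iteratedFDeriv ℝ 4 (fun z => u (x + r x • z)) z)‖ ≤ 16 * (Γ + M) := by
  have ht := (abs_le.1 ((abs_comp_add_smul_div_sub_one_le hlip hx z).trans hz)).1
  exact norm_le_of_norm_smul_add_pow_four_smul_le hμ (by linarith) (hM.norm_le _)
    (norm_smul_add_smul_bilaplacianForm_comp_add_smul_le hu hx hΓ z)

lemma norm_smul_add_bilaplacianForm_comp_add_smul_le (hμ : ‖μ‖ = 1) (hu : ContDiff ℝ 4 u)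
    (hM : HasWeightedC3Bound r u M)
    (hΓ : ∀ x, ‖μ • u x + r x ^ 4 • bilaplacianForm V E (iteratedFDeriv ℝ 4 u x)‖ ≤ Γ)
    (hlip : LipschitzWith k r) (hx : 0 < r x) (hz : k * ‖z‖ ≤ δ) (hδ : δ ≤ 1 / 2) :
    ‖μ • u (x + r x • z) +
      bilaplacianForm V E (iteratedFDeriv ℝ 4 (fun z => u (x + r x • z)) z)‖ ≤
      Γ + 130 * δ * (Γ + M) :=
  norm_smul_add_le_of_norm_smul_add_pow_four_smul_le hμ
    ((abs_comp_add_smul_div_sub_one_le hlip hx z).trans hz) hδ (hM.norm_le _)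
    (norm_smul_add_smul_bilaplacianForm_comp_add_smul_le hu hx hΓ z)

lemma le_two_mul_of_forall_bound_imp_half {ι : Type*} {f : ι → ℝ} {A : ℝ}
    (hbdd : BddAbove (Set.range f))
    (himprove : ∀ M, (∀ i, f i ≤ M) → ∀ i, f i ≤ A + M / 2) (i : ι) : f i ≤ 2 * A := by
  have : Nonempty ι := ⟨i⟩
  have hsup : ⨆ j, f j ≤ A + (⨆ j, f j) / 2 := ciSup_le (himprove _ (le_ciSup hbdd))
  linarith [le_ciSup hbdd i]

lemma improvement_constants_le {C C' δ M Γ : ℝ} (hC : 0 ≤ C) (hC' : 0 ≤ C') (hδ : 0 ≤ δ)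
    (hCδ : δ * (520 * C + 130) ≤ 1) (hM : 0 ≤ M) (hΓ : 0 ≤ Γ) :
    C * (Γ + 130 * δ * (Γ + M) + C' * (8 * M) / (32 * C * C' + 1)) ≤ 2 * C * Γ + M / 2 := by
  have hcutoff : C * (C' * (8 * M) / (32 * C * C' + 1)) ≤ M / 4 := by
    rw [← mul_div_assoc, div_le_iff₀ (by positivity)]
    nlinarith
  have hCδ4 : C * (130 * δ) ≤ 1 / 4 := by nlinarith
  have hδ1 : 130 * δ ≤ 1 := by nlinarith [mul_nonneg hδ hC]
  have hfrozenM : C * (130 * δ) * M ≤ 1 / 4 * M := by gcongr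
  have hfrozenΓ : C * Γ * (130 * δ) ≤ C * Γ * 1 := by gcongr
  linarith

lemma exists_hasWeightedC3Bound_improvement (V E : Type*) [NormedAddCommGroup V]
    [InnerProductSpace ℝ V] [FiniteDimensional ℝ V] [NormedAddCommGroup E] [NormedSpace ℂ E]
    [CompleteSpace E] :
    ∃ C : ℝ, 0 ≤ C ∧ ∃ ε : ℝ≥0, 0 < ε ∧ ∀ r : V → ℝ, (∀ x, 0 < r x) → LipschitzWith ε r →
      ∀ μ : ℂ, ‖μ‖ = 1 → 0 ≤ μ.re → ∀ u : V → E, ContDiff ℝ 4 u → ∀ Γ : ℝ,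
      (∀ x, ‖μ • u x + r x ^ 4 • bilaplacianForm V E (iteratedFDeriv ℝ 4 u x)‖ ≤ Γ) →
      ∀ M : ℝ, HasWeightedC3Bound r u M → HasWeightedC3Bound r u (C * Γ + M / 2) := by
  obtain ⟨C, hC, hresolvent⟩ :=
    exists_norm_iteratedFDeriv_le_of_norm_smul_add_bilaplacianForm_le V E
  obtain ⟨C', hC', hlocalize⟩ := exists_norm_smul_add_bilaplacianForm_localize_le V E
  set K := 32 * C * C' + 1
  have hK : 1 ≤ K := le_add_of_nonneg_left (by positivity)
  have hK0 : 0 < K := one_pos.trans_le hK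
  set δ := min (1 / 2) (1 / (520 * C + 130))
  have hδ0 : 0 < δ := by positivity
  have hδ : δ * (520 * C + 130) ≤ 1 := (le_div_iff₀ (by positivity)).1 (min_le_right _ _)
  refine ⟨2 * C, by positivity, ⟨δ / (2 * K), by positivity⟩,
    NNReal.coe_pos.1 (div_pos hδ0 (by positivity)),
    fun r hr hlip μ hμ hre u hu Γ hΓ M hM h hh x => ?_⟩
  have hδz : ∀ z : V, ‖z‖ ≤ 2 * K → δ / (2 * K) * ‖z‖ ≤ δ := fun z hz => by
    rw [div_mul_eq_mul_div, div_le_iff₀ (by positivity)]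
    gcongr
  have hv : ContDiff ℝ 4 (fun z => u (x + r x • z)) :=
    hu.comp (contDiff_const.add (contDiff_const_smul _))
  have hlocalized := hlocalize K hK _ hv μ (8 * M) (Γ + 130 * δ * (Γ + M))
    (fun z hz j hj => hM.norm_iteratedFDeriv_comp_add_smul_le (hu.of_le (by norm_num)) hlip (hr x)
      ((hδz z hz).trans (min_le_left _ _)) hj)
    (fun z hz => norm_smul_add_bilaplacianForm_comp_add_smul_le hμ hu hM hΓ hlip (hr x)
      (hδz z hz) (min_le_left _ _))
  have hbound := hresolvent μ hμ hre _ (contDiff_localize (n := 4) hv)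
    (hasCompactSupport_localize hK0 _) _ hlocalized h hh 0
  rw [iteratedFDeriv_localize (by simpa using hK0), iteratedFDeriv_comp_add_smul
    (hu.of_le (by exact_mod_cast (by lia : h ≤ 4))), norm_smul, norm_pow,
    Real.norm_of_nonneg (hr x).le, smul_zero, add_zero] at hbound
  exact hbound.trans (improvement_constants_le hC hC' hδ0.le hδ hM.nonneg
    ((norm_nonneg _).trans (hΓ 0)))

lemma exists_hasWeightedC3Bound (V E : Type*) [NormedAddCommGroup V]
    [InnerProductSpace ℝ V] [FiniteDimensional ℝ V] [NormedAddCommGroup E] [NormedSpace ℂ E]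
    [CompleteSpace E] :
    ∃ C : ℝ, 0 ≤ C ∧ ∃ ε : ℝ≥0, 0 < ε ∧ ∀ r : V → ℝ, (∀ x, 0 < r x) → LipschitzWith ε r →
      ∀ μ : ℂ, ‖μ‖ = 1 → 0 ≤ μ.re → ∀ u : V → E, ContDiff ℝ 4 u →
      (∃ M, HasWeightedC3Bound r u M) → ∀ Γ : ℝ,
      (∀ x, ‖μ • u x + r x ^ 4 • bilaplacianForm V E (iteratedFDeriv ℝ 4 u x)‖ ≤ Γ) →
      HasWeightedC3Bound r u (C * Γ) := by
  obtain ⟨C, hC, ε, hε, himprove⟩ := exists_hasWeightedC3Bound_improvement V E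
  refine ⟨2 * C, by positivity, ε, hε, fun r hr hlip μ hμ hre u hu ⟨M₀, hM₀⟩ Γ hΓ h hh x => ?_⟩
  rw [mul_assoc]
  refine le_two_mul_of_forall_bound_imp_half (ι := {h : ℕ // h ≤ 3} × V)
    (f := fun i => r i.2 ^ i.1.1 * ‖iteratedFDeriv ℝ i.1.1 u i.2‖)
    ⟨M₀, Set.forall_mem_range.2 fun i => hM₀ _ i.1.2 _⟩ (fun M hM i => ?_) ⟨⟨h, hh⟩, x⟩
  exact himprove r hr hlip μ hμ hre u hu Γ hΓ M (fun h hh x => hM ⟨⟨h, hh⟩, x⟩) _ i.1.2 _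

lemma exists_eLpNorm_iteratedFDeriv_four_comp_add_smul_le (ι : Type*) [Fintype ι] [Nonempty ι]
    {p : ℝ} (hp : 1 ≤ p) :
    ∃ C : ℝ, 0 ≤ C ∧ ∀ r : EuclideanSpace ℝ ι → ℝ, (∀ x, 0 < r x) → LipschitzWith (1 / 4) r →
      ∀ μ : ℂ, ‖μ‖ = 1 → ∀ u : EuclideanSpace ℝ ι → ℂ, ContDiff ℝ 4 u → ∀ M Γ : ℝ,
      HasWeightedC3Bound r u M →
      (∀ x, ‖μ • u x + r x ^ 4 • bilaplacianForm _ ℂ (iteratedFDeriv ℝ 4 u x)‖ ≤ Γ) → ∀ x,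
      eLpNorm (fun z => ‖iteratedFDeriv ℝ 4 (fun z => u (x + r x • z)) z‖) (ENNReal.ofReal p)
        (volume.restrict (ball 0 1)) ≤ ENNReal.ofReal (C * (Γ + M)) := by
  obtain ⟨C, hC, hCZ⟩ := exists_eLpNorm_norm_iteratedFDeriv_four_le ι hp zero_le_two
  obtain ⟨C', hC', hlocalize⟩ :=
    exists_norm_smul_add_bilaplacianForm_localize_le (EuclideanSpace ℝ ι) ℂ
  refine ⟨C * (16 + 8 * C'), by positivity, fun r hr hlip μ hμ u hu M Γ hM hΓ x => ?_⟩
  have hΓ0 : 0 ≤ Γ := (norm_nonneg _).trans (hΓ 0)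
  have hv : ContDiff ℝ 4 (fun z => u (x + r x • z)) :=
    hu.comp (contDiff_const.add (contDiff_const_smul _))
  have hsmall : ∀ z : EuclideanSpace ℝ ι, ‖z‖ ≤ 2 * 1 → ((1 / 4 : ℝ≥0) : ℝ) * ‖z‖ ≤ 1 / 2 :=
    fun z hz => by
      push_cast
      linarith
  have hlocalized := hlocalize 1 le_rfl _ hv 0 (8 * M) (16 * (Γ + M))
    (fun z hz j hj => hM.norm_iteratedFDeriv_comp_add_smul_le (hu.of_le (by norm_num)) hlip (hr x)
      (hsmall z hz) hj)
    (fun z hz => by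
      rw [zero_smul, zero_add]
      exact norm_bilaplacianForm_comp_add_smul_le hμ hu hM hΓ hlip (hr x) (hsmall z hz))
  simp only [zero_smul, zero_add] at hlocalized
  have hbound := hCZ _ (contDiff_localize (n := 4) hv) (hasCompactSupport_localize one_pos _)
    (fun z hz => by rw [iteratedFDeriv_localize_eq_zero one_pos (by simpa using hz), map_zero])
    _ hlocalized
  calc eLpNorm (fun z => ‖iteratedFDeriv ℝ 4 (fun z => u (x + r x • z)) z‖) (ENNReal.ofReal p)
        (volume.restrict (ball 0 1))
      = eLpNorm (fun z => ‖iteratedFDeriv ℝ 4 (localize 1 fun z => u (x + r x • z)) z‖)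
          (ENNReal.ofReal p) (volume.restrict (ball 0 1)) := by
        refine eLpNorm_congr_ae ?_
        filter_upwards [ae_restrict_mem measurableSet_ball] with z hz
        rw [iteratedFDeriv_localize (by simpa using hz)]
    _ ≤ _ := eLpNorm_mono_measure _ (Measure.restrict_mono
        (ball_subset_closedBall.trans (closedBall_subset_closedBall one_le_two)) le_rfl)
    _ ≤ ENNReal.ofReal (C * (16 + 8 * C') * (Γ + M)) := by
        refine hbound.trans (ENNReal.ofReal_le_ofReal ?_)
        rw [mul_assoc]
        gcongr
        nlinarith [mul_nonneg hC' hΓ0]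

lemma exists_eLpNorm_weighted_iteratedFDeriv_four_ball_le (ι : Type*) [Fintype ι] [Nonempty ι]
    {p : ℝ} (hp : 1 ≤ p) :
    ∃ C : ℝ, 0 ≤ C ∧ ∀ r : EuclideanSpace ℝ ι → ℝ, (∀ x, 0 < r x) → LipschitzWith (1 / 4) r →
      ∀ μ : ℂ, ‖μ‖ = 1 → ∀ u : EuclideanSpace ℝ ι → ℂ, ContDiff ℝ 4 u → ∀ M Γ : ℝ,
      HasWeightedC3Bound r u M →
      (∀ x, ‖μ • u x + r x ^ 4 • bilaplacianForm _ ℂ (iteratedFDeriv ℝ 4 u x)‖ ≤ Γ) → ∀ x,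
      eLpNorm (fun y => r y ^ 4 * ‖iteratedFDeriv ℝ 4 u y‖) (ENNReal.ofReal p)
        (volume.restrict (ball x (r x))) ≤
        ENNReal.ofReal (r x ^ (Fintype.card ι / p)) * ENNReal.ofReal (C * (Γ + M)) := by
  obtain ⟨C, hC, hbound⟩ := exists_eLpNorm_iteratedFDeriv_four_comp_add_smul_le ι hp
  refine ⟨16 * C, by positivity, fun r hr hlip μ hμ u hu M Γ hM hΓ x => ?_⟩
  rw [eLpNorm_restrict_ball_eq _ _ _ (hr x) (by positivity), finrank_euclideanSpace]
  gcongr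
  rw [mul_assoc, ENNReal.ofReal_mul (by norm_num)]
  refine le_trans ?_ (mul_le_mul_right (hbound r hr hlip μ hμ u hu M Γ hM hΓ x) _)
  refine eLpNorm_le_mul_eLpNorm_of_ae_le_mul ?_ _
  filter_upwards [ae_restrict_mem measurableSet_ball] with z hz
  have hx := hr x
  have hy := hr (x + r x • z)
  have hz1 : ‖z‖ ≤ 1 := by simpa using (mem_ball_zero_iff.1 hz).le
  have hcompare : r (x + r x • z) ≤ 2 * r x :=
    comp_add_smul_le_two_mul hlip hx (by push_cast; linarith)
  rw [iteratedFDeriv_comp_add_smul (n := 4) hu, norm_smul, Real.norm_of_nonneg (by positivity),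
    Real.norm_of_nonneg (by positivity), Real.norm_of_nonneg (by positivity)]
  calc r (x + r x • z) ^ 4 * ‖iteratedFDeriv ℝ 4 u (x + r x • z)‖
      ≤ (2 * r x) ^ 4 * ‖iteratedFDeriv ℝ 4 u (x + r x • z)‖ := by gcongr
    _ = 16 * (r x ^ 4 * ‖iteratedFDeriv ℝ 4 u (x + r x • z)‖) := by ring

end WeightedEstimate

lemma exists_hasWeightedC3Bound_and_eLpNorm_le (ι : Type*) [Fintype ι] [Nonempty ι] {p : ℝ}
    (hp : 1 ≤ p) :
    ∃ C : ℝ, 0 ≤ C ∧ ∃ ε : ℝ≥0, 0 < ε ∧ ∀ r : EuclideanSpace ℝ ι → ℝ, (∀ x, 0 < r x) →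
      LipschitzWith ε r → ∀ μ : ℂ, ‖μ‖ = 1 → 0 ≤ μ.re → ∀ u : EuclideanSpace ℝ ι → ℂ,
      ContDiff ℝ 4 u → (∃ M, HasWeightedC3Bound r u M) → ∀ Γ : ℝ,
      (∀ x, ‖μ • u x + r x ^ 4 • bilaplacianForm _ ℂ (iteratedFDeriv ℝ 4 u x)‖ ≤ Γ) →
      HasWeightedC3Bound r u (C * Γ) ∧ ∀ x,
      eLpNorm (fun y => r y ^ 4 * ‖iteratedFDeriv ℝ 4 u y‖) (ENNReal.ofReal p)
        (volume.restrict (ball x (r x))) ≤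
        ENNReal.ofReal (r x ^ (Fintype.card ι / p)) * ENNReal.ofReal (C * Γ) := by
  obtain ⟨C, hC, ε, hε, hC3⟩ := exists_hasWeightedC3Bound (EuclideanSpace ℝ ι) ℂ
  obtain ⟨C', hC', hLp⟩ := exists_eLpNorm_weighted_iteratedFDeriv_four_ball_le ι hp
  refine ⟨C + C' * (1 + C), by positivity, min ε (1 / 4), lt_min hε (by positivity),
    fun r hr hlip μ hμ hre u hu hM Γ hΓ => ?_⟩
  have hΓ0 : 0 ≤ Γ := (norm_nonneg _).trans (hΓ 0)
  have hbound := hC3 r hr (hlip.weaken (min_le_left _ _)) μ hμ hre u hu hM Γ hΓ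
  refine ⟨fun h hh x => (hbound h hh x).trans ?_, fun x => ?_⟩
  · gcongr
    exact le_add_of_nonneg_right (by positivity)
  · refine (hLp r hr (hlip.weaken (min_le_right _ _)) μ hμ u hu _ Γ hbound hΓ x).trans ?_
    gcongr ENNReal.ofReal _ * ENNReal.ofReal ?_
    calc C' * (Γ + C * Γ) = C' * (1 + C) * Γ := by ring
      _ ≤ (C + C' * (1 + C)) * Γ := by
        gcongr
        exact le_add_of_nonneg_left hC

section ResolventEstimate

lemma laplacianE_eq_laplacian {N : ℕ} (u : EuclideanSpace ℝ (Fin N) → ℂ) : laplacianE u = Δ u := by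
  rw [InnerProductSpace.laplacian_eq_iteratedFDeriv_orthonormalBasis u
    (EuclideanSpace.basisFun (Fin N) ℝ)]
  ext x
  simp [laplacianE]

/-- The length scale `a ^ (1/2) / L ^ (1/4)` at which the coefficient `a ^ 2` is frozen when the
spectral parameter has modulus `L`; it is the radius `R` of the balls in the local `L^p` norms. -/
noncomputable def resolventRadius {V : Type*} (a : V → ℝ) (L : ℝ) (x : V) : ℝ :=
  a x ^ ((1 : ℝ) / 2) / L ^ ((1 : ℝ) / 4)

variable {V : Type*} {a : V → ℝ} {L : ℝ} {x : V}

lemma resolventRadius_pos (ha : 0 < a x) (hL : 0 < L) : 0 < resolventRadius a L x := by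
  unfold resolventRadius
  positivity

lemma resolventRadius_rpow (ha : 0 < a x) (hL : 0 < L) (θ : ℝ) :
    resolventRadius a L x ^ θ = a x ^ (θ / 2) / L ^ (θ / 4) := by
  rw [resolventRadius, Real.div_rpow (by positivity) (by positivity), ← Real.rpow_mul ha.le,
    ← Real.rpow_mul hL.le, one_div_mul_eq_div, one_div_mul_eq_div]

lemma resolventRadius_pow_four (ha : 0 < a x) (hL : 0 < L) :
    resolventRadius a L x ^ 4 = a x ^ 2 / L := by
  rw [← Real.rpow_natCast, resolventRadius_rpow ha hL]
  norm_num

lemma lipschitzWith_resolventRadius {V : Type*} [NormedAddCommGroup V] [InnerProductSpace ℝ V]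
    [CompleteSpace V] {a : V → ℝ} {c ε : ℝ≥0} (ha : Differentiable ℝ a) (ha_pos : ∀ x, 0 < a x)
    (hgrad : ∀ x, ‖gradient a x‖ ≤ c * a x ^ ((1 : ℝ) / 2)) (hε : 0 < ε) {L : ℝ}
    (hL : (c / ε : ℝ) ^ 4 < L) : LipschitzWith ε (resolventRadius a L) := by
  have hL0 : 0 < L := lt_of_le_of_lt (by positivity) hL
  have hsqrt : LipschitzWith c (fun x => √(a x)) :=
    lipschitzWith_sqrt_of_norm_gradient_le ha ha_pos fun x => by
      simpa only [Real.sqrt_eq_rpow] using hgrad x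
  have hroot : c / ε ≤ L ^ ((1 : ℝ) / 4) := by
    refine (lt_of_pow_lt_pow_left₀ 4 (by positivity) ?_).le
    rwa [← Real.rpow_natCast (L ^ _), ← Real.rpow_mul hL0.le, Nat.cast_ofNat,
      one_div_mul_cancel four_ne_zero, Real.rpow_one]
  refine LipschitzWith.of_dist_le_mul fun x y => ?_
  simp only [resolventRadius, ← Real.sqrt_eq_rpow (a _), Real.dist_eq, ← sub_div, abs_div,
    abs_of_pos (Real.rpow_pos_of_pos hL0 _)]
  rw [div_le_iff₀ (by positivity)]
  calc |√(a x) - √(a y)| ≤ c * dist x y := hsqrt.dist_le_mul x y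
    _ ≤ ε * L ^ ((1 : ℝ) / 4) * dist x y := by
        gcongr
        rwa [div_le_iff₀' (by exact_mod_cast hε)] at hroot
    _ = ε * dist x y * L ^ ((1 : ℝ) / 4) := by ring

lemma rpow_mul_eq_mul_resolventRadius_pow (ha : 0 < a x) (hL : 0 < L) (h : ℕ) :
    L ^ (1 - (h : ℝ) / 4) * a x ^ ((h : ℝ) / 2) = L * resolventRadius a L x ^ h := by
  rw [← Real.rpow_natCast, resolventRadius_rpow ha hL, Real.rpow_sub hL, Real.rpow_one]
  ring

lemma exists_hasWeightedC3Bound_resolventRadius [NormedAddCommGroup V] [NormedSpace ℝ V]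
    {E : Type*} [NormedAddCommGroup E] [NormedSpace ℝ E] {u : V → E} (ha : ∀ x, 0 < a x)
    (hL : 0 < L)
    (hu : ∀ h : ℕ, h ≤ 3 → ∃ M : ℝ, ∀ x, a x ^ ((h : ℝ) / 2) * ‖iteratedFDeriv ℝ h u x‖ ≤ M) :
    ∃ M, HasWeightedC3Bound (resolventRadius a L) u M := by
  choose! M hM using hu
  have hM0 : ∀ h ∈ Finset.range 4, 0 ≤ M h / L ^ ((h : ℝ) / 4) := fun h hh => by
    have : 0 ≤ M h := le_trans (by have := ha 0; positivity)
      (hM h (Nat.lt_succ_iff.1 (Finset.mem_range.1 hh)) 0)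
    positivity
  refine ⟨∑ h ∈ Finset.range 4, M h / L ^ ((h : ℝ) / 4), fun h hh x => ?_⟩
  refine le_trans ?_ (Finset.single_le_sum hM0 (Finset.mem_range.2 (Nat.lt_succ_iff.2 hh)))
  rw [← Real.rpow_natCast, resolventRadius_rpow (ha x) hL, div_mul_eq_mul_div]
  gcongr
  exact hM h hh x

lemma HasWeightedC3Bound.ofReal_mul_iSup_le [NormedAddCommGroup V] [NormedSpace ℝ V]
    {E : Type*} [NormedAddCommGroup E] [NormedSpace ℝ E] {u : V → E} {M : ℝ}
    (hM : HasWeightedC3Bound (resolventRadius a L) u M) (ha : ∀ x, 0 < a x) (hL : 0 < L) {h : ℕ}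
    (hh : h ≤ 3) :
    ENNReal.ofReal (L ^ (1 - (h : ℝ) / 4)) *
      ⨆ x, ENNReal.ofReal (a x ^ ((h : ℝ) / 2) * ‖iteratedFDeriv ℝ h u x‖) ≤
      ENNReal.ofReal (L * M) := by
  rw [ENNReal.mul_iSup]
  refine iSup_le fun x => ?_
  rw [← ENNReal.ofReal_mul (by positivity), ← mul_assoc,
    rpow_mul_eq_mul_resolventRadius_pow (ha x) hL, mul_assoc]
  gcongr
  exact hM h hh x

lemma ofReal_mul_eLpNorm_ball_resolventRadius_le [NormedAddCommGroup V] [MeasurableSpace V]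
    {μ : Measure V} {g : V → ℝ} {d p K : ℝ} (ha : ∀ x, 0 < a x) (hL : 0 < L)
    (hg : eLpNorm (fun y => resolventRadius a L y ^ 4 * g y) (ENNReal.ofReal p)
      (μ.restrict (ball x (resolventRadius a L x))) ≤
      ENNReal.ofReal (resolventRadius a L x ^ (d / p)) * ENNReal.ofReal K) :
    ENNReal.ofReal (L ^ (d / (4 * p)) / a x ^ (d / (2 * p))) *
      eLpNorm (fun y => a y ^ 2 * g y) (ENNReal.ofReal p)
        (μ.restrict (ball x (resolventRadius a L x))) ≤ ENNReal.ofReal (L * K) := by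
  set ν := μ.restrict (ball x (resolventRadius a L x))
  have hx := resolventRadius_pos (ha x) hL
  have hweight : L ^ (d / (4 * p)) / a x ^ (d / (2 * p)) =
      (resolventRadius a L x ^ (d / p))⁻¹ := by
    rw [resolventRadius_rpow (ha x) hL, inv_div, div_div, div_div, mul_comm p, mul_comm p]
  have hcoeff : (fun y => a y ^ 2 * g y) = L • fun y => resolventRadius a L y ^ 4 * g y := by
    ext y
    rw [Pi.smul_apply, smul_eq_mul, resolventRadius_pow_four (ha y) hL]
    field_simp
  rw [hweight, hcoeff, eLpNorm_const_smul, Real.enorm_of_nonneg hL.le]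
  calc ENNReal.ofReal (resolventRadius a L x ^ (d / p))⁻¹ * (ENNReal.ofReal L *
        eLpNorm (fun y => resolventRadius a L y ^ 4 * g y) (ENNReal.ofReal p) ν)
      ≤ ENNReal.ofReal (resolventRadius a L x ^ (d / p))⁻¹ * (ENNReal.ofReal L *
        (ENNReal.ofReal (resolventRadius a L x ^ (d / p)) * ENNReal.ofReal K)) := by gcongr
    _ = ENNReal.ofReal (L * K) := by
        rw [← ENNReal.ofReal_mul (by positivity), ← ENNReal.ofReal_mul hL.le,
          ← ENNReal.ofReal_mul (by positivity)]
        congr 1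
        field_simp

lemma norm_div_smul_add_bilaplacianForm_le {N : ℕ} {a : EuclideanSpace ℝ (Fin N) → ℝ}
    {u : EuclideanSpace ℝ (Fin N) → ℂ} (ha : ∀ x, 0 < a x) (hu : ContDiff ℝ 4 u) {lam : ℂ}
    (hlam : 0 < ‖lam‖) {x : EuclideanSpace ℝ (Fin N)} {G : ℝ}
    (hG : ‖lam * u x + (a x : ℂ) ^ 2 * laplacianE (laplacianE u) x‖ ≤ G) :
    ‖(lam / ‖lam‖) • u x + resolventRadius a ‖lam‖ x ^ 4 •
      bilaplacianForm _ ℂ (iteratedFDeriv ℝ 4 u x)‖ ≤ G / ‖lam‖ := by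
  have hlam' : (‖lam‖ : ℂ) ≠ 0 := by exact_mod_cast hlam.ne'
  have hnormalise : (lam / ‖lam‖) • u x + resolventRadius a ‖lam‖ x ^ 4 •
      bilaplacianForm _ ℂ (iteratedFDeriv ℝ 4 u x) =
      (lam * u x + (a x : ℂ) ^ 2 * laplacianE (laplacianE u) x) / ‖lam‖ := by
    rw [resolventRadius_pow_four (ha x) hlam, laplacianE_eq_laplacian, laplacianE_eq_laplacian,
      laplacian_laplacian_eq_bilaplacianForm hu, Complex.real_smul, smul_eq_mul]
    push_cast
    field_simp
  rw [hnormalise, norm_div, Complex.norm_real, norm_norm]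
  gcongr

/-- The left-hand side of the resolvent estimate: the weighted supremum norms of the derivatives up
to order three plus the weighted local `L^p` norms of the fourth derivative. -/
noncomputable def resolventNorm {N : ℕ} (p : ℝ) (a : EuclideanSpace ℝ (Fin N) → ℝ) (L : ℝ)
    (u : EuclideanSpace ℝ (Fin N) → ℂ) : ℝ≥0∞ :=
  (∑ h ∈ Finset.range 4, ENNReal.ofReal (L ^ (1 - (h : ℝ) / 4)) *
      ⨆ x, ENNReal.ofReal ((a x) ^ ((h : ℝ) / 2) * ‖iteratedFDeriv ℝ h u x‖)) +
    (⨆ x, ENNReal.ofReal (L ^ ((N : ℝ) / (4 * p)) / (a x) ^ ((N : ℝ) / (2 * p))) *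
      eLpNorm (fun y => (a y) ^ 2 * ‖iteratedFDeriv ℝ 4 u y‖) (ENNReal.ofReal p)
        (volume.restrict (ball x (resolventRadius a L x))))

lemma resolventNorm_le {N : ℕ} {p : ℝ} {a : EuclideanSpace ℝ (Fin N) → ℝ} {L : ℝ}
    {u : EuclideanSpace ℝ (Fin N) → ℂ} {M : ℝ} (ha : ∀ x, 0 < a x) (hL : 0 < L)
    (hM : HasWeightedC3Bound (resolventRadius a L) u M)
    (hLp : ∀ x, eLpNorm (fun y => resolventRadius a L y ^ 4 * ‖iteratedFDeriv ℝ 4 u y‖)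
      (ENNReal.ofReal p) (volume.restrict (ball x (resolventRadius a L x))) ≤
      ENNReal.ofReal (resolventRadius a L x ^ (N / p)) * ENNReal.ofReal M) :
    resolventNorm p a L u ≤ ENNReal.ofReal (5 * (L * M)) := by
  calc resolventNorm p a L u
      ≤ (∑ _h ∈ Finset.range 4, ENNReal.ofReal (L * M)) + ENNReal.ofReal (L * M) :=
        add_le_add (Finset.sum_le_sum fun h hh => hM.ofReal_mul_iSup_le ha hL
          (Nat.lt_succ_iff.1 (Finset.mem_range.1 hh)))
          (iSup_le fun x => ofReal_mul_eLpNorm_ball_resolventRadius_le ha hL (hLp x))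
    _ = ENNReal.ofReal (5 * (L * M)) := by
        rw [Finset.sum_const, Finset.card_range, ← succ_nsmul, nsmul_eq_mul,
          ENNReal.ofReal_mul (p := 5) (by norm_num), ENNReal.ofReal_ofNat]
        norm_cast

lemma exists_resolventNorm_le (N : ℕ) (hN : 1 ≤ N) {p : ℝ} (hp : 1 ≤ p) (c : ℝ≥0) :
    ∃ rp > (0 : ℝ), ∃ C > (0 : ℝ), ∀ a : EuclideanSpace ℝ (Fin N) → ℝ, Differentiable ℝ a →
      (∀ x, 0 < a x) → (∀ x, ‖gradient a x‖ ≤ c * (a x) ^ ((1 : ℝ) / 2)) →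
      ∀ lam : ℂ, 0 ≤ lam.re → rp < ‖lam‖ →
      ∀ u : EuclideanSpace ℝ (Fin N) → ℂ, ContDiff ℝ 4 u →
      (∀ h : ℕ, h ≤ 3 → ∃ M : ℝ, ∀ x, (a x) ^ ((h : ℝ) / 2) * ‖iteratedFDeriv ℝ h u x‖ ≤ M) →
      ∀ G : ℝ, (∀ x, ‖lam * u x + (a x : ℂ) ^ 2 * laplacianE (laplacianE u) x‖ ≤ G) →
      resolventNorm p a ‖lam‖ u ≤ ENNReal.ofReal (C * G) := by
  have : NeZero N := ⟨by lia⟩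
  obtain ⟨C, hC, ε, hε, hestimate⟩ := exists_hasWeightedC3Bound_and_eLpNorm_le (Fin N) hp
  refine ⟨(c / ε : ℝ) ^ 4 + 1, by positivity, 5 * C + 1, by positivity,
    fun a ha ha_pos hgrad lam hre hlam u hu hbdd G hG => ?_⟩
  have hlam0 : 0 < ‖lam‖ := lt_trans (by positivity) hlam
  have hG0 : 0 ≤ G := (norm_nonneg _).trans (hG 0)
  have hμ : ‖lam / ‖lam‖‖ = 1 := by
    rw [norm_div, Complex.norm_real, norm_norm, div_self hlam0.ne']
  have hμre : 0 ≤ (lam / ‖lam‖).re := by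
    rw [Complex.div_ofReal_re]
    positivity
  obtain ⟨hC3, hLp⟩ := hestimate (resolventRadius a ‖lam‖)
    (fun x => resolventRadius_pos (ha_pos x) hlam0)
    (lipschitzWith_resolventRadius ha ha_pos hgrad hε (by linarith)) _ hμ hμre u hu
    (exists_hasWeightedC3Bound_resolventRadius ha_pos hlam0 hbdd) (G / ‖lam‖)
    fun x => norm_div_smul_add_bilaplacianForm_le ha_pos hu hlam0 (hG x)
  rw [Fintype.card_fin] at hLp
  refine (resolventNorm_le ha_pos hlam0 hC3 hLp).trans (ENNReal.ofReal_le_ofReal ?_)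
  calc 5 * (‖lam‖ * (C * (G / ‖lam‖))) = 5 * C * G := by field_simp
    _ ≤ (5 * C + 1) * G := by linarith

end ResolventEstimate

theorem statement15_general (N : ℕ) (hN : 1 ≤ N) (p : ℝ) (hp : 1 ≤ p) (c : ℝ≥0) :
    ∃ rp > (0 : ℝ), ∃ C > (0 : ℝ), ∀ a : EuclideanSpace ℝ (Fin N) → ℝ, Differentiable ℝ a →
      (∀ x, 0 < a x) → (∀ x, ‖gradient a x‖ ≤ c * (a x) ^ ((1 : ℝ) / 2)) →
      ∀ lam : ℂ, 0 ≤ lam.re → rp < ‖lam‖ →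
      ∀ u : EuclideanSpace ℝ (Fin N) → ℂ, ContDiff ℝ 4 u →
      (∀ h : ℕ, h ≤ 3 → ∃ M : ℝ, ∀ x, (a x) ^ ((h : ℝ) / 2) * ‖iteratedFDeriv ℝ h u x‖ ≤ M) →
      resolventNorm p a ‖lam‖ u ≤ ENNReal.ofReal C *
        ⨆ x, ENNReal.ofReal ‖lam * u x + (a x : ℂ) ^ 2 * laplacianE (laplacianE u) x‖ := by
  obtain ⟨rp, hrp, C, hC, hestimate⟩ := exists_resolventNorm_le N hN hp c
  refine ⟨rp, hrp, C, hC, fun a ha ha_pos hgrad lam hre hlam u hu hbdd => ?_⟩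
  set f := fun x => ENNReal.ofReal ‖lam * u x + (a x : ℂ) ^ 2 * laplacianE (laplacianE u) x‖
  rcases eq_or_ne (⨆ x, f x) ⊤ with htop | htop
  · rw [htop, ENNReal.mul_top (by simpa using hC)]
    exact le_top
  · rw [← ENNReal.ofReal_toReal htop, ← ENNReal.ofReal_mul hC.le]
    refine hestimate a ha ha_pos hgrad lam hre hlam u hu hbdd _ fun x => ?_
    exact (ENNReal.ofReal_le_iff_le_toReal htop).1 (le_iSup f x)

theorem statement15 (N : ℕ) (hN : 1 ≤ N) (p : ℝ) (hp : (N : ℝ) < p)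
    (a : EuclideanSpace ℝ (Fin N) → ℝ) (ν c : ℝ) (hν : 0 < ν) (hc : 0 < c)
    (ha1 : ContDiff ℝ 1 a) (ha2 : ∀ x, ν ≤ a x)
    (ha3 : ∀ x, ‖gradient a x‖ ≤ c * (a x) ^ ((1 : ℝ) / 2)) :
    ∃ rp > (0 : ℝ), ∃ C > (0 : ℝ), ∀ lam : ℂ, 0 ≤ lam.re → rp < ‖lam‖ →
      ∀ u : EuclideanSpace ℝ (Fin N) → ℂ, ContDiff ℝ 4 u →
      (∀ h : ℕ, h ≤ 3 →
        ∃ M : ℝ, ∀ x, (a x) ^ ((h : ℝ) / 2) * ‖iteratedFDeriv ℝ h u x‖ ≤ M) →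
      (∃ M : ℝ, ∀ x, (a x) ^ 2 * ‖laplacianE (laplacianE u) x‖ ≤ M) →
      (∑ h ∈ Finset.range 4,
            ENNReal.ofReal (‖lam‖ ^ (1 - (h : ℝ) / 4)) *
              ⨆ x, ENNReal.ofReal ((a x) ^ ((h : ℝ) / 2) * ‖iteratedFDeriv ℝ h u x‖)) +
          (⨆ x, ENNReal.ofReal (‖lam‖ ^ ((N : ℝ) / (4 * p)) / (a x) ^ ((N : ℝ) / (2 * p))) *
            eLpNorm (fun y => (a y) ^ 2 * ‖iteratedFDeriv ℝ 4 u y‖) (ENNReal.ofReal p)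
              (volume.restrict (ball x ((a x) ^ ((1 : ℝ) / 2) / ‖lam‖ ^ ((1 : ℝ) / 4))))) ≤
        ENNReal.ofReal C *
          ⨆ x, ENNReal.ofReal
            ‖lam * u x + ((a x : ℂ)) ^ 2 * laplacianE (laplacianE u) x‖ := by
  have hp1 : 1 ≤ p := (Nat.one_le_cast.2 hN).trans hp.le
  obtain ⟨rp, hrp, C, hC, hestimate⟩ := statement15_general N hN p hp1 ⟨c, hc.le⟩
  exact ⟨rp, hrp, C, hC, fun lam hre hlam u hu hbdd _ =>
    hestimate a (ha1.differentiable one_ne_zero) (fun x => hν.trans_le (ha2 x)) ha3 lam hre hlam u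
      hu hbdd⟩
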